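/- Let k be a number field of degree d over ℚ with ring of integers 𝒪, and for a nonzero prime ideal v of 𝒪 let 𝒪_v denote the ring of integers of the v-adic completion k_v. Then for every positive integer s and every rational prime p, every closed subgroup of the product ∏_{v ∣ p} SL_s(𝒪_v), taken over the finitely many prime ideals v of 𝒪 lying over p and equipped with the product topology, is topologically generated by at most 3d³s² elements. -/

import Mathlib

/-!
Write `R = ∏_{v ∣ p} 𝒪ᵥ`. This ring is `p`-torsion free, elements that are invertible modulo `p` are
invertible, and `|R / pR| = p ^ δ` with `1 ≤ δ ≤ d`, because `R / pR` is a quotient of `𝒪 / p𝒪`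
(`exists_PRing`). The product of the groups `SL_s(𝒪ᵥ)` embeds in `GL_s(R)`, so by compactness
(`exists_topgen`) it suffices to bound, uniformly in `n`, the number of generators of the image in
`GL_s(R / p ^ n)` of an arbitrary subgroup `H` of `GL_s(R)`; the bound is `3δ³s²`
(`PRing.SG_main`). The argument does not use the classification of finite simple groups.

*The pro-`p` part.* For a group of units of a filtered ring that are congruent to `1` to a depth
at which taking `p`-th powers shifts the filtration by exactly one period, the Frattini quotient is
no larger than one period of the filtration. The congruence subgroups give `δs²` generators; for `δ = 1`
and `p ≥ s + 2` the Iwahori filtration lets a whole pro-`p` Sylow subgroup be generated by `s²`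
elements.

*The part prime to `p`.* By the Schur–Zassenhaus theorem a finite subgroup of `GL_n(𝔽_p)` of order
prime to `p` lifts to all `GL_n(ℤ / p ^ j)`, hence embeds in `GL_n(ℂ)`. Finite subgroups of
`GL_n(ℂ)` are generated by at most about `3n² / 2` elements, by induction on `n`. If there is an
abelian normal subgroup of non-scalar matrices, its weight spaces are permuted and the blocks are
handled inductively. Otherwise any non-scalar element of the (unitarised) group has two eigenvalues
at distance at least `1`, so a packing argument in the space of Hermitian matrices modulo scalars
bounds the order of the group modulo scalars by `C ^ (n² - 1)` with an explicit `C`. Sylow subgroups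
for small primes are generated by few elements, as an `ℓ`-subgroup is a diagonalisable group extended
by a permutation `ℓ`-group, and after these each further generator of prime power order multiplies
the order by a factor bounded below, so few are needed.

*Combination.* A finite group is generated by a Sylow `p`-subgroup `P`, a complement of `P` in its
normaliser, and further elements whose number is controlled by the index, via the same growth
argument and the order of `GL`. The number of elements needed is counted separately for `δ ≥ 2`,
for `δ = 1` with `p ≥ s + 2`, for `δ = 1` with `5 ≤ p ≤ s + 1`, and for `p ≤ 3`.
-/

/-! ### Numbers of generators and growth of subgroup chains -/

namespace GenBound

/-- The subgroup `K` can be generated by at most `m` elements. -/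
def SG {G : Type*} [Group G] (K : Subgroup G) (m : ℕ) : Prop :=
  ∃ S : Finset G, S.card ≤ m ∧ Subgroup.closure (S : Set G) = K

section basic
variable {G : Type*} [Group G] {G' : Type*} [Group G']

theorem SG.mono {K : Subgroup G} {m n : ℕ} (h : SG K m) (hmn : m ≤ n) : SG K n := by
  obtain ⟨S, h1, h2⟩ := h
  exact ⟨S, h1.trans hmn, h2⟩

theorem SG.bot (m : ℕ) : SG (⊥ : Subgroup G) m := ⟨∅, by simp, by simp⟩

theorem SG.zpowers (g : G) : SG (Subgroup.zpowers g) 1 :=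
  ⟨{g}, by simp, by simp [Subgroup.zpowers_eq_closure]⟩

theorem SG.sup {K L : Subgroup G} {m n : ℕ} (h : SG K m) (h' : SG L n) :
    SG (K ⊔ L) (m + n) := by
  classical
  obtain ⟨S, h1, rfl⟩ := h
  obtain ⟨S', h1', rfl⟩ := h'
  refine ⟨S ∪ S', (Finset.card_union_le _ _).trans (by omega), ?_⟩
  rw [Finset.coe_union, Subgroup.closure_union]

theorem SG.map {K : Subgroup G} {m : ℕ} (h : SG K m) (f : G →* G') : SG (K.map f) m := by
  classical
  obtain ⟨S, h1, rfl⟩ := h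
  refine ⟨S.image f, Finset.card_image_le.trans h1, ?_⟩
  rw [Finset.coe_image, MonoidHom.map_closure]

/-- Generators of the image of `K` lift to elements of `K`. -/
theorem SG.lift {K : Subgroup G} {m : ℕ} {f : G →* G'} (h : SG (K.map f) m) :
    ∃ L ≤ K, SG L m ∧ L.map f = K.map f := by
  classical
  obtain ⟨S, h1, h2⟩ := h
  have hS : ∀ x ∈ S, ∃ y ∈ K, f y = x := by
    intro x hx
    have : x ∈ K.map f := h2 ▸ Subgroup.subset_closure hx
    simpa using this
  choose! r hr hr' using hS
  refine ⟨Subgroup.closure ((S.image r : Finset G) : Set G), ?_, ⟨S.image r,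
    Finset.card_image_le.trans h1, rfl⟩, ?_⟩
  · rw [Subgroup.closure_le]
    intro x hx
    simp only [Finset.coe_image, Set.mem_image] at hx
    obtain ⟨y, hy, rfl⟩ := hx
    exact hr y hy
  · rw [MonoidHom.map_closure, ← h2]
    congr 1
    ext x
    simp only [Finset.coe_image, Set.mem_image]
    constructor
    · rintro ⟨_, ⟨y, hy, rfl⟩, rfl⟩
      rw [hr' y hy]; exact hy
    · intro hx
      exact ⟨r x, ⟨x, hx, rfl⟩, hr' x hx⟩

theorem SG.of_map_injective {K : Subgroup G} {m : ℕ} {f : G →* G'}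
    (hf : Function.Injective f) (h : SG (K.map f) m) : SG K m := by
  obtain ⟨L, _, hL, hLK⟩ := h.lift
  rwa [← Subgroup.map_injective hf hLK]

theorem SG.ext {K : Subgroup G} {a b : ℕ} (f : G →* G') (h : SG (K.map f) a)
    (h' : SG (K ⊓ f.ker) b) : SG K (a + b) := by
  obtain ⟨L, hLK, hL, hmap⟩ := h.lift
  have : K = L ⊔ (K ⊓ f.ker) := by
    apply le_antisymm
    · intro x hx
      have : f x ∈ L.map f := hmap ▸ Subgroup.mem_map_of_mem f hx
      obtain ⟨y, hy, hyx⟩ := this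
      have h1 : y⁻¹ * x ∈ K ⊓ f.ker :=
        ⟨K.mul_mem (K.inv_mem (hLK hy)) hx, by simp [hyx]⟩
      have : x = y * (y⁻¹ * x) := by group
      rw [this]
      exact Subgroup.mul_mem_sup hy h1
    · exact sup_le hLK inf_le_left
  rw [this]
  exact hL.sup h'

theorem SG.top_iff {K : Subgroup G} {m : ℕ} : SG (⊤ : Subgroup K) m ↔ SG K m := by
  constructor
  · intro h
    have := h.map K.subtype
    rwa [← MonoidHom.range_eq_map, Subgroup.range_subtype] at this
  · intro h
    apply SG.of_map_injective K.subtype_injective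
    rwa [← MonoidHom.range_eq_map, Subgroup.range_subtype]

theorem SG.of_surjective {m : ℕ} (f : G →* G') (hf : Function.Surjective f)
    (h : SG (⊤ : Subgroup G) m) : SG (⊤ : Subgroup G') m := by
  have := h.map f
  rwa [Subgroup.map_top_of_surjective f hf] at this

theorem SG.of_card [Finite G] {m : ℕ} {K : Subgroup G} (h : Nat.card K ≤ m) : SG K m := by
  classical
  have := Fintype.ofFinite G
  refine ⟨(K : Set G).toFinset, ?_, by simp⟩
  rw [Set.toFinset_card]
  simpa [Nat.card_eq_fintype_card] using h

theorem SG.iSup {ι : Type*} (s : Finset ι) (K : ι → Subgroup G) (m : ι → ℕ)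
    (h : ∀ i ∈ s, SG (K i) (m i)) : SG (⨆ i ∈ s, K i) (∑ i ∈ s, m i) := by
  classical
  induction s using Finset.induction_on with
  | empty => simpa using SG.bot 0
  | insert a s ha ih =>
    rw [Finset.iSup_insert, Finset.sum_insert ha]
    exact (h a (by simp)).sup (ih fun i hi => h i (by simp [hi]))

end basic

section growth
variable {G : Type*} [Group G] [Finite G]

/-- Adjoining an `ℓ`-element outside `K` multiplies the order by at least `ℓ`. -/
theorem card_sup_zpowers {K : Subgroup G} {y : G} {l : ℕ} (hl : l.Prime) {j : ℕ}
    (hy : orderOf y = l ^ j) (hyK : y ∉ K) :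
    l * Nat.card K ≤ Nat.card (K ⊔ Subgroup.zpowers y : Subgroup G) := by
  set L := K ⊔ Subgroup.zpowers y with hL
  have hfin : K.relIndex L ≠ 0 := Subgroup.index_ne_zero_of_finite
  have h1 : K.relIndex (Subgroup.zpowers y) ≤ K.relIndex L :=
    Subgroup.relIndex_le_of_le_right le_sup_right hfin
  have h2 : K.relIndex (Subgroup.zpowers y) ∣ l ^ j := by
    have := Subgroup.relIndex_dvd_card K (Subgroup.zpowers y)
    rwa [Nat.card_zpowers, hy] at this
  have h3 : K.relIndex (Subgroup.zpowers y) ≠ 1 := by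
    rw [Ne, Subgroup.relIndex_eq_one]
    intro h
    exact hyK (h (Subgroup.mem_zpowers y))
  obtain ⟨i, hi, hi'⟩ := (Nat.dvd_prime_pow hl).1 h2
  have h4 : l ≤ K.relIndex (Subgroup.zpowers y) := by
    rw [hi'] at h3 ⊢
    rcases i with _ | i
    · simp at h3
    · rw [pow_succ]; exact Nat.le_mul_of_pos_left _ (pow_pos hl.pos _)
  have h5 : K.relIndex L * Nat.card K = Nat.card L := by
    have := Subgroup.relIndex_mul_relIndex (⊥ : Subgroup G) K L bot_le le_sup_left
    rw [Subgroup.relIndex_bot_left, Subgroup.relIndex_bot_left] at this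
    rw [mul_comm]; exact this
  rw [← h5]
  exact Nat.mul_le_mul_right _ (h4.trans h1)

/-- `y` has prime power order for a prime at least `t`. -/
def IsBigElt (t : ℕ) (y : G) : Prop := ∃ l j : ℕ, l.Prime ∧ t ≤ l ∧ orderOf y = l ^ j

/-- A greedy chain from `K` to `L`, each step of which adjoins a prime power element. -/
theorem exists_gen_growth {K L : Subgroup G} {Y : Set G} {t : ℕ} (hY : ∀ y ∈ Y, IsBigElt t y)
    (hL : K ⊔ Subgroup.closure Y = L) :
    ∃ m, ∃ M : Subgroup G, SG M m ∧ K ⊔ M = L ∧ t ^ m * Nat.card K ≤ Nat.card L := by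
  obtain ⟨n, hn⟩ : ∃ n, n = Nat.card L - Nat.card K := ⟨_, rfl⟩
  induction n using Nat.strong_induction_on generalizing K with
  | _ n ih =>
    by_cases h : ∀ y ∈ Y, y ∈ K
    · refine ⟨0, ⊥, SG.bot 0, ?_, ?_⟩
      · rw [← hL, sup_bot_eq, sup_eq_left.2]
        exact (Subgroup.closure_le _).2 h
      · have : K ≤ L := hL ▸ le_sup_left
        simpa using Nat.le_of_dvd Nat.card_pos (Subgroup.card_dvd_of_le this)
    · push Not at h
      obtain ⟨y, hyY, hyK⟩ := h
      obtain ⟨l, j, hl, htl, hord⟩ := hY y hyY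
      have hg := card_sup_zpowers hl hord hyK
      have hyL : Subgroup.zpowers y ≤ Subgroup.closure Y := by
        rw [Subgroup.zpowers_le]; exact Subgroup.subset_closure hyY
      have hL' : (K ⊔ Subgroup.zpowers y) ⊔ Subgroup.closure Y = L := by
        rw [sup_assoc, sup_eq_right.2 hyL, hL]
      have hle : Nat.card (K ⊔ Subgroup.zpowers y : Subgroup G) ≤ Nat.card L :=
        Nat.le_of_dvd Nat.card_pos (Subgroup.card_dvd_of_le (hL' ▸ le_sup_left))
      have hKpos : 0 < Nat.card K := Nat.card_pos
      have hl2 := hl.two_le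
      have hlt : Nat.card K < Nat.card (K ⊔ Subgroup.zpowers y : Subgroup G) := by nlinarith
      obtain ⟨m, M, hM, hKM, hcard⟩ := ih _ (by omega) hL' rfl
      refine ⟨m + 1, M ⊔ Subgroup.zpowers y, hM.sup (SG.zpowers y), ?_, ?_⟩
      · rw [← hKM, sup_assoc, sup_comm M]
      · calc t ^ (m + 1) * Nat.card K ≤ t ^ m * (l * Nat.card K) := by
              rw [pow_succ, mul_assoc]
              exact Nat.mul_le_mul_left _ (Nat.mul_le_mul_right _ htl)
          _ ≤ _ := (Nat.mul_le_mul_left _ hg).trans hcard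

/-- If `K` contains a Sylow subgroup for every prime below `t`, the elements of prime power order
for primes at least `t` generate the group together with `K`. -/
theorem sup_closure_bigElt {K : Subgroup G} {t : ℕ}
    (hK : ∀ l : ℕ, l.Prime → l < t → ¬ l ∣ K.index) :
    K ⊔ Subgroup.closure {y : G | IsBigElt t y} = ⊤ := by
  set L := K ⊔ Subgroup.closure {y : G | IsBigElt t y} with hL
  rw [← Subgroup.index_eq_one]
  by_contra hne
  obtain ⟨l, hl, hdvd⟩ := Nat.exists_prime_and_dvd hne
  by_cases hlt : l < t
  · exact hK l hl hlt (hdvd.trans (Subgroup.index_dvd_of_le le_sup_left))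
  · have := Fact.mk hl
    obtain ⟨P⟩ : Nonempty (Sylow l G) := inferInstance
    have hP : (P : Subgroup G) ≤ L := by
      intro x hx
      apply Subgroup.mem_sup_right
      apply Subgroup.subset_closure
      obtain ⟨j, hj⟩ := (IsPGroup.iff_orderOf.1 P.isPGroup') ⟨x, hx⟩
      exact ⟨l, j, hl, not_lt.1 hlt, by simpa using hj⟩
    exact P.not_dvd_index (hdvd.trans (Subgroup.index_dvd_of_le hP))

/-- The case of no base group. -/
theorem SG_of_card_log {t m : ℕ} (hcard : ∀ l, t ^ l ≤ Nat.card G → l ≤ m)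
    (hprime : ∀ l : ℕ, l.Prime → l < t → ¬ l ∣ Nat.card G) : SG (⊤ : Subgroup G) m := by
  have h := sup_closure_bigElt (K := (⊥ : Subgroup G)) (t := t) (by simpa using hprime)
  obtain ⟨l, M, hM, hsup, hc⟩ := exists_gen_growth (fun y hy => hy) h
  simp only [bot_sup_eq] at hsup
  rw [hsup] at hM
  apply hM.mono (hcard l _)
  simpa using hc

/-- A finite group is generated by at most `log₂` of its order elements. -/
theorem SG_log2 {m : ℕ} (hcard : Nat.card G < 2 ^ (m + 1)) : SG (⊤ : Subgroup G) m := by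
  apply SG_of_card_log (t := 2)
  · intro l hl
    have := (Nat.pow_lt_pow_iff_right (by norm_num : 1 < 2)).1 (hl.trans_lt hcard)
    omega
  · intro l hl h2
    have := hl.two_le
    omega

end growth

end GenBound

/-! ### The rank of uniform pro-`p` groups of units -/

namespace GenBound

/-- Burnside's basis theorem with the Frattini quotient bounded by counting `p`-th powers. -/
theorem SG_of_card_powers {Q : Type*} [Group Q] [Finite Q] {p D : ℕ} (hp : p.Prime)
    (hQ : IsPGroup p Q)
    (hc : Nat.card Q ≤ p ^ D * Nat.card (Set.range fun g : Q => g ^ p)) :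
    SG (⊤ : Subgroup Q) D := by
  have := Fact.mk hp
  -- a maximal subgroup `M` is normal; if `g ^ p ∉ M`, then `g ^ p` generates `Q / M`
  have hpow : ∀ g : Q, g ^ p ∈ frattini Q := by
    intro g
    rw [frattini, Order.radical]
    simp only [Subgroup.mem_iInf, Set.mem_ofPred_eq]
    intro M hM
    by_contra hg
    have hnil : Group.IsNilpotent Q := hQ.isNilpotent
    have hnorm : M.Normal := Subgroup.NormalizerCondition.normal_of_coatom M
      Group.normalizerCondition_of_isNilpotent hM
    have htop : M ⊔ Subgroup.zpowers (g ^ p) = ⊤ := by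
      apply hM.2
      refine lt_of_le_of_ne le_sup_left ?_
      intro h
      apply hg
      rw [h]
      exact Subgroup.mem_sup_right (Subgroup.mem_zpowers _)
    have hg' : g ∈ M ⊔ Subgroup.zpowers (g ^ p) := htop ▸ Subgroup.mem_top g
    rw [Subgroup.mem_sup_of_normal_left] at hg'
    obtain ⟨y, hy, z, hz, hyz⟩ := hg'
    obtain ⟨n, rfl⟩ := Subgroup.mem_zpowers_iff.1 hz
    set x : Q ⧸ M := QuotientGroup.mk g with hx
    have h1 : x = (x ^ p) ^ n := by
      have : (QuotientGroup.mk (y * (g ^ p) ^ n) : Q ⧸ M) = x := by rw [hyz]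
      rw [QuotientGroup.mk_mul, (QuotientGroup.eq_one_iff y).2 hy, one_mul] at this
      exact this.symm
    have h2 : x ^ ((p : ℤ) * n - 1) = 1 := by
      rw [zpow_sub, zpow_mul, zpow_natCast, zpow_one, ← h1]
      simp
    obtain ⟨k, hk⟩ := IsPGroup.iff_orderOf.1 (hQ.to_quotient M) x
    have h3 : (orderOf x : ℤ) ∣ (p : ℤ) * n - 1 := orderOf_dvd_iff_zpow_eq_one.2 h2
    have h4 : orderOf x = 1 := by
      rcases k with _ | k
      · simpa using hk
      · exfalso
        have h5 : (p : ℤ) ∣ (p : ℤ) * n - 1 := by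
          refine dvd_trans ?_ h3
          rw [hk]; push_cast
          exact dvd_pow_self _ (by omega)
        have h6 : (p : ℤ) ∣ 1 := by
          have := (dvd_mul_right (p : ℤ) n).sub h5
          simpa using this
        exact hp.one_lt.ne' (by exact_mod_cast Int.eq_one_of_dvd_one (by positivity) h6)
    have h7 : g ∈ M := (QuotientGroup.eq_one_iff g).1 (orderOf_eq_one_iff.1 h4)
    exact hg (M.pow_mem h7 p)
  have hle : Nat.card (Set.range fun g : Q => g ^ p) ≤ Nat.card (frattini Q) := by
    apply Nat.card_mono (Set.toFinite _)
    rintro _ ⟨g, rfl⟩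
    exact hpow g
  obtain ⟨m, M, hM, hsup, hm⟩ := exists_gen_growth (K := frattini Q) (L := ⊤)
    (Y := Set.univ) (t := p) (fun y _ => by
      obtain ⟨k, hk⟩ := IsPGroup.iff_orderOf.1 hQ y
      exact ⟨p, k, hp, le_rfl, hk⟩) (by simp)
  have hMtop : M = ⊤ := by
    apply frattini_nongenerating
    rw [sup_comm]; exact hsup
  rw [hMtop] at hM
  apply hM.mono
  have h1 : p ^ m * Nat.card (frattini Q) ≤ p ^ D * Nat.card (frattini Q) := by
    refine hm.trans ?_
    rw [Subgroup.card_top]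
    exact hc.trans (Nat.mul_le_mul_left _ hle)
  have h2 := Nat.le_of_mul_le_mul_right h1 Nat.card_pos
  exact (Nat.pow_le_pow_iff_right hp.one_lt).1 h2

/-- A multiplicative filtration of a ring by additive subgroups, in which multiplication by `p`
shifts degrees by exactly `e` and `e` consecutive layers together have order `p ^ D`. -/
structure PFilt (M : Type*) [Ring M] (p e D : ℕ) where
  /-- The terms of the filtration. -/
  a : ℕ → AddSubgroup M
  anti : Antitone a
  mul : ∀ i j x y, x ∈ a i → y ∈ a j → x * y ∈ a (i + j)
  pmul : ∀ i x, (p : M) * x ∈ a (i + e) ↔ x ∈ a i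
  card_le : ∀ i, (a (i + e)).relIndex (a i) ≤ p ^ D
  card_ne : ∀ i, (a (i + e)).relIndex (a i) ≠ 0

namespace PFilt
variable {M : Type*} [Ring M] {p e D : ℕ} (F : PFilt M p e D)

theorem pow_mem {i : ℕ} {x : M} (hx : x ∈ F.a i) (m : ℕ) : x ^ (m + 1) ∈ F.a ((m + 1) * i) := by
  induction m with
  | zero => simpa using hx
  | succ m ih =>
    rw [pow_succ]
    have := F.mul _ _ _ _ ih hx
    convert this using 2
    ring

theorem pow_sub_pow {i j : ℕ} {u v : M} (hu : u ∈ F.a i) (hv : v ∈ F.a i)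
    (hw : v - u ∈ F.a j) (m : ℕ) : v ^ (m + 1) - u ^ (m + 1) ∈ F.a (j + m * i) := by
  induction m with
  | zero => simpa using hw
  | succ m ih =>
    have h1 : v ^ (m + 1 + 1) - u ^ (m + 1 + 1) =
        v ^ (m + 1) * (v - u) + (v ^ (m + 1) - u ^ (m + 1)) * u := by
      rw [pow_succ v, pow_succ u]; noncomm_ring
    rw [h1]
    refine (F.a _).add_mem ?_ ?_
    · have := F.mul _ _ _ _ (F.pow_mem hv m) hw
      convert this using 2
      ring
    · have := F.mul _ _ _ _ ih hu
      convert this using 2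
      ring

/-- The leading term of `(1 + v) ^ p - (1 + u) ^ p` is `p (v - u)`. -/
theorem ppow_sub_ppow (hp : p.Prime) {i j : ℕ} (hi : 1 ≤ i) (hpi : e + 1 ≤ (p - 1) * i) {u v : M}
    (hu : u ∈ F.a i) (hv : v ∈ F.a i) (hw : v - u ∈ F.a j) :
    (1 + v) ^ p - (1 + u) ^ p - (p : M) * (v - u) ∈ F.a (j + e + 1) := by
  have hexp : ∀ x : M, (1 + x) ^ p = ∑ m ∈ Finset.range (p + 1), x ^ m * (p.choose m : M) := by
    intro x
    rw [add_comm, (Commute.one_right x).add_pow]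
    simp
  obtain ⟨q, rfl⟩ : ∃ q, p = q + 2 := ⟨p - 2, by have := hp.two_le; omega⟩
  have : (1 + v) ^ (q + 2) - (1 + u) ^ (q + 2) - ((q + 2 : ℕ) : M) * (v - u) =
      ∑ m ∈ Finset.range (q + 1),
        (v ^ (m + 2) - u ^ (m + 2)) * ((q + 2).choose (m + 2) : M) := by
    rw [hexp, hexp, ← Finset.sum_sub_distrib, Finset.sum_range_succ', Finset.sum_range_succ']
    simp only [← sub_mul]
    simp only [zero_add, pow_one, pow_zero, sub_self, zero_mul, add_zero, Nat.choose_one_right]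
    rw [Nat.cast_comm, add_sub_cancel_right]
  rw [this]
  refine (F.a _).sum_mem fun m hm => ?_
  have hm' : m < q + 1 := Finset.mem_range.1 hm
  have h1 := F.pow_sub_pow hu hv hw (m + 1)
  rcases Nat.lt_succ_iff_lt_or_eq.1 hm' with h | h
  · obtain ⟨c, hc⟩ := hp.dvd_choose_self (k := m + 2) (by omega) (by omega)
    rw [hc, Nat.cast_mul, ← mul_assoc, ← Nat.cast_comm c, ← Nat.cast_comm (q + 2),
      ← nsmul_eq_mul]
    refine (F.a _).nsmul_mem ?_ _
    have h2 := F.anti (show j + 1 ≤ j + (m + 1) * i by nlinarith) h1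
    have h3 := (F.pmul _ _).2 h2
    convert h3 using 2
    ring
  · subst h
    rw [Nat.choose_self, Nat.cast_one, mul_one]
    refine F.anti ?_ h1
    have : m + 2 - 1 = m + 1 := by omega
    rw [this] at hpi
    omega

/-- The `p`-th power map is injective up to a shift of the filtration by `e`. -/
theorem sub_mem_of_ppow (hp : p.Prime) {i : ℕ} (hi : 1 ≤ i) (hpi : e + 1 ≤ (p - 1) * i)
    {g h : M} (hg : g - 1 ∈ F.a i) (hh : h - 1 ∈ F.a i) {k : ℕ}
    (hgh : g ^ p - h ^ p ∈ F.a (k + e)) : g - h ∈ F.a k := by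
  have key : ∀ j ≤ k, g - h ∈ F.a j ∨ k < i := by
    intro j
    induction j with
    | zero =>
      intro _
      left
      refine F.anti (Nat.zero_le i) ?_
      have := (F.a i).sub_mem hg hh
      simpa using this
    | succ j ih =>
      intro hj
      rcases ih (by omega) with h1 | h1
      · left
        have h2 := F.ppow_sub_ppow hp hi hpi (u := h - 1) (v := g - 1) hh hg (j := j)
          (by simpa using h1)
        simp only [add_sub_cancel, sub_sub_sub_cancel_right] at h2
        have h3 : g ^ p - h ^ p ∈ F.a (j + e + 1) := F.anti (by omega) hgh
        have h4 := (F.a _).sub_mem h3 h2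
        rw [sub_sub_cancel] at h4
        rw [← F.pmul]
        convert h4 using 2
        ring
      · exact Or.inr h1
  rcases key k le_rfl with h1 | h1
  · exact h1
  · refine F.anti h1.le ?_
    have := (F.a i).sub_mem hg hh
    simpa using this

theorem mul_mem_of_one {i k : ℕ} {g y : M} (hg : g - 1 ∈ F.a i) (hy : y ∈ F.a k) :
    g * y ∈ F.a k := by
  have h1 : g * y = (g - 1) * y + y := by noncomm_ring
  rw [h1]
  exact (F.a k).add_mem (F.anti (by omega) (F.mul _ _ _ _ hg hy)) hy

theorem mem_mul_of_one {i k : ℕ} {g y : M} (hg : g - 1 ∈ F.a i) (hy : y ∈ F.a k) :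
    y * g ∈ F.a k := by
  have h1 : y * g = y * (g - 1) + y := by noncomm_ring
  rw [h1]
  exact (F.a k).add_mem (F.anti (by omega) (F.mul _ _ _ _ hy hg)) hy

/-- The congruence subgroup of level `k` inside a subgroup `X` of level `i`. -/
def cong {X : Subgroup Mˣ} {i : ℕ} (hX : ∀ g ∈ X, (g : M) - 1 ∈ F.a i) (k : ℕ) :
    Subgroup X where
  carrier := {g | ((g : Mˣ) : M) - 1 ∈ F.a k}
  one_mem' := by simp
  mul_mem' := by
    intro g h hg hh
    simp only [Set.mem_ofPred_eq] at *
    have : (((g * h : X) : Mˣ) : M) - 1 =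
      ((g : Mˣ) : M) * (((h : Mˣ) : M) - 1) + (((g : Mˣ) : M) - 1) := by
        push_cast; noncomm_ring
    rw [this]
    exact (F.a k).add_mem (F.mul_mem_of_one (hX g g.2) hh) hg
  inv_mem' := by
    intro g hg
    simp only [Set.mem_ofPred_eq] at *
    have : (((g⁻¹ : X) : Mˣ) : M) - 1 =
      - ((((g⁻¹ : X) : Mˣ) : M) * (((g : Mˣ) : M) - 1)) := by
        rw [mul_sub, Subgroup.coe_inv, Units.inv_mul]; simp
    rw [this]
    exact (F.a k).neg_mem (F.mul_mem_of_one (hX _ (g⁻¹).2) hg)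

theorem mem_cong {X : Subgroup Mˣ} {i : ℕ} (hX : ∀ g ∈ X, (g : M) - 1 ∈ F.a i) {k : ℕ} {g : X} :
    g ∈ F.cong hX k ↔ ((g : Mˣ) : M) - 1 ∈ F.a k := Iff.rfl

theorem inv_mul_mem_cong {X : Subgroup Mˣ} {i : ℕ} (hX : ∀ g ∈ X, (g : M) - 1 ∈ F.a i) {k : ℕ}
    {g h : X} : g⁻¹ * h ∈ F.cong hX k ↔ ((h : Mˣ) : M) - ((g : Mˣ) : M) ∈ F.a k := by
  rw [mem_cong]
  have h1 : (((g⁻¹ * h : X) : Mˣ) : M) - 1 =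
      (((g⁻¹ : X) : Mˣ) : M) * (((h : Mˣ) : M) - ((g : Mˣ) : M)) := by
    rw [mul_sub, Subgroup.coe_mul, Units.val_mul, Subgroup.coe_inv, Units.inv_mul]
  have h2 : ((h : Mˣ) : M) - ((g : Mˣ) : M) =
      ((g : Mˣ) : M) * ((((g⁻¹ * h : X) : Mˣ) : M) - 1) := by
    rw [h1, ← mul_assoc, Subgroup.coe_inv, Units.mul_inv, one_mul]
  constructor
  · intro h; rw [h2]; exact F.mul_mem_of_one (hX _ g.2) h
  · intro h; rw [h1]; exact F.mul_mem_of_one (hX _ (g⁻¹).2) h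

theorem cong_normal {X : Subgroup Mˣ} {i : ℕ} (hX : ∀ g ∈ X, (g : M) - 1 ∈ F.a i) (k : ℕ) :
    (F.cong hX k).Normal := by
  constructor
  intro n hn g
  rw [mem_cong] at *
  have : (((g * n * g⁻¹ : X) : Mˣ) : M) - 1 =
      ((g : Mˣ) : M) * (((n : Mˣ) : M) - 1) * (((g⁻¹ : X) : Mˣ) : M) := by
    rw [mul_sub, sub_mul, mul_one, Subgroup.coe_inv, Units.mul_inv]
    simp
  rw [this]
  exact F.mem_mul_of_one (hX _ (g⁻¹).2) (F.mul_mem_of_one (hX _ g.2) hn)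

/-- Distinct cosets of the congruence subgroup of level `k` in that of level `j` give distinct
elements of `a j / a k`. -/
theorem cong_relIndex_le {X : Subgroup Mˣ} {i : ℕ} (hX : ∀ g ∈ X, (g : M) - 1 ∈ F.a i) {j k : ℕ}
    (h0 : (F.a k).relIndex (F.a j) ≠ 0) :
    (F.cong hX k).relIndex (F.cong hX j) ≤ (F.a k).relIndex (F.a j) ∧
      (F.cong hX k).relIndex (F.cong hX j) ≠ 0 := by
  let φ : F.cong hX j → F.a j := fun g => ⟨((g : X) : Mˣ) - 1, g.2⟩
  let ψ : (F.cong hX j) ⧸ (F.cong hX k).subgroupOf (F.cong hX j) →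
      (F.a j) ⧸ (F.a k).addSubgroupOf (F.a j) :=
    Quotient.map' φ (by
      intro g h hgh
      rw [QuotientGroup.leftRel_apply, Subgroup.mem_subgroupOf] at hgh
      rw [QuotientAddGroup.leftRel_apply, AddSubgroup.mem_addSubgroupOf]
      have := (F.inv_mul_mem_cong hX).1 (by simpa using hgh)
      convert this using 1
      simp [φ])
  have hψ : Function.Injective ψ := by
    intro x y
    induction x using Quotient.inductionOn'
    rename_i g
    induction y using Quotient.inductionOn'
    rename_i h
    intro hgh
    have h1 : QuotientAddGroup.leftRel ((F.a k).addSubgroupOf (F.a j)) (φ g) (φ h) :=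
      Quotient.exact' hgh
    apply Quotient.sound'
    rw [QuotientGroup.leftRel_apply, Subgroup.mem_subgroupOf]
    rw [QuotientAddGroup.leftRel_apply, AddSubgroup.mem_addSubgroupOf] at h1
    have := (F.inv_mul_mem_cong hX (k := k) (g := g) (h := h)).2 (by
      convert h1 using 1
      simp [φ])
    simpa using this
  have hfin : Finite ((F.a j) ⧸ (F.a k).addSubgroupOf (F.a j)) :=
    Nat.finite_of_card_ne_zero h0
  have hfin2 : Finite ((F.cong hX j) ⧸ (F.cong hX k).subgroupOf (F.cong hX j)) :=
    Finite.of_injective ψ hψ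
  exact ⟨Nat.card_le_card_of_injective ψ hψ, Nat.card_pos.ne'⟩

theorem relIndex_ne_zero (he : 1 ≤ e) (j k : ℕ) : (F.a k).relIndex (F.a j) ≠ 0 := by
  have h1 : ∀ n, (F.a (j + n * e)).relIndex (F.a j) ≠ 0 := by
    intro n
    induction n with
    | zero => simp
    | succ n ih =>
      rw [← AddSubgroup.relIndex_mul_relIndex (F.a (j + (n + 1) * e)) (F.a (j + n * e)) (F.a j)
        (F.anti (by nlinarith)) (F.anti (by nlinarith))]
      refine mul_ne_zero ?_ ih
      convert F.card_ne (j + n * e) using 3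
      ring
  intro h
  refine h1 k (AddSubgroup.relIndex_eq_zero_of_le_left (F.anti ?_) h)
  nlinarith

/-- A group of units of level `i ≥ 1` with `(p - 1) i > e` needs at most `D` generators
modulo any congruence subgroup. -/
theorem SG_map (hp : p.Prime) (he : 1 ≤ e) {i : ℕ} (hi : 1 ≤ i) (hpi : e + 1 ≤ (p - 1) * i)
    {X : Subgroup Mˣ} (hX : ∀ g ∈ X, (g : M) - 1 ∈ F.a i) {G : Type*} [Group G] (f : Mˣ →* G)
    (k : ℕ) (hf : ∀ g ∈ X, (g : M) - 1 ∈ F.a k → f g = 1) : SG (X.map f) D := by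
  have := Fact.mk hp
  -- work modulo the level `K + e`
  set K := i + k with hK
  set N := F.cong hX (K + e) with hN
  have hNn : N.Normal := F.cong_normal hX _
  have htop : F.cong hX i = ⊤ := by
    rw [eq_top_iff]; intro g _; exact hX g g.2
  have hfin : Finite (X ⧸ N) := by
    have := (F.cong_relIndex_le hX (F.relIndex_ne_zero he i (K + e))).2
    rw [htop, Subgroup.relIndex_top_right] at this
    exact Nat.finite_of_card_ne_zero this
  have hpow : ∀ (g : X), g ^ p ∈ N ↔ g ∈ F.cong hX K := by
    intro g
    constructor
    · intro h
      have := F.sub_mem_of_ppow hp hi hpi (hX g g.2) (h := 1) (by simp) (k := K)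
        (by simpa [hN, mem_cong] using h)
      simpa [mem_cong] using this
    · intro h
      rw [mem_cong] at h
      have h2 := F.ppow_sub_ppow hp hi hpi (u := 0) (v := ((g : Mˣ) : M) - 1) (j := K)
        (F.a i).zero_mem (hX g g.2) (by simpa using h)
      simp only [add_sub_cancel, add_zero, one_pow, sub_zero] at h2
      have h3 := (F.pmul _ _).2 h
      rw [hN, mem_cong]
      have h4 := (F.a _).add_mem (F.anti (by omega) h2) h3
      simpa using h4
  have hPG : IsPGroup p (X ⧸ N) := by
    have step : ∀ (n : ℕ) (g : X), ((g ^ p ^ n : X) : Mˣ) - (1 : M) ∈ F.a (i + n) := by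
      intro n g
      induction n with
      | zero => simpa using hX g g.2
      | succ n ih =>
        have h2 := F.ppow_sub_ppow hp hi hpi (u := 0) (v := ((g ^ p ^ n : X) : Mˣ) - (1 : M))
          (j := i + n) (F.a i).zero_mem (hX _ (g ^ p ^ n).2) (by simpa using ih)
        simp only [add_sub_cancel, add_zero, one_pow, sub_zero] at h2
        have h3 := (F.pmul _ _).2 ih
        have h4 := (F.a _).add_mem (F.anti (show i + n + 1 ≤ _ by omega) h2)
          (F.anti (show i + n + 1 ≤ _ by omega) h3)
        rw [pow_succ, pow_mul, ← add_assoc]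
        simpa using h4
    intro x
    induction x using QuotientGroup.induction_on with
    | H g =>
      refine ⟨K + e, ?_⟩
      rw [← QuotientGroup.mk_pow, QuotientGroup.eq_one_iff, hN, mem_cong]
      exact F.anti (by omega) (step (K + e) g)
  have hcount : Nat.card (X ⧸ N) ≤
      p ^ D * Nat.card (Set.range fun g : X ⧸ N => g ^ p) := by
    have h1 : Nat.card (X ⧸ N) = N.relIndex (F.cong hX K) * (F.cong hX K).index := by
      rw [Subgroup.relIndex_mul_index]
      · rfl
      · intro g hg
        exact F.anti (by omega : K ≤ K + e) hg
    rw [h1]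
    refine Nat.mul_le_mul ((F.cong_relIndex_le hX (F.card_ne K)).1.trans (F.card_le K)) ?_
    let ψ : (X ⧸ F.cong hX K) → Set.range fun g : X ⧸ N => g ^ p :=
      fun x => ⟨(QuotientGroup.mk x.out : X ⧸ N) ^ p, ⟨_, rfl⟩⟩
    have hψ : Function.Injective ψ := by
      intro x y hxy
      have h2 : (QuotientGroup.mk x.out : X ⧸ N) ^ p = (QuotientGroup.mk y.out : X ⧸ N) ^ p :=
        congrArg Subtype.val hxy
      rw [← QuotientGroup.mk_pow, ← QuotientGroup.mk_pow, QuotientGroup.eq, hN,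
        F.inv_mul_mem_cong hX] at h2
      have h3 := F.sub_mem_of_ppow hp hi hpi (hX _ y.out.2) (hX _ x.out.2) (k := K)
        (by simpa using h2)
      rw [← F.inv_mul_mem_cong hX, ← QuotientGroup.eq] at h3
      rwa [QuotientGroup.out_eq', QuotientGroup.out_eq'] at h3
    exact Nat.card_le_card_of_injective ψ hψ
  have hSG := SG_of_card_powers hp hPG hcount
  have hSG' : SG ((⊤ : Subgroup X).map (QuotientGroup.mk' N)) D := by
    rwa [Subgroup.map_top_of_surjective _ (QuotientGroup.mk'_surjective N)]
  obtain ⟨L, -, hL, hLmap⟩ := hSG'.lift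
  have : X.map f = L.map (f.comp X.subtype) := by
    apply le_antisymm
    · rintro _ ⟨g, hg, rfl⟩
      have : QuotientGroup.mk' N ⟨g, hg⟩ ∈ L.map (QuotientGroup.mk' N) := by
        rw [hLmap]; exact Subgroup.mem_map_of_mem _ (Subgroup.mem_top _)
      obtain ⟨l, hl, hlg⟩ := this
      refine ⟨l, hl, ?_⟩
      have h1 : l⁻¹ * ⟨g, hg⟩ ∈ N := QuotientGroup.eq.1 hlg
      have h2 := hf _ (l⁻¹ * ⟨g, hg⟩ : X).2 (F.anti (by omega) ((F.mem_cong hX).1 h1))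
      simp only [Subgroup.coe_mul, Subgroup.coe_inv, map_mul, map_inv] at h2
      simpa using (inv_mul_eq_one.1 h2)
    · rintro _ ⟨g, hg, rfl⟩
      exact Subgroup.mem_map_of_mem f g.2
  rw [this]
  exact hL.map _

end PFilt

end GenBound

/-! ### Relative generation -/

namespace GenBound

/-- `K` is generated by at most `m` elements modulo (the intersection with) `N`. -/
def RSG {G : Type*} [Group G] (K N : Subgroup G) (m : ℕ) : Prop :=
  ∃ M ≤ K, SG M m ∧ ∀ q ∈ K, ∃ x ∈ M, x⁻¹ * q ∈ N

section RSG
variable {G : Type*} [Group G] {H : Type*} [Group H]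

theorem RSG.mono {K N N' : Subgroup G} {m n : ℕ} (h : RSG K N m) (hN : N ≤ N') (hmn : m ≤ n) :
    RSG K N' n := by
  obtain ⟨M, h1, h2, h3⟩ := h
  refine ⟨M, h1, h2.mono hmn, fun q hq => ?_⟩
  obtain ⟨x, hx, hx'⟩ := h3 q hq
  exact ⟨x, hx, hN hx'⟩

theorem RSG.of_le {K N : Subgroup G} (h : K ≤ N) (m : ℕ) : RSG K N m :=
  ⟨⊥, bot_le, SG.bot m, fun q hq => ⟨1, one_mem _, by simpa using h hq⟩⟩

theorem RSG.trans {K N N' : Subgroup G} {a b : ℕ} (h : RSG K N a) (h' : RSG (K ⊓ N) N' b) :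
    RSG K N' (a + b) := by
  obtain ⟨M, h1, h2, h3⟩ := h
  obtain ⟨M', h1', h2', h3'⟩ := h'
  refine ⟨M ⊔ M', sup_le h1 (h1'.trans inf_le_left), h2.sup h2', fun q hq => ?_⟩
  obtain ⟨x, hx, hxN⟩ := h3 q hq
  obtain ⟨y, hy, hyN⟩ := h3' (x⁻¹ * q) ⟨K.mul_mem (K.inv_mem (h1 hx)) hq, hxN⟩
  exact ⟨x * y, Subgroup.mul_mem_sup hx hy, by simpa [mul_assoc] using hyN⟩

theorem RSG.of_map {K : Subgroup G} {m : ℕ} (f : G →* H) (h : SG (K.map f) m) :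
    RSG K f.ker m := by
  obtain ⟨L, hLK, hL, hmap⟩ := h.lift
  refine ⟨L, hLK, hL, fun q hq => ?_⟩
  obtain ⟨y, hy, hyx⟩ : f q ∈ L.map f := hmap ▸ Subgroup.mem_map_of_mem f hq
  exact ⟨y, hy, by simp [MonoidHom.mem_ker, hyx]⟩

theorem RSG.sg {K : Subgroup G} {m : ℕ} (h : RSG K ⊥ m) : SG K m := by
  obtain ⟨M, h1, h2, h3⟩ := h
  have : M = K := le_antisymm h1 fun q hq => by
    obtain ⟨x, hx, hxq⟩ := h3 q hq
    rw [Subgroup.mem_bot, inv_mul_eq_one] at hxq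
    exact hxq ▸ hx
  exact this ▸ h2

theorem RSG.map_sg {K : Subgroup G} {m : ℕ} {f : G →* H} (h : RSG K f.ker m) :
    SG (K.map f) m := by
  obtain ⟨M, h1, h2, h3⟩ := h
  have : K.map f = M.map f := by
    apply le_antisymm _ (Subgroup.map_mono h1)
    rintro _ ⟨q, hq, rfl⟩
    obtain ⟨x, hx, hxq⟩ := h3 q hq
    refine ⟨x, hx, ?_⟩
    simpa [MonoidHom.mem_ker, inv_mul_eq_one] using hxq
  exact this ▸ h2.map f

theorem RSG.of_subtype {K N : Subgroup G} {m : ℕ}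
    (h : RSG (⊤ : Subgroup K) (N.subgroupOf K) m) : RSG K N m := by
  obtain ⟨M, h1, h2, h3⟩ := h
  refine ⟨M.map K.subtype, Subgroup.map_subtype_le M, h2.map _, fun q hq => ?_⟩
  obtain ⟨x, hx, hxq⟩ := h3 ⟨q, hq⟩ (Subgroup.mem_top _)
  exact ⟨x, Subgroup.mem_map_of_mem _ hx, by simpa [Subgroup.mem_subgroupOf] using hxq⟩

/-- Passing successively to the subgroups `S i`. -/
theorem RSG.family {ι : Type*} (s : Finset ι) (N : Subgroup G) (S : ι → Subgroup G) (m : ι → ℕ)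
    (h : ∀ i ∈ s, ∀ K ≤ N, RSG K (S i) (m i)) {K : Subgroup G} (hK : K ≤ N) :
    RSG K (⨅ i ∈ s, S i) (∑ i ∈ s, m i) := by
  classical
  induction s using Finset.induction_on generalizing K with
  | empty => simpa using RSG.of_le le_top 0
  | insert a s ha ih =>
    rw [Finset.iInf_insert, Finset.sum_insert ha]
    have h1 := h a (by simp) K hK
    have h2 := ih (fun i hi => h i (by simp [hi])) (K := K ⊓ S a) (inf_le_left.trans hK)
    have h3 : RSG (K ⊓ S a) (S a ⊓ ⨅ i ∈ s, S i) (∑ i ∈ s, m i) := by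
      obtain ⟨M, hM, hM2, hM3⟩ := h2
      refine ⟨M, hM, hM2, fun q hq => ?_⟩
      obtain ⟨x, hx, hxq⟩ := hM3 q hq
      exact ⟨x, hx, (S a).mul_mem ((S a).inv_mem (hM hx).2) hq.2, hxq⟩
    exact h1.trans h3

theorem SG.of_isCyclic {K : Subgroup G} [IsCyclic K] : SG K 1 := by
  obtain ⟨g, hg⟩ := IsCyclic.exists_generator (α := K)
  rw [← SG.top_iff]
  have : (⊤ : Subgroup K) = Subgroup.zpowers g := by
    rw [eq_comm, eq_top_iff]; intro x _; exact hg x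
  rw [this]
  exact SG.zpowers g

theorem SG.units {F : Type*} [Field F] {K : Subgroup Fˣ} [Finite K] : SG K 1 :=
  SG.of_isCyclic

end RSG

/-! ### Blocks of imprimitivity of complex representations -/

section blocks
variable {Q : Type*} [Group Q] {V : Type*} [AddCommGroup V] [Module ℂ V]

/-- The group elements acting on the subspace `W` as multiplication by a nonzero scalar. -/
def scalOn (ρ : Representation ℂ Q V) (W : Submodule ℂ V) : Subgroup Q where
  carrier := {q | ∃ c : ℂ, c ≠ 0 ∧ ∀ w ∈ W, ρ q w = c • w}
  one_mem' := ⟨1, one_ne_zero, by simp⟩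
  mul_mem' := by
    rintro a b ⟨c, hc, h⟩ ⟨c', hc', h'⟩
    refine ⟨c * c', mul_ne_zero hc hc', fun w hw => ?_⟩
    rw [map_mul, Module.End.mul_apply, h' w hw, map_smul, h w hw, smul_smul, mul_comm]
  inv_mem' := by
    rintro a ⟨c, hc, h⟩
    refine ⟨c⁻¹, inv_ne_zero hc, fun w hw => ?_⟩
    have : w = ρ a (c⁻¹ • w) := by rw [map_smul, h w hw, smul_smul, inv_mul_cancel₀ hc, one_smul]
    conv_lhs => rw [this]
    rw [Representation.inv_self_apply]

/-- The group elements acting trivially on the subspace `W`. -/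
def trivOn (ρ : Representation ℂ Q V) (W : Submodule ℂ V) : Subgroup Q where
  carrier := {q | ∀ w ∈ W, ρ q w = w}
  one_mem' := by simp
  mul_mem' := by
    intro a b h h' w hw
    rw [map_mul, Module.End.mul_apply, h' w hw, h w hw]
  inv_mem' := by
    intro a h w hw
    conv_lhs => rw [← h w hw]
    rw [Representation.inv_self_apply]

theorem mem_scalOn {ρ : Representation ℂ Q V} {W : Submodule ℂ V} {q : Q} :
    q ∈ scalOn ρ W ↔ ∃ c : ℂ, c ≠ 0 ∧ ∀ w ∈ W, ρ q w = c • w := Iff.rfl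

theorem mem_trivOn {ρ : Representation ℂ Q V} {W : Submodule ℂ V} {q : Q} :
    q ∈ trivOn ρ W ↔ ∀ w ∈ W, ρ q w = w := Iff.rfl

/-- The representation of a stabilizing subgroup `K` on a subspace `W`. -/
def subRep (ρ : Representation ℂ Q V) (K : Subgroup Q) (W : Submodule ℂ V)
    (h : ∀ q ∈ K, ∀ w ∈ W, ρ q w ∈ W) : Representation ℂ K W where
  toFun q := (ρ q).restrict (h q q.2)
  map_one' := by ext; simp [LinearMap.restrict_apply]
  map_mul' := by intro a b; ext; simp [LinearMap.restrict_apply]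

theorem subRep_apply (ρ : Representation ℂ Q V) (K : Subgroup Q) (W : Submodule ℂ V)
    (h : ∀ q ∈ K, ∀ w ∈ W, ρ q w ∈ W) (q : K) (w : W) :
    (subRep ρ K W h q w : V) = ρ q w := rfl

/-- A decomposition into nonzero subspaces permuted by the group. -/
structure IsBlocks (ρ : Representation ℂ Q V) {k : ℕ} (W : Fin k → Submodule ℂ V)
    (σ : Q →* Equiv.Perm (Fin k)) : Prop where
  ne_bot : ∀ i, W i ≠ ⊥
  indep : iSupIndep W
  iSup_eq : iSup W = ⊤
  map_mem : ∀ q i, ∀ w ∈ W i, ρ q w ∈ W (σ q i)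

theorem semisimple_rep [Finite Q] [FiniteDimensional ℂ V] (ρ : Representation ℂ Q V) (q : Q) :
    Module.End.IsSemisimple (ρ q) := by
  have hn : (Nat.card Q : ℂ) ≠ 0 := by exact_mod_cast Nat.card_pos.ne'
  apply Module.End.isSemisimple_of_squarefree_aeval_eq_zero
    (p := (Polynomial.X ^ Nat.card Q - Polynomial.C 1 : Polynomial ℂ))
  · exact (Polynomial.separable_X_pow_sub_C (1 : ℂ) hn one_ne_zero).squarefree
  · have h1 : ρ q ^ Nat.card Q = 1 := by rw [← map_pow, pow_card_eq_one', map_one]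
    simp [h1]

/-- A set `A` of group elements which act as commuting operators, not all scalar, and are permuted
up to scalars under conjugation, gives blocks: its common eigenspaces. -/
theorem exists_blocks [Finite Q] [FiniteDimensional ℂ V] (ρ : Representation ℂ Q V) (A : Set Q)
    (hcomm : ∀ a ∈ A, ∀ b ∈ A, ρ a * ρ b = ρ b * ρ a)
    (hconj : ∀ q, ∀ a ∈ A, ∃ b ∈ A, ∃ c : ℂ, ρ (q⁻¹ * a * q) = c • ρ b)
    (hns : ∃ a ∈ A, ∀ c : ℂ, ρ a ≠ c • (1 : V →ₗ[ℂ] V)) :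
    ∃ k, 2 ≤ k ∧ ∃ (W : Fin k → Submodule ℂ V) (σ : Q →* Equiv.Perm (Fin k)),
      IsBlocks ρ W σ := by
  classical
  let f : A → Module.End ℂ V := fun a => ρ a
  let E : (A → ℂ) → Submodule ℂ V := fun χ => ⨅ a, (f a).eigenspace (χ a)
  have hE : E = fun χ => ⨅ a, (f a).maxGenEigenspace (χ a) := by
    funext χ
    refine iInf_congr fun a => ?_
    rw [((semisimple_rep ρ (a : Q)).isFinitelySemisimple).maxGenEigenspace_eq_eigenspace]
  have hmem : ∀ χ v, v ∈ E χ ↔ ∀ a : A, ρ a v = χ a • v := by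
    intro χ v
    simp [E, f, Submodule.mem_iInf]
  have hcomm' : ∀ i j, Commute (f i) (f j) := fun i j => hcomm i i.2 j j.2
  have hmaps : ∀ i j φ, Set.MapsTo (f i) ((f j).maxGenEigenspace φ) ((f j).maxGenEigenspace φ) :=
    fun i j φ => Module.End.mapsTo_maxGenEigenspace_of_comm (hcomm' j i) φ
  have hind : iSupIndep E := by
    rw [hE]; exact Module.End.independent_iInf_maxGenEigenspace_of_forall_mapsTo f hmaps
  have hsup : iSup E = ⊤ := by
    rw [hE]
    exact Module.End.iSup_iInf_maxGenEigenspace_eq_top_of_forall_mapsTo f hmaps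
      (fun a => Module.End.iSup_maxGenEigenspace_eq_top _)
  let ι := {χ : A → ℂ // E χ ≠ ⊥}
  have hfin : Finite ι := WellFoundedGT.finite_ne_bot_of_iSupIndep hind
  have huniq : ∀ χ χ' v, v ≠ 0 → v ∈ E χ → v ∈ E χ' → χ = χ' := by
    intro χ χ' v hv h h'
    funext a
    have h1 := (hmem _ _).1 h a
    rw [(hmem _ _).1 h' a] at h1
    exact (smul_left_injective ℂ hv h1).symm
  have hstep : ∀ (q : Q) (χ : A → ℂ), ∃ χ', ∀ v ∈ E χ, ρ q v ∈ E χ' := by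
    intro q χ
    choose b hb c hc using fun a : A => hconj q a a.2
    refine ⟨fun a => c a * χ ⟨b a, hb a⟩, fun v hv => ?_⟩
    rw [hmem] at hv ⊢
    intro a
    have h1 : (a : Q) * q = q * (q⁻¹ * a * q) := by group
    rw [← Module.End.mul_apply, ← map_mul, h1, map_mul, Module.End.mul_apply, hc,
      LinearMap.smul_apply, hv ⟨b a, hb a⟩, smul_smul, map_smul]
  choose τ hτ using hstep
  have hinj : ∀ (q : Q) (v : V), v ≠ 0 → ρ q v ≠ 0 := by
    intro q v hv h
    apply hv
    rw [← Representation.inv_self_apply ρ q v, h, map_zero]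
  have hvec : ∀ χ : ι, ∃ v ∈ E χ.1, v ≠ 0 := fun χ => (Submodule.ne_bot_iff _).1 χ.2
  let act : Q → ι → ι := fun q χ => ⟨τ q χ.1, by
    obtain ⟨v, hv, hv0⟩ := hvec χ
    exact (Submodule.ne_bot_iff _).2 ⟨ρ q v, hτ q _ v hv, hinj q v hv0⟩⟩
  let M : Q →* Function.End ι :=
    { toFun := act
      map_one' := by
        funext χ
        obtain ⟨v, hv, hv0⟩ := hvec χ
        apply Subtype.ext
        apply huniq _ _ v hv0 _ hv
        have := hτ 1 _ v hv
        simpa using this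
      map_mul' := by
        intro q q'
        funext χ
        obtain ⟨v, hv, hv0⟩ := hvec χ
        apply Subtype.ext
        apply huniq _ _ (ρ (q * q') v) (hinj _ v hv0) (hτ (q * q') _ v hv)
        rw [map_mul]
        exact hτ q _ _ (hτ q' _ v hv) }
  let e := Finite.equivFin ι
  have hι : iSup (fun χ : ι => E χ.1) = ⊤ := by
    rw [← hsup]
    exact iSup_ne_bot_subtype E
  refine ⟨Nat.card ι, ?_, fun i => E (e.symm i).1,
    (e.permCongrHom.toMonoidHom).comp M.toHomPerm, ?_, ?_, ?_, ?_⟩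
  · by_contra hlt
    obtain ⟨a, ha, hac⟩ := hns
    have hsub : Subsingleton ι := (Finite.card_le_one_iff_subsingleton).1 (by omega)
    rcases isEmpty_or_nonempty ι with hemp | ⟨⟨χ⟩⟩
    · rw [iSup_of_empty] at hι
      have : Subsingleton V := (Submodule.subsingleton_iff ℂ).1 (subsingleton_of_bot_eq_top hι)
      exact hac 0 (Subsingleton.elim _ _)
    · have hχ : E χ.1 = ⊤ := by
        rw [eq_top_iff, ← hι]
        exact iSup_le fun i => by rw [Subsingleton.elim i χ]
      apply hac (χ.1 ⟨a, ha⟩)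
      ext v
      have : v ∈ E χ.1 := hχ ▸ Submodule.mem_top
      simpa using (hmem _ _).1 this ⟨a, ha⟩
  · exact fun i => (e.symm i).2
  · exact hind.comp (Subtype.val_injective.comp e.symm.injective)
  · rw [← hι]
    exact e.symm.iSup_comp (g := fun χ : ι => E χ.1)
  · intro q i w hw
    have := hτ q _ w hw
    have h2 : ρ q w ∈ E (M q (e.symm i)).1 := this
    simpa using h2

variable {k : ℕ} {ρ : Representation ℂ Q V} {W : Fin k → Submodule ℂ V}
  {σ : Q →* Equiv.Perm (Fin k)}

theorem IsBlocks.sum_finrank [FiniteDimensional ℂ V] (h : IsBlocks ρ W σ) :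
    ∑ i, Module.finrank ℂ (W i) = Module.finrank ℂ V := by
  classical
  have hinternal := DirectSum.isInternal_submodule_of_iSupIndep_of_iSup_eq_top h.indep h.iSup_eq
  have := (LinearEquiv.ofBijective (DirectSum.coeLinearMap W) hinternal).finrank_eq
  rw [← this, Module.finrank_directSum]

theorem IsBlocks.finrank_pos [FiniteDimensional ℂ V] (h : IsBlocks ρ W σ) (i : Fin k) :
    1 ≤ Module.finrank ℂ (W i) := by
  rw [Nat.one_le_iff_ne_zero, Ne, Submodule.finrank_eq_zero]
  exact h.ne_bot i

theorem IsBlocks.stab (h : IsBlocks ρ W σ) {q : Q} (hq : q ∈ σ.ker) (i : Fin k) {w : V}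
    (hw : w ∈ W i) : ρ q w ∈ W i := by
  have := h.map_mem q i w hw
  rwa [MonoidHom.mem_ker.1 hq] at this

theorem mem_trivOn_top_of_iSup (h : IsBlocks ρ W σ) {q : Q} (hq : ∀ i, q ∈ trivOn ρ (W i)) :
    q ∈ trivOn ρ ⊤ := by
  intro w _
  have hw : w ∈ iSup W := h.iSup_eq ▸ Submodule.mem_top
  induction hw using Submodule.iSup_induction' with
  | mem i x hx => exact hq i x hx
  | zero => simp
  | add x y _ _ hx hy => rw [map_add, hx trivial, hy trivial]

/-- A group acting by a scalar on each of two subspaces is cyclic modulo the elements for which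
the two scalars agree. -/
theorem RSG_scal_pair [Finite Q] (ρ : Representation ℂ Q V) {W₁ W₂ : Submodule ℂ V}
    (h₁ : W₁ ≠ ⊥) (h₂ : W₂ ≠ ⊥) (K : Subgroup Q) (hK₁ : K ≤ scalOn ρ W₁) (hK₂ : K ≤ scalOn ρ W₂) :
    RSG K (scalOn ρ (W₁ ⊔ W₂)) 1 := by
  obtain ⟨v₁, hv₁, hv₁0⟩ := (Submodule.ne_bot_iff _).1 h₁
  obtain ⟨v₂, hv₂, hv₂0⟩ := (Submodule.ne_bot_iff _).1 h₂
  choose c hc hc' using fun q : K => hK₁ q.2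
  choose b hb hb' using fun q : K => hK₂ q.2
  have hcm : ∀ q r : K, c (q * r) = c q * c r := by
    intro q r
    apply smul_left_injective ℂ hv₁0
    simp only
    rw [← hc' _ _ hv₁, Subgroup.coe_mul, map_mul, Module.End.mul_apply, hc' _ _ hv₁, map_smul,
      hc' _ _ hv₁, smul_smul, mul_comm]
  have hbm : ∀ q r : K, b (q * r) = b q * b r := by
    intro q r
    apply smul_left_injective ℂ hv₂0
    simp only
    rw [← hb' _ _ hv₂, Subgroup.coe_mul, map_mul, Module.End.mul_apply, hb' _ _ hv₂, map_smul,
      hb' _ _ hv₂, smul_smul, mul_comm]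
  let χ : K →* ℂˣ := MonoidHom.mk' (fun q => Units.mk0 (c q / b q) (div_ne_zero (hc q) (hb q))) (by
    intro q r
    ext
    simp [hcm, hbm, mul_div_mul_comm])
  apply RSG.of_subtype
  have : Finite ((⊤ : Subgroup K).map χ) := Set.Finite.image χ (Set.toFinite _)
  have h := RSG.of_map (K := (⊤ : Subgroup K)) χ SG.units
  refine h.mono ?_ le_rfl
  intro q hq
  rw [Subgroup.mem_subgroupOf, mem_scalOn]
  have h1 : c q / b q = 1 := by
    have := congrArg Units.val (MonoidHom.mem_ker.1 hq)
    simpa [χ] using this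
  rw [div_eq_one_iff_eq (hb q)] at h1
  refine ⟨c q, hc q, fun w hw => ?_⟩
  obtain ⟨x, hx, y, hy, rfl⟩ := Submodule.mem_sup.1 hw
  rw [map_add, hc' q x hx, hb' q y hy, h1, smul_add]

theorem RSG_scal_triv [Finite Q] (ρ : Representation ℂ Q V) {W : Submodule ℂ V}
    (K : Subgroup Q) (hK : K ≤ scalOn ρ W) :
    RSG K (trivOn ρ W) 1 := by
  by_cases h₁ : W = ⊥
  · apply RSG.of_le
    intro q _ w hw
    rw [h₁, Submodule.mem_bot] at hw
    simp [hw]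
  obtain ⟨v₁, hv₁, hv₁0⟩ := (Submodule.ne_bot_iff _).1 h₁
  choose c hc hc' using fun q : K => hK q.2
  have hcm : ∀ q r : K, c (q * r) = c q * c r := by
    intro q r
    apply smul_left_injective ℂ hv₁0
    simp only
    rw [← hc' _ _ hv₁, Subgroup.coe_mul, map_mul, Module.End.mul_apply, hc' _ _ hv₁, map_smul,
      hc' _ _ hv₁, smul_smul, mul_comm]
  let χ : K →* ℂˣ := MonoidHom.mk' (fun q => Units.mk0 (c q) (hc q)) (by
    intro q r
    ext
    simp [hcm])
  apply RSG.of_subtype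
  have : Finite ((⊤ : Subgroup K).map χ) := Set.Finite.image χ (Set.toFinite _)
  have h := RSG.of_map (K := (⊤ : Subgroup K)) χ SG.units
  refine h.mono ?_ le_rfl
  intro q hq
  rw [Subgroup.mem_subgroupOf, mem_trivOn]
  have h1 : c q = 1 := by
    have := congrArg Units.val (MonoidHom.mem_ker.1 hq)
    simpa [χ] using this
  intro w hw
  rw [hc' q w hw, h1, one_smul]

/-- Groups acting by scalars on each block need one generator fewer than there are blocks, modulo
the scalars. -/
theorem IsBlocks.RSG_scal [Finite Q] {k : ℕ} {W : Fin (k + 1) → Submodule ℂ V}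
    {σ : Q →* Equiv.Perm (Fin (k + 1))} (h : IsBlocks ρ W σ) (K : Subgroup Q)
    (hK : ∀ i, K ≤ scalOn ρ (W i)) : RSG K (scalOn ρ ⊤) k := by
  have h1 := RSG.family Finset.univ K (fun i : Fin k => scalOn ρ (W 0 ⊔ W i.succ)) (fun _ => 1)
    (fun i _ L hL => RSG_scal_pair ρ (h.ne_bot _) (h.ne_bot _) L (hL.trans (hK _))
      (hL.trans (hK _))) le_rfl
  simp only [Finset.sum_const, Finset.card_univ, Fintype.card_fin, smul_eq_mul, mul_one] at h1
  have h2 : RSG (K ⊓ ⨅ i ∈ Finset.univ, scalOn ρ (W 0 ⊔ W (Fin.succ i))) (scalOn ρ ⊤) 0 := by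
    apply RSG.of_le
    intro q hq
    have hq2 : ∀ i : Fin k, q ∈ scalOn ρ (W 0 ⊔ W i.succ) := by
      have := hq.2
      simpa [Subgroup.mem_iInf] using this
    obtain ⟨c, hc, hcw⟩ := hK 0 hq.1
    obtain ⟨v, hv, hv0⟩ := (Submodule.ne_bot_iff _).1 (h.ne_bot 0)
    refine ⟨c, hc, fun w _ => ?_⟩
    have hw : w ∈ iSup W := h.iSup_eq ▸ Submodule.mem_top
    induction hw using Submodule.iSup_induction' with
    | mem i x hx =>
      refine Fin.cases (fun hx => hcw x hx) (fun j hx => ?_) i hx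
      obtain ⟨c', hc', hcw'⟩ := hq2 j
      have : c' = c := by
        apply smul_left_injective ℂ hv0
        simp only
        rw [← hcw v hv, ← hcw' v (Submodule.mem_sup_left hv)]
      rw [← this]
      exact hcw' x (Submodule.mem_sup_right hx)
    | zero => simp
    | add x y _ _ hx hy => rw [map_add, hx trivial, hy trivial, smul_add]
  exact h1.trans h2

end blocks

end GenBound

/-! ### Generators of linear groups of prime power order -/

namespace GenBound

universe u v

theorem SG_perm_pgroup {l k : ℕ} (hl : l.Prime) (R : Subgroup (Equiv.Perm (Fin (k + 1))))
    (hR : IsPGroup l R) : SG R (k / (l - 1)) := by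
  have := Fact.mk hl
  rw [← SG.top_iff]
  obtain ⟨j, hj⟩ := IsPGroup.iff_card.1 hR
  apply SG_of_card_log (t := l)
  · intro a ha
    rw [hj] at ha
    have h1 : a ≤ j := (Nat.pow_le_pow_iff_right hl.one_lt).1 ha
    have h2 : l ^ j ∣ (k + 1).factorial := by
      rw [← hj]
      have := Subgroup.card_subgroup_dvd_card R
      rwa [Nat.card_eq_fintype_card (α := Equiv.Perm (Fin (k + 1))), Fintype.card_perm,
        Fintype.card_fin] at this
    have h3 : j ≤ padicValNat l (k + 1).factorial :=
      (padicValNat_dvd_iff_le (Nat.factorial_ne_zero _)).1 h2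
    have h4 := sub_one_mul_padicValNat_factorial_lt_of_ne_zero l (n := k + 1) (by omega)
    rw [Nat.le_div_iff_mul_le (by have := hl.two_le; omega)]
    have : a * (l - 1) ≤ (l - 1) * padicValNat l (k + 1).factorial := by
      rw [mul_comm]; exact Nat.mul_le_mul_left _ (h1.trans h3)
    omega
  · intro b hb hbl hdvd
    rw [hj] at hdvd
    have := (Nat.prime_dvd_prime_iff_eq hb hl).1 (hb.dvd_of_dvd_pow hdvd)
    omega

theorem factorial_le_two_pow (k : ℕ) : k.factorial ≤ 2 ^ (k * (k - 1) / 2) := by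
  have h : ∀ n, n ≤ 2 ^ (n - 1) := by
    intro n
    rcases n with _ | n
    · simp
    · simpa using Nat.succ_le_of_lt Nat.lt_two_pow_self
  induction k with
  | zero => simp
  | succ k ih =>
    rw [Nat.factorial_succ, Nat.triangle_succ, pow_add, mul_comm]
    exact Nat.mul_le_mul ih (by simpa using h (k + 1))

theorem SG_perm {k : ℕ} (R : Subgroup (Equiv.Perm (Fin k))) : SG R (k * (k - 1) / 2) := by
  rw [← SG.top_iff]
  apply SG_log2
  have h1 : Nat.card R ≤ k.factorial := by
    have := Nat.le_of_dvd Nat.card_pos (Subgroup.card_subgroup_dvd_card R)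
    rwa [Nat.card_eq_fintype_card (α := Equiv.Perm (Fin k)), Fintype.card_perm,
        Fintype.card_fin] at this
  refine (h1.trans (factorial_le_two_pow k)).trans_lt ?_
  exact Nat.pow_lt_pow_right (by norm_num) (by omega)

section
variable {Q : Type u} [Group Q] {V : Type v} [AddCommGroup V] [Module ℂ V]

theorem scalOn_top_normal (ρ : Representation ℂ Q V) : (scalOn ρ ⊤).Normal := by
  constructor
  rintro x ⟨c, hc, h⟩ g
  refine ⟨c, hc, fun w _ => ?_⟩
  rw [map_mul, map_mul, Module.End.mul_apply, Module.End.mul_apply, h _ trivial, map_smul,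
    Representation.self_inv_apply]

theorem mem_scalOn_top_of_eq {ρ : Representation ℂ Q V} {x : Q} {c : ℂ}
    (h : ρ x = c • (1 : V →ₗ[ℂ] V)) : x ∈ scalOn ρ ⊤ := by
  by_cases hc : c = 0
  · refine ⟨1, one_ne_zero, fun w _ => ?_⟩
    have h0 : ∀ v, ρ x v = 0 := by intro v; rw [h, hc]; simp
    have hw : w = 0 := by rw [← Representation.inv_self_apply ρ x w, h0, map_zero]
    simp [hw]
  · exact ⟨c, hc, fun w _ => by rw [h]; simp⟩

theorem scalOn_subRep_le (ρ : Representation ℂ Q V) (K : Subgroup Q) (W : Submodule ℂ V)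
    (h : ∀ q ∈ K, ∀ w ∈ W, ρ q w ∈ W) :
    scalOn (subRep ρ K W h) ⊤ ≤ (scalOn ρ W).subgroupOf K := by
  rintro q ⟨c, hc, hw⟩
  refine ⟨c, hc, fun w hw' => ?_⟩
  have := congrArg Subtype.val (hw ⟨w, hw'⟩ trivial)
  simpa [subRep_apply] using this

theorem trivOn_subRep_le (ρ : Representation ℂ Q V) (K : Subgroup Q) (W : Submodule ℂ V)
    (h : ∀ q ∈ K, ∀ w ∈ W, ρ q w ∈ W) :
    trivOn (subRep ρ K W h) ⊤ ≤ (trivOn ρ W).subgroupOf K := by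
  intro q hw w hw'
  have := congrArg Subtype.val (hw ⟨w, hw'⟩ trivial)
  simpa [subRep_apply] using this

end

/-- Modulo scalars, an `l`-group of `n × n` matrices needs at most
`n - 1 + (n - 1) / (l - 1)` generators. An element `x` central modulo scalars has eigenspaces
permuted by the group, which serve as blocks for an induction on the dimension. -/
theorem RSG_pgroup {l : ℕ} (hl : l.Prime) : ∀ (n : ℕ) (Q : Type u) [Group Q] [Finite Q]
    (V : Type v) [AddCommGroup V] [Module ℂ V] [FiniteDimensional ℂ V] (ρ : Representation ℂ Q V),
    Module.finrank ℂ V = n → IsPGroup l Q →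
    RSG (⊤ : Subgroup Q) (scalOn ρ ⊤) (n - 1 + (n - 1) / (l - 1)) := by
  intro n
  induction n using Nat.strong_induction_on with
  | _ n ih =>
  intro Q _ _ V _ _ _ ρ hn hQ
  have := Fact.mk hl
  have hnorm := scalOn_top_normal ρ
  by_cases hS : scalOn ρ ⊤ = ⊤
  · exact RSG.of_le hS.ge _
  have hnt : Nontrivial (Q ⧸ scalOn ρ ⊤) := by
    rwa [← not_subsingleton_iff_nontrivial, QuotientGroup.subsingleton_iff]
  have hcnt := (hQ.to_quotient (scalOn ρ ⊤)).center_nontrivial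
  obtain ⟨⟨x', hx'⟩, hx1⟩ := exists_ne (1 : Subgroup.center (Q ⧸ scalOn ρ ⊤))
  obtain ⟨x, rfl⟩ := QuotientGroup.mk_surjective x'
  have hxS : x ∉ scalOn ρ ⊤ := by
    intro h
    apply hx1
    ext
    exact (QuotientGroup.eq_one_iff x).2 h
  obtain ⟨k, hk2, W, σ, hB⟩ := exists_blocks ρ {x} (by
      intro a ha b hb
      rw [Set.mem_singleton_iff.1 ha, Set.mem_singleton_iff.1 hb]) (by
      rintro q a ha
      rw [Set.mem_singleton_iff.1 ha]
      have h1 : (QuotientGroup.mk x : Q ⧸ scalOn ρ ⊤) = QuotientGroup.mk (q⁻¹ * x * q) := by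
        rw [QuotientGroup.mk_mul, QuotientGroup.mk_mul, mul_assoc,
          ← Subgroup.mem_center_iff.1 hx' (QuotientGroup.mk q), ← mul_assoc]
        simp
      obtain ⟨c, hc, h⟩ := QuotientGroup.eq.1 h1
      refine ⟨x, rfl, c, ?_⟩
      ext v
      have h2 : q⁻¹ * x * q = x * (x⁻¹ * (q⁻¹ * x * q)) := by group
      rw [h2, map_mul, Module.End.mul_apply, h v trivial, map_smul]
      rfl) ⟨x, rfl, fun c hc => hxS (mem_scalOn_top_of_eq hc)⟩
  obtain ⟨k, rfl⟩ : ∃ j, k = j + 1 := ⟨k - 1, by omega⟩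
  have hsum := hB.sum_finrank
  rw [hn] at hsum
  have hpos := hB.finrank_pos
  have hlt : ∀ i, Module.finrank ℂ (W i) < n := by
    intro i
    obtain ⟨j, hj⟩ : ∃ j, j ≠ i := by
      have : Nontrivial (Fin (k + 1)) := Fin.nontrivial_iff_two_le.2 hk2
      exact exists_ne i
    have := Finset.add_le_sum (f := fun i => Module.finrank ℂ (W i)) (s := Finset.univ)
      (fun _ _ => Nat.zero_le _) (Finset.mem_univ j) (Finset.mem_univ i) hj
    have := hpos j
    omega
  have h1 : RSG ⊤ σ.ker (k / (l - 1)) := RSG.of_map σ (SG_perm_pgroup hl _ (by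
    exact (hQ.to_subgroup ⊤).map σ))
  have h2 := RSG.family Finset.univ σ.ker (fun i => scalOn ρ (W i))
    (fun i => Module.finrank ℂ (W i) - 1 + (Module.finrank ℂ (W i) - 1) / (l - 1)) (by
      intro i _ K hK
      have hst : ∀ q ∈ K, ∀ w ∈ W i, ρ q w ∈ W i := fun q hq w hw => hB.stab (hK hq) i hw
      apply RSG.of_subtype
      exact (ih _ (hlt i) K (W i) (subRep ρ K (W i) hst) rfl (hQ.to_subgroup K)).mono
        (scalOn_subRep_le ρ K (W i) hst) le_rfl) le_rfl
  have h3 := hB.RSG_scal (σ.ker ⊓ ⨅ i ∈ Finset.univ, scalOn ρ (W i)) (by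
    intro i
    refine inf_le_right.trans ?_
    exact iInf₂_le i (Finset.mem_univ i))
  have h4 := h1.trans (N' := scalOn ρ ⊤) (by rw [top_inf_eq]; exact h2.trans h3)
  refine h4.mono le_rfl ?_
  have hs1 : ∑ i, (Module.finrank ℂ (W i) - 1) + (k + 1) = n := by
    rw [← hsum]
    have : ∑ i, Module.finrank ℂ (W i) = ∑ i, ((Module.finrank ℂ (W i) - 1) + 1) :=
      Finset.sum_congr rfl fun i _ => by have := hpos i; omega
    rw [this, Finset.sum_add_distrib]
    simp
  have hs2 : ∑ i, (Module.finrank ℂ (W i) - 1) / (l - 1) ≤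
      (∑ i, (Module.finrank ℂ (W i) - 1)) / (l - 1) := by
    generalize (Finset.univ : Finset (Fin (k + 1))) = s
    classical
    induction s using Finset.induction_on with
    | empty => simp
    | insert a s ha ih' =>
      rw [Finset.sum_insert ha, Finset.sum_insert ha]
      exact (Nat.add_le_add_left ih' _).trans (Nat.div_add_div_le_add_div)
  rw [Finset.sum_add_distrib]
  have hs3 : k / (l - 1) + (∑ i, (Module.finrank ℂ (W i) - 1)) / (l - 1) ≤ (n - 1) / (l - 1) := by
    refine (Nat.div_add_div_le_add_div).trans (Nat.div_le_div_right ?_)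
    omega
  omega

end GenBound

/-! ### Eigenvalue spread in finite unitary groups -/

namespace GenBound

section commute
variable {E : Type*} [NormedAddCommGroup E] [InnerProductSpace ℂ E] [FiniteDimensional ℂ E]

/-- The norm of a normal operator is attained by an eigenvalue. -/
theorem exists_eigenvalue_norm [Nontrivial E] (a : E →L[ℂ] E) (ha : IsStarNormal a) :
    ∃ (v : E) (μ : ℂ), v ≠ 0 ∧ a v = μ • v ∧ ‖μ‖ = ‖a‖ := by
  obtain ⟨μ, hμ, hμ'⟩ := spectrum.exists_nnnorm_eq_spectralRadius a
  rw [IsStarNormal.spectralRadius_eq_nnnorm a] at hμ'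
  have h1 : ¬ Function.Injective ((algebraMap ℂ (E →L[ℂ] E) μ - a : E →L[ℂ] E) : E →ₗ[ℂ] E) := by
    intro hinj
    apply hμ
    set b : E →L[ℂ] E := algebraMap ℂ (E →L[ℂ] E) μ - a
    let e := LinearEquiv.ofInjectiveEndo (b : E →ₗ[ℂ] E) hinj
    let c : E →L[ℂ] E := LinearMap.toContinuousLinearMap (e.symm : E →ₗ[ℂ] E)
    refine ⟨⟨b, c, ?_, ?_⟩, rfl⟩
    · ext x
      exact e.apply_symm_apply x
    · ext x
      exact e.symm_apply_apply x
  rw [← LinearMap.ker_eq_bot] at h1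
  obtain ⟨v, hv, hv0⟩ := (Submodule.ne_bot_iff _).1 h1
  refine ⟨v, μ, hv0, ?_, ?_⟩
  · have : μ • v - a v = 0 := by simpa [Algebra.algebraMap_eq_smul_one] using hv
    exact (sub_eq_zero.1 this).symm
  · have h2 : ‖μ‖₊ = ‖a‖₊ := by exact_mod_cast hμ'
    exact congrArg NNReal.toReal h2

variable {T : Type*} [Group T] (u : T →* unitary (E →L[ℂ] E))

theorem norm_u (t : T) (v : E) : ‖(u t : E →L[ℂ] E) v‖ = ‖v‖ :=
  (Unitary.linearIsometryEquiv (u t)).norm_map v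

theorem inner_u (t : T) (v w : E) :
    inner ℂ ((u t : E →L[ℂ] E) v) ((u t : E →L[ℂ] E) w) = inner ℂ v w :=
  (Unitary.linearIsometryEquiv (u t)).inner_map_map v w

theorem u_mul_apply (s t : T) (v : E) :
    (u (s * t) : E →L[ℂ] E) v = (u s : E →L[ℂ] E) ((u t : E →L[ℂ] E) v) := by
  rw [map_mul]; rfl

theorem u_inv_apply (t : T) (v : E) : (u t⁻¹ : E →L[ℂ] E) ((u t : E →L[ℂ] E) v) = v := by
  rw [← u_mul_apply, inv_mul_cancel, map_one]; rfl

theorem u_apply_inv (t : T) (v : E) : (u t : E →L[ℂ] E) ((u t⁻¹ : E →L[ℂ] E) v) = v := by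
  rw [← u_mul_apply, mul_inv_cancel, map_one]; rfl

theorem norm_eigenvalue {t : T} {v : E} {μ : ℂ} (hv : v ≠ 0) (h : (u t : E →L[ℂ] E) v = μ • v) :
    ‖μ‖ = 1 := by
  have := norm_u u t v
  rw [h, norm_smul] at this
  exact mul_right_cancel₀ (norm_ne_zero_iff.2 hv) (by rw [this, one_mul])

/-- The iterated commutators `k ↦ k⁻¹ g k g⁻¹` starting from `h`. -/
def iterComm (g h : T) : ℕ → T
  | 0 => h
  | j + 1 => (iterComm g h j)⁻¹ * g * iterComm g h j * g⁻¹

/-- A conjugate `h` of an element `g` whose eigenvalues are close together preserves the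
eigenspaces of `g`: the iterated commutators contract to the identity on an eigenspace, hence fix
it eventually, and one can go back down the sequence. -/
theorem conj_preserves [Finite T] {g h x : T} (hx : h = x * g * x⁻¹) {l : ℂ} (hl1 : ‖l‖ = 1)
    (hl : ‖(u g : E →L[ℂ] E) - l • (1 : E →L[ℂ] E)‖ < 1) {v : E}
    (hv : (u g : E →L[ℂ] E) v = l • v) :
    (u g : E →L[ℂ] E) ((u h : E →L[ℂ] E) v) = l • (u h : E →L[ℂ] E) v := by
  set q := ‖(u g : E →L[ℂ] E) - l • (1 : E →L[ℂ] E)‖ with hq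
  have hq0 : 0 ≤ q := norm_nonneg _
  have hl0 : l ≠ 0 := by rintro rfl; simp at hl1
  have hqle : ∀ w : E, ‖(u g : E →L[ℂ] E) w - l • w‖ ≤ q * ‖w‖ := by
    intro w
    have := ((u g : E →L[ℂ] E) - l • (1 : E →L[ℂ] E)).le_opNorm w
    simpa using this
  have hinv : ∀ w : E, (u g : E →L[ℂ] E) w = l • w → (u g⁻¹ : E →L[ℂ] E) w = l⁻¹ • w := by
    intro w hw
    have : w = l⁻¹ • (u g : E →L[ℂ] E) w := by rw [hw, smul_smul, inv_mul_cancel₀ hl0, one_smul]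
    conv_lhs => rw [this]
    rw [map_smul, u_inv_apply]
  set k := iterComm g h with hk
  have hstep : ∀ j w, (u g : E →L[ℂ] E) w = l • w →
      (u (k (j + 1)) : E →L[ℂ] E) w =
        (u (k j)⁻¹ : E →L[ℂ] E) ((u g : E →L[ℂ] E) (l⁻¹ • (u (k j) : E →L[ℂ] E) w)) := by
    intro j w hw
    have : k (j + 1) = (k j)⁻¹ * g * k j * g⁻¹ := rfl
    rw [this, u_mul_apply, u_mul_apply, u_mul_apply, hinv w hw]
    simp only [map_smul]
  -- the sequence starts from the scaled operator `l⁻¹ h`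
  let c : ℕ → ℂ := fun j => if j = 0 then l else 1
  have hc1 : ∀ j, ‖c j‖ = 1 := by intro j; simp only [c]; split_ifs <;> simp [hl1]
  have hd : ∀ j w, (u g : E →L[ℂ] E) w = l • w →
      ‖(u (k j) : E →L[ℂ] E) w - c j • w‖ ≤ q ^ (j + 1) * ‖w‖ := by
    intro j
    induction j with
    | zero =>
      intro w _
      have h1 : (u (k 0) : E →L[ℂ] E) w - c 0 • w =
          (u x : E →L[ℂ] E) ((u g : E →L[ℂ] E) ((u x⁻¹ : E →L[ℂ] E) w) -
            l • (u x⁻¹ : E →L[ℂ] E) w) := by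
        have : k 0 = x * g * x⁻¹ := hx
        rw [this, u_mul_apply, u_mul_apply, map_sub, map_smul, u_apply_inv]
        simp [c]
      rw [h1, norm_u]
      have := hqle ((u x⁻¹ : E →L[ℂ] E) w)
      rwa [norm_u, ← pow_one q] at this
    | succ j ih =>
      intro w hw
      have h1 : (u (k (j + 1)) : E →L[ℂ] E) w - c (j + 1) • w =
          l⁻¹ • (u (k j)⁻¹ : E →L[ℂ] E) ((u g : E →L[ℂ] E) ((u (k j) : E →L[ℂ] E) w - c j • w) -
            l • ((u (k j) : E →L[ℂ] E) w - c j • w)) := by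
        rw [hstep j w hw]
        have : (u g : E →L[ℂ] E) ((u (k j) : E →L[ℂ] E) w - c j • w) -
            l • ((u (k j) : E →L[ℂ] E) w - c j • w) =
            (u g : E →L[ℂ] E) ((u (k j) : E →L[ℂ] E) w) - l • (u (k j) : E →L[ℂ] E) w := by
          rw [map_sub, map_smul, hw, smul_sub, smul_comm l (c j) w]
          abel
        rw [this, map_sub, map_smul, map_smul, map_smul, smul_sub, smul_smul, u_inv_apply,
          inv_mul_cancel₀ hl0]
        simp [c]
      rw [h1, norm_smul, norm_inv, hl1, inv_one, one_mul, norm_u]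
      refine (hqle _).trans ?_
      rw [pow_succ' q (j + 1), mul_assoc]
      exact mul_le_mul_of_nonneg_left (ih w hw) hq0
  -- some `k j` with `j ≥ 1` occurs for infinitely many indices, so it fixes the eigenspace
  obtain ⟨t, ht⟩ : ∃ t, (k ⁻¹' {t}).Infinite := by
    obtain ⟨t, ht⟩ := Finite.exists_infinite_fiber k
    exact ⟨t, Set.infinite_coe_iff.1 ht⟩
  have hfix : ∀ w, (u g : E →L[ℂ] E) w = l • w → (u t : E →L[ℂ] E) w = w := by
    intro w hw
    have h1 : ∀ N : ℕ, ‖(u t : E →L[ℂ] E) w - w‖ ≤ q ^ N * ‖w‖ := by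
      intro N
      obtain ⟨j, hj, hNj⟩ := ht.exists_gt N
      have h2 := hd j w hw
      rw [show k j = t from hj] at h2
      have h3 : c j = 1 := by simp only [c]; rw [if_neg (by omega)]
      rw [h3, one_smul] at h2
      refine h2.trans (mul_le_mul_of_nonneg_right ?_ (norm_nonneg _))
      exact pow_le_pow_of_le_one hq0 hl.le (by omega)
    have h2 : Filter.Tendsto (fun N => q ^ N * ‖w‖) Filter.atTop (nhds (0 * ‖w‖)) :=
      (tendsto_pow_atTop_nhds_zero_of_lt_one hq0 hl).mul_const _
    rw [zero_mul] at h2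
    have h3 := ge_of_tendsto' h2 h1
    exact sub_eq_zero.1 (norm_le_zero_iff.1 h3)
  obtain ⟨J, hJ⟩ := ht.nonempty
  have hdown : ∀ j ≤ J, ∀ w, (u g : E →L[ℂ] E) w = l • w →
      (u g : E →L[ℂ] E) ((u (k (J - j)) : E →L[ℂ] E) w) = l • (u (k (J - j)) : E →L[ℂ] E) w := by
    intro j
    induction j with
    | zero =>
      intro _ w hw
      rw [Nat.sub_zero, show k J = t from hJ, hfix w hw, hw]
    | succ j ih =>
      intro hj w hw
      have hJj : J - j = J - (j + 1) + 1 := by omega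
      set i := J - (j + 1) with hi
      have ih' := ih (by omega)
      rw [hJj] at ih'
      by_contra hne
      -- the vector `w' = (g - l) k w` lies in `k E_l` and is orthogonal to `E_l`
      set w' := (u g : E →L[ℂ] E) ((u (k i) : E →L[ℂ] E) w) - l • (u (k i) : E →L[ℂ] E) w with hw'
      have hw'0 : w' ≠ 0 := sub_ne_zero.2 hne
      have h1 : (u g : E →L[ℂ] E) ((u (k i) : E →L[ℂ] E) w) =
          (u (k i) : E →L[ℂ] E) (l • (u (k (i + 1)) : E →L[ℂ] E) w) := by
        rw [hstep i w hw, map_smul, u_apply_inv, map_smul, smul_smul, mul_inv_cancel₀ hl0, one_smul]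
      set z := l • (u (k (i + 1)) : E →L[ℂ] E) w - l • w with hz
      have hzE : (u g : E →L[ℂ] E) z = l • z := by
        rw [hz, map_sub, map_smul, map_smul, ih' w hw, hw, smul_sub]
      have hwz : w' = (u (k i) : E →L[ℂ] E) z := by
        rw [hw', h1, hz, map_sub, map_smul _ l w]
      have hz0 : z ≠ 0 := by
        intro h0; apply hw'0; rw [hwz, h0, map_zero]
      have horth : inner ℂ z w' = 0 := by
        rw [hw', inner_sub_right, inner_smul_right]
        have h2 := inner_u u g z ((u (k i) : E →L[ℂ] E) w)
        rw [hzE, inner_smul_left] at h2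
        have h3 : (starRingEnd ℂ) l * l = 1 := by
          rw [mul_comm, Complex.mul_conj, Complex.normSq_eq_norm_sq, hl1]; simp
        have h4 : l * ((starRingEnd ℂ) l * inner ℂ z ((u g : E →L[ℂ] E)
            ((u (k i) : E →L[ℂ] E) w))) = l * inner ℂ z ((u (k i) : E →L[ℂ] E) w) := by rw [h2]
        rw [← mul_assoc, mul_comm l, h3, one_mul] at h4
        rw [h4, sub_self]
      have h5 := hd i z hzE
      rw [← hwz] at h5
      have h6 : ‖w' - c i • z‖ ≤ ‖z‖ := h5.trans (by
        have : q ^ (i + 1) ≤ 1 := pow_le_one₀ hq0 hl.le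
        nlinarith [norm_nonneg z])
      have h7 : ‖w' - c i • z‖ * ‖w' - c i • z‖ = ‖w'‖ * ‖w'‖ + ‖c i • z‖ * ‖c i • z‖ := by
        have h8 := norm_sub_mul_self (𝕜 := ℂ) (x := w') (y := c i • z)
        rw [inner_smul_right, ← inner_conj_symm, horth] at h8
        simpa using h8
      rw [norm_smul, hc1, one_mul, hwz, norm_u, ← hwz] at h7
      have hzpos : 0 < ‖z‖ := norm_pos_iff.2 hz0
      nlinarith [norm_nonneg (w' - c i • z)]
  have := hdown J le_rfl v hv
  rw [Nat.sub_self] at this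
  exact this

end commute

end GenBound

namespace GenBound

section spread
variable {E : Type*} [NormedAddCommGroup E] [InnerProductSpace ℂ E] [FiniteDimensional ℂ E]
variable {T : Type*} [Group T] (u : T →* unitary (E →L[ℂ] E))

/-- The representation underlying a homomorphism to the unitary group. -/
noncomputable def uRep : Representation ℂ T E where
  toFun t := ((u t : E →L[ℂ] E) : E →ₗ[ℂ] E)
  map_one' := by rw [map_one]; rfl
  map_mul' a b := by rw [map_mul]; rfl

theorem uRep_apply (t : T) (v : E) : uRep u t v = (u t : E →L[ℂ] E) v := rfl

theorem commute_conj [Finite T] {g : T} (hcl : ∀ (l : ℂ) (v : E), v ≠ 0 →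
    (u g : E →L[ℂ] E) v = l • v → ‖(u g : E →L[ℂ] E) - l • (1 : E →L[ℂ] E)‖ < 1) (x : T) :
    uRep u g * uRep u (x * g * x⁻¹) = uRep u (x * g * x⁻¹) * uRep u g := by
  have hsup : ⨆ l, Module.End.eigenspace (uRep u g) l = ⊤ := by
    have h1 : (fun l => Module.End.eigenspace (uRep u g) l) = fun l => Module.End.maxGenEigenspace (uRep u g) l := by
      funext l
      rw [((semisimple_rep (uRep u) g).isFinitelySemisimple).maxGenEigenspace_eq_eigenspace]
    rw [h1]
    exact Module.End.iSup_maxGenEigenspace_eq_top _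
  have key : (⊤ : Submodule ℂ E) ≤ LinearMap.ker (uRep u g * uRep u (x * g * x⁻¹) -
      uRep u (x * g * x⁻¹) * uRep u g) := by
    rw [← hsup]
    refine iSup_le fun l v hv => ?_
    rw [Module.End.mem_eigenspace_iff] at hv
    rw [LinearMap.mem_ker, LinearMap.sub_apply, Module.End.mul_apply, Module.End.mul_apply, hv]
    by_cases hv0 : v = 0
    · simp [hv0]
    have h1 := conj_preserves u (g := g) (h := x * g * x⁻¹) (x := x) rfl
      (norm_eigenvalue u hv0 hv) (hcl l v hv0 hv) hv
    rw [map_smul, uRep_apply, uRep_apply, h1, sub_self]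
  have h2 : uRep u g * uRep u (x * g * x⁻¹) - uRep u (x * g * x⁻¹) * uRep u g = 0 :=
    LinearMap.ker_eq_top.1 (top_le_iff.1 key)
  exact sub_eq_zero.1 h2

theorem unitary_sub_isStarNormal (t : unitary (E →L[ℂ] E)) (l : ℂ) :
    IsStarNormal ((t : E →L[ℂ] E) - l • (1 : E →L[ℂ] E)) := by
  constructor
  have h1 : star (t : E →L[ℂ] E) * (t : E →L[ℂ] E) = 1 := Unitary.coe_star_mul_self t
  have h2 : (t : E →L[ℂ] E) * star (t : E →L[ℂ] E) = 1 := Unitary.coe_mul_star_self t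
  simp only [Commute, SemiconjBy, star_sub, star_smul, star_one, sub_mul, mul_sub, h1, h2,
    smul_mul_assoc, mul_smul_comm, one_mul, mul_one]
  rw [smul_sub, smul_sub, smul_comm l (star l)]
  abel

/-- In a group without blocks of imprimitivity every nonscalar element has two eigenvalues at
distance at least `1`; otherwise its conjugates commute and their common eigenspaces are blocks. -/
theorem eig_spread [Finite T]
    (hnb : ∀ (k : ℕ), 2 ≤ k → ∀ (W : Fin k → Submodule ℂ E) (σ : T →* Equiv.Perm (Fin k)),
      ¬ IsBlocks (uRep u) W σ) {g : T} (hg : g ∉ scalOn (uRep u) ⊤) :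
    ∃ (l m : ℂ) (v w : E), v ≠ 0 ∧ w ≠ 0 ∧ (u g : E →L[ℂ] E) v = l • v ∧
      (u g : E →L[ℂ] E) w = m • w ∧ 1 ≤ ‖l - m‖ := by
  have hns : ∀ c : ℂ, uRep u g ≠ c • (1 : E →ₗ[ℂ] E) := by
    intro c hc
    apply hg
    by_cases hE : Subsingleton E
    · exact ⟨1, one_ne_zero, fun w _ => Subsingleton.elim _ _⟩
    rw [not_subsingleton_iff_nontrivial] at hE
    refine ⟨c, ?_, fun w _ => by rw [hc]; rfl⟩
    rintro rfl
    obtain ⟨v, hv⟩ := exists_ne (0 : E)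
    have h1 := norm_u u g v
    rw [← uRep_apply, hc] at h1
    exact hv (norm_eq_zero.1 (by simpa using h1.symm))
  have hnt : Nontrivial E := by
    by_contra hE
    rw [not_nontrivial_iff_subsingleton] at hE
    exact hns 1 (LinearMap.ext fun v => Subsingleton.elim _ _)
  by_cases hcl : ∀ (l : ℂ) (v : E), v ≠ 0 →
    (u g : E →L[ℂ] E) v = l • v → ‖(u g : E →L[ℂ] E) - l • (1 : E →L[ℂ] E)‖ < 1
  · exfalso
    obtain ⟨k, hk, W, σ, h⟩ := exists_blocks (uRep u) {a | ∃ x, a = x * g * x⁻¹} (by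
        rintro _ ⟨x, rfl⟩ _ ⟨y, rfl⟩
        have h1 := commute_conj u hcl (x⁻¹ * y)
        have e1 : x * g * x⁻¹ * (y * g * y⁻¹) =
          x * (g * (x⁻¹ * y * g * (x⁻¹ * y)⁻¹)) * x⁻¹ := by group
        have e2 : y * g * y⁻¹ * (x * g * x⁻¹) =
          x * (x⁻¹ * y * g * (x⁻¹ * y)⁻¹ * g) * x⁻¹ := by group
        rw [← map_mul, ← map_mul, e1, e2, map_mul, map_mul _ x, map_mul _ g, h1, ← map_mul _ _ g,
          ← map_mul, ← map_mul])
      (by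
        rintro q _ ⟨x, rfl⟩
        refine ⟨q⁻¹ * (x * g * x⁻¹) * q, ⟨q⁻¹ * x, by group⟩, 1, by rw [one_smul]⟩)
      ⟨g, ⟨1, by group⟩, hns⟩
    exact hnb k hk W σ h
  · push Not at hcl
    obtain ⟨l, v, hv0, hv, hl⟩ := hcl
    obtain ⟨w, μ, hw0, hw, hμ⟩ := exists_eigenvalue_norm _ (unitary_sub_isStarNormal (u g) l)
    refine ⟨l, l + μ, v, w, hv0, hw0, hv, ?_, ?_⟩
    · have : (u g : E →L[ℂ] E) w - l • w = μ • w := by simpa using hw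
      rw [add_smul, ← this]; abel
    · rw [sub_add_cancel_left, norm_neg, hμ]; exact hl

/-- A point of the unit circle is at distance at least `√(2 - √3)` from one of two points of the
circle at distance at least `1` from each other. -/
theorem circle_sep {l m c : ℂ} (hl : ‖l‖ = 1) (hm : ‖m‖ = 1) (hc : ‖c‖ = 1) (h : 1 ≤ ‖l - m‖) :
    2 - √3 ≤ ‖l - c‖ ^ 2 ∨ 2 - √3 ≤ ‖m - c‖ ^ 2 := by
  by_contra! hcon
  obtain ⟨h1, h2⟩ := hcon
  have hsq : √3 ^ 2 = 3 := Real.sq_sqrt (by norm_num)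
  have h3 : 0 < √3 := by positivity
  have hl' : l.re ^ 2 + l.im ^ 2 = 1 := by
    have := Complex.sq_norm l; rw [hl, Complex.normSq_apply] at this; linarith
  have hm' : m.re ^ 2 + m.im ^ 2 = 1 := by
    have := Complex.sq_norm m; rw [hm, Complex.normSq_apply] at this; linarith
  have hc' : c.re ^ 2 + c.im ^ 2 = 1 := by
    have := Complex.sq_norm c; rw [hc, Complex.normSq_apply] at this; linarith
  rw [Complex.sq_norm, Complex.normSq_apply, Complex.sub_re, Complex.sub_im] at h1 h2
  have h' : 1 ≤ ‖l - m‖ ^ 2 := by nlinarith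
  rw [Complex.sq_norm, Complex.normSq_apply, Complex.sub_re, Complex.sub_im] at h'
  -- the inner products with `c` exceed `√3 / 2`, the inner product of `l` and `m` is at most `1/2`
  set a := l.re * c.re + l.im * c.im
  set b := m.re * c.re + m.im * c.im
  set a' := l.re * c.im - l.im * c.re
  set b' := m.re * c.im - m.im * c.re
  have ha : √3 / 2 < a := by simp only [a]; nlinarith
  have hb : √3 / 2 < b := by simp only [b]; nlinarith
  have haa : a ^ 2 + a' ^ 2 = 1 := by
    have : a ^ 2 + a' ^ 2 = (l.re ^ 2 + l.im ^ 2) * (c.re ^ 2 + c.im ^ 2) := by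
      simp only [a, a']; ring
    rw [this, hl', hc', one_mul]
  have hbb : b ^ 2 + b' ^ 2 = 1 := by
    have : b ^ 2 + b' ^ 2 = (m.re ^ 2 + m.im ^ 2) * (c.re ^ 2 + c.im ^ 2) := by
      simp only [b, b']; ring
    rw [this, hm', hc', one_mul]
  have hab : a * b + a' * b' ≤ 1 / 2 := by
    have : a * b + a' * b' = (l.re * m.re + l.im * m.im) * (c.re ^ 2 + c.im ^ 2) := by
      simp only [a, a', b, b']; ring
    rw [this, hc']; nlinarith
  have h34 : √3 / 2 * (√3 / 2) = 3 / 4 := by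
    have : √3 / 2 * (√3 / 2) = √3 ^ 2 / 4 := by ring
    rw [this, hsq]
  have h0 : 0 ≤ √3 / 2 := by positivity
  have h4 : 3 / 4 < a * b := h34 ▸ mul_lt_mul'' ha hb h0 h0
  have h5 : 3 / 4 < a * a := h34 ▸ mul_lt_mul'' ha ha h0 h0
  have h6 : 3 / 4 < b * b := h34 ▸ mul_lt_mul'' hb hb h0 h0
  have h7 := sq_nonneg (a' + b')
  clear_value a b a' b'
  have h8 : (a' + b') ^ 2 = a' ^ 2 + b' ^ 2 + 2 * (a' * b') := by ring
  have h9 : a ^ 2 = a * a := sq a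
  have h10 : b ^ 2 = b * b := sq b
  linarith

/-- Elements of different scalar cosets are far apart, even after rescaling. -/
theorem coset_sep [Finite T]
    (hnb : ∀ (k : ℕ), 2 ≤ k → ∀ (W : Fin k → Submodule ℂ E) (σ : T →* Equiv.Perm (Fin k)),
      ¬ IsBlocks (uRep u) W σ) {g h : T} (hgh : h⁻¹ * g ∉ scalOn (uRep u) ⊤) {c : ℂ}
    (hc : ‖c‖ = 1) :
    √(2 - √3) ≤ ‖(u g : E →L[ℂ] E) - c • (u h : E →L[ℂ] E)‖ := by
  obtain ⟨l, m, v, w, hv0, hw0, hv, hw, hlm⟩ := eig_spread u hnb hgh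
  have key : ∀ (l : ℂ) (v : E), v ≠ 0 → (u (h⁻¹ * g) : E →L[ℂ] E) v = l • v →
      2 - √3 ≤ ‖l - c‖ ^ 2 → √(2 - √3) ≤ ‖(u g : E →L[ℂ] E) - c • (u h : E →L[ℂ] E)‖ := by
    intro l v hv0 hv hl
    refine (Real.sqrt_le_sqrt hl).trans ?_
    rw [Real.sqrt_sq (norm_nonneg _)]
    have h1 := ((u g : E →L[ℂ] E) - c • (u h : E →L[ℂ] E)).le_opNorm v
    have h2 : ((u g : E →L[ℂ] E) - c • (u h : E →L[ℂ] E)) v =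
        (u h : E →L[ℂ] E) ((l - c) • v) := by
      have : g = h * (h⁻¹ * g) := by group
      rw [sub_apply, this, u_mul_apply, hv, smul_apply,
        ← map_smul, ← map_sub, sub_smul]
    rw [h2, norm_u, norm_smul] at h1
    exact le_of_mul_le_mul_right h1 (norm_pos_iff.2 hv0)
  rcases circle_sep (norm_eigenvalue u hv0 hv) (norm_eigenvalue u hw0 hw) hc hlm with h1 | h1
  · exact key l v hv0 hv h1
  · exact key m w hw0 hw h1

end spread

end GenBound

/-! ### Packing bound for finite unitary groups without blocks -/

namespace GenBound

/-- A separated finite family in a ball of a finite-dimensional normed space is small: balls of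
half the separation radius are disjoint. -/
theorem packing {F : Type*} [NormedAddCommGroup F] [NormedSpace ℝ F] [FiniteDimensional ℝ F]
    {ι : Type*} (s : Finset ι) (f : ι → F) {r R : ℝ} (hr : 0 < r) (hR : 0 ≤ R)
    (hs : ∀ c ∈ s, ‖f c‖ ≤ R) (h : ∀ c ∈ s, ∀ d ∈ s, c ≠ d → r ≤ ‖f c - f d‖) :
    (s.card : ℝ) ≤ (1 + 2 * R / r) ^ Module.finrank ℝ F := by
  borelize F
  let μ : MeasureTheory.Measure F := MeasureTheory.Measure.addHaar
  set δ : ℝ := r / 2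
  set ρ : ℝ := R + r / 2
  have δpos : 0 < δ := by positivity
  have ρpos : 0 < ρ := by positivity
  set A := ⋃ c ∈ s, Metric.ball (f c) δ with hA
  have D : Set.Pairwise (s : Set ι) (Function.onFun Disjoint fun c => Metric.ball (f c) δ) := by
    rintro c hc d hd hcd
    apply Metric.ball_disjoint_ball
    rw [dist_eq_norm]
    have := h c hc d hd hcd
    simp only [δ]; linarith
  have A_subset : A ⊆ Metric.ball (0 : F) ρ := by
    refine Set.iUnion₂_subset fun x hx => ?_
    apply Metric.ball_subset_ball'
    rw [dist_zero_right]
    have := hs x hx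
    simp only [δ, ρ]; linarith
  have I : (s.card : ENNReal) * ENNReal.ofReal (δ ^ Module.finrank ℝ F) * μ (Metric.ball 0 1) ≤
      ENNReal.ofReal (ρ ^ Module.finrank ℝ F) * μ (Metric.ball 0 1) :=
    calc
      (s.card : ENNReal) * ENNReal.ofReal (δ ^ Module.finrank ℝ F) * μ (Metric.ball 0 1) = μ A := by
        rw [hA, MeasureTheory.measure_biUnion_finset D fun c _ => measurableSet_ball]
        simp only [μ.addHaar_ball_of_pos _ δpos]
        simp only [Finset.sum_const, nsmul_eq_mul, mul_assoc]
      _ ≤ μ (Metric.ball (0 : F) ρ) := MeasureTheory.measure_mono A_subset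
      _ = ENNReal.ofReal (ρ ^ Module.finrank ℝ F) * μ (Metric.ball 0 1) := by
        simp only [μ.addHaar_ball_of_pos _ ρpos]
  have J : (s.card : ENNReal) * ENNReal.ofReal (δ ^ Module.finrank ℝ F) ≤
      ENNReal.ofReal (ρ ^ Module.finrank ℝ F) :=
    (ENNReal.mul_le_mul_iff_left (Metric.measure_ball_pos _ _ zero_lt_one).ne'
      MeasureTheory.measure_ball_lt_top.ne).1 I
  have K := ENNReal.toReal_le_of_le_ofReal (pow_nonneg ρpos.le _) J
  rw [ENNReal.toReal_mul, ENNReal.toReal_natCast,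
    ENNReal.toReal_ofReal (pow_nonneg δpos.le _)] at K
  have h1 : 1 + 2 * R / r = ρ / δ := by
    simp only [ρ, δ]; field_simp; ring
  rw [h1, div_pow, le_div_iff₀ (pow_pos δpos _)]
  exact K

/-- A set of at most `n` points on the unit circle leaves an open arc of length `2π / n` free. -/
theorem exists_gap {n : ℕ} (S : Finset ℂ) (hS : ∀ z ∈ S, ‖z‖ = 1) (hne : S.Nonempty)
    (hc : S.card ≤ n) :
    ∃ w : ℂ, ‖w‖ = 1 ∧ ∀ z ∈ S, (z * (starRingEnd ℂ) w).re ≤ Real.cos (Real.pi / n) := by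
  classical
  have hn : 0 < n := hne.card_pos.trans_le hc
  have hn' : (0 : ℝ) < n := by exact_mod_cast hn
  have hpi := Real.pi_pos
  obtain ⟨z₀, hz₀⟩ := hne
  have hz₀1 := hS z₀ hz₀
  have hz₀0 : z₀ ≠ 0 := by rintro rfl; simp at hz₀1
  have hθ : ∀ z : ℂ, ∃ θ : ℝ, 0 ≤ θ ∧ θ < 2 * Real.pi ∧
      (‖z‖ = 1 → z = z₀ * Complex.exp (θ * Complex.I)) := by
    intro z
    refine ⟨toIcoMod Real.two_pi_pos 0 (z / z₀).arg,
      (toIcoMod_mem_Ico Real.two_pi_pos 0 _).1, ?_, ?_⟩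
    · simpa using (toIcoMod_mem_Ico Real.two_pi_pos 0 (z / z₀).arg).2
    · intro hz
      have h1 : ‖z / z₀‖ = 1 := by rw [norm_div, hz, hz₀1, div_one]
      have h2 := Complex.norm_mul_exp_arg_mul_I (z / z₀)
      rw [h1, Complex.ofReal_one, one_mul] at h2
      have h3 : Complex.exp ((toIcoMod Real.two_pi_pos 0 (z / z₀).arg : ℝ) * Complex.I) =
          Complex.exp ((z / z₀).arg * Complex.I) := by
        rw [Complex.exp_eq_exp_iff_exists_int]
        refine ⟨-toIcoDiv Real.two_pi_pos 0 (z / z₀).arg, ?_⟩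
        rw [toIcoMod]
        push_cast
        simp only [zsmul_eq_mul]
        ring
      rw [h3, h2, mul_div_cancel₀ _ hz₀0]
  choose θ hθ0 hθ2 hθz using hθ
  let f : ℂ → ℕ := fun z => ⌊n * θ z / (2 * Real.pi)⌋₊
  obtain ⟨i, hi, hif⟩ : ∃ i ∈ Finset.range n, i ∉ (S.erase z₀).image f := by
    apply Finset.exists_mem_notMem_of_card_lt_card
    refine Finset.card_image_le.trans_lt ?_
    rw [Finset.card_range]
    exact (Finset.card_erase_lt_of_mem hz₀).trans_le hc
  have hi' : (i : ℝ) + 1 ≤ n := by exact_mod_cast Finset.mem_range.1 hi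
  have hi0 : (0 : ℝ) ≤ i := by positivity
  set φ : ℝ := Real.pi * (2 * i + 1) / n with hφ
  have hφn : φ * n = Real.pi * (2 * i + 1) := by rw [hφ]; field_simp
  set q : ℝ := Real.pi / n with hq
  have hqn : q * n = Real.pi := by rw [hq]; field_simp
  have hqpos : 0 < q := by positivity
  have hφq : φ = q * (2 * i + 1) := by rw [hφ, hq]; ring
  refine ⟨z₀ * Complex.exp (φ * Complex.I), by
    rw [norm_mul, hz₀1, Complex.norm_exp_ofReal_mul_I, one_mul], fun z hz => ?_⟩
  have hcos : (z * (starRingEnd ℂ) (z₀ * Complex.exp (φ * Complex.I))).re =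
      Real.cos (θ z - φ) := by
    have h1 : z₀ * (starRingEnd ℂ) z₀ = 1 := by
      rw [Complex.mul_conj, Complex.normSq_eq_norm_sq, hz₀1]; simp
    conv_lhs => rw [hθz z (hS z hz)]
    rw [map_mul, ← Complex.exp_conj, map_mul, Complex.conj_ofReal, Complex.conj_I]
    have h2 : z₀ * Complex.exp (θ z * Complex.I) *
        ((starRingEnd ℂ) z₀ * Complex.exp (φ * -Complex.I)) =
        Complex.exp ((θ z - φ : ℝ) * Complex.I) := by
      have : z₀ * Complex.exp (θ z * Complex.I) *
        ((starRingEnd ℂ) z₀ * Complex.exp (φ * -Complex.I)) = z₀ * (starRingEnd ℂ) z₀ *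
        (Complex.exp (θ z * Complex.I) * Complex.exp (φ * -Complex.I)) := by ring
      rw [this, h1, one_mul, ← Complex.exp_add]
      congr 1; push_cast; ring
    rw [h2, Complex.exp_ofReal_mul_I_re]
  rw [hcos]
  -- the angle of `z` avoids the open interval of radius `π / n` around `φ`
  have hout : θ z ≤ φ - q ∨ φ + q ≤ θ z := by
    by_cases hzz : z = z₀
    · left
      have h1 : Complex.exp (θ z * Complex.I) = 1 := by
        have := hθz z (hS z hz)
        rw [hzz] at this ⊢
        exact (mul_left_cancel₀ hz₀0 ((mul_one z₀).trans this)).symm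
      rw [Complex.exp_eq_one_iff] at h1
      obtain ⟨k, hk⟩ := h1
      have hk' : θ z = k * (2 * Real.pi) := by
        have := congrArg Complex.im hk
        simpa using this
      have h2 : (k : ℝ) < 1 := by
        by_contra hcon
        push Not at hcon
        have := hθ2 z
        nlinarith
      have h3 : k ≤ 0 := by exact_mod_cast Int.lt_add_one_iff.1 (by exact_mod_cast h2)
      have h4 : (k : ℝ) ≤ 0 := by exact_mod_cast h3
      have : θ z ≤ 0 := by rw [hk']; nlinarith
      rw [hφq]; nlinarith
    · have h1 : f z ≠ i := fun h => hif (Finset.mem_image.2 ⟨z, Finset.mem_erase.2 ⟨hzz, hz⟩, h⟩)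
      have h2 : n * θ z / (2 * Real.pi) = θ z / (2 * q) := by
        rw [hq]; field_simp
      have h0 : 0 ≤ θ z / (2 * q) := div_nonneg (hθ0 z) (by positivity)
      rcases lt_or_gt_of_ne h1 with h | h
      · left
        simp only [f, h2] at h
        rw [Nat.floor_lt h0, div_lt_iff₀ (by positivity)] at h
        rw [hφq]; linarith
      · right
        simp only [f, h2] at h
        have h3 : ((i + 1 : ℕ) : ℝ) ≤ θ z / (2 * q) := (Nat.le_floor_iff h0).1 h
        rw [le_div_iff₀ (by positivity)] at h3
        push_cast at h3
        rw [hφq]; linarith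
  have hq_le : q ≤ Real.pi := by nlinarith
  have habs : ∀ x : ℝ, q ≤ x → x ≤ 2 * Real.pi - q → Real.cos x ≤ Real.cos q := by
    intro x h1 h2
    by_cases hx : x ≤ Real.pi
    · exact Real.cos_le_cos_of_nonneg_of_le_pi hqpos.le hx h1
    · rw [← Real.cos_two_pi_sub x]
      exact Real.cos_le_cos_of_nonneg_of_le_pi hqpos.le (by linarith) (by linarith)
  rcases hout with h | h
  · rw [← Real.cos_neg]
    apply habs
    · linarith
    · have := hθ0 z
      nlinarith
  · apply habs
    · linarith
    · have := hθ2 z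
      nlinarith

section cstar
variable {A : Type*} [CStarAlgebra A]

open NormedSpace in
/-- The exponential `X ↦ exp (i X)` is `1`-Lipschitz on self-adjoint elements. -/
theorem norm_expUnitary_sub_le (X Y : selfAdjoint A) :
    ‖(selfAdjoint.expUnitary X : A) - (selfAdjoint.expUnitary Y : A)‖ ≤ ‖(X : A) - (Y : A)‖ := by
  nontriviality A
  set x : A := Complex.I • (X : A)
  set y : A := Complex.I • (Y : A)
  have hu : ∀ (Z : selfAdjoint A) (t : ℝ), ‖exp (t • (Complex.I • (Z : A)))‖ ≤ 1 := by
    intro Z t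
    have h1 : exp (t • (Complex.I • (Z : A))) = (selfAdjoint.expUnitary (t • Z) : A) := by
      rw [selfAdjoint.expUnitary_coe, selfAdjoint.val_smul, smul_comm]
    rw [h1]
    exact (CStarRing.norm_coe_unitary _).le
  let f : ℝ → A := fun t => exp (t • x) * exp ((1 - t) • y)
  let f' : ℝ → A := fun t => exp (t • x) * (x - y) * exp ((1 - t) • y)
  have hf : ∀ t, HasDerivAt f (f' t) t := by
    intro t
    have h1 := hasDerivAt_exp_smul_const (𝕂 := ℝ) x t
    have h2 := hasDerivAt_exp_smul_const' (𝕂 := ℝ) y (1 - t)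
    have h3 := HasDerivAt.scomp t h2 ((hasDerivAt_id t).const_sub 1)
    have h4 := h1.mul h3
    convert! h4 using 1
    simp only [f', Function.comp]
    rw [mul_sub, sub_mul, neg_one_smul, mul_neg, ← sub_eq_add_neg]
    simp only [mul_assoc]
  have hb : ∀ t ∈ Set.Ico (0 : ℝ) 1, ‖f' t‖ ≤ ‖(X : A) - (Y : A)‖ := by
    intro t _
    have h1 : ‖x - y‖ = ‖(X : A) - (Y : A)‖ := by
      rw [← smul_sub, norm_smul, Complex.norm_I, one_mul]
    calc ‖f' t‖ ≤ ‖exp (t • x)‖ * ‖x - y‖ * ‖exp ((1 - t) • y)‖ := by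
          refine (norm_mul_le _ _).trans ?_
          gcongr
          exact norm_mul_le _ _
      _ ≤ 1 * ‖x - y‖ * 1 := by
          gcongr
          · exact hu X t
          · exact hu Y (1 - t)
      _ = ‖(X : A) - (Y : A)‖ := by rw [one_mul, mul_one, h1]
  have := norm_image_sub_le_of_norm_deriv_le_segment_01' (f := f) (f' := f')
    (fun t _ => (hf t).hasDerivWithinAt) hb
  simpa [f, x, y] using this

/-- The real dimension of the self-adjoint part is at most the complex dimension. -/
theorem finrank_selfAdjoint_le [FiniteDimensional ℂ A] :
    Module.finrank ℝ (selfAdjoint.submodule ℝ A) ≤ Module.finrank ℂ A := by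
  have : FiniteDimensional ℝ A := FiniteDimensional.complexToReal A
  let S := selfAdjoint.submodule ℝ A
  let L : S × S →ₗ[ℝ] A :=
    { toFun := fun z => (z.1 : A) + Complex.I • (z.2 : A)
      map_add' := by intro a b; simp; abel
      map_smul' := by intro c a; simp [smul_comm c Complex.I] }
  have hL : Function.Injective L := by
    rw [← LinearMap.ker_eq_bot, LinearMap.ker_eq_bot']
    rintro ⟨a, b⟩ h
    have h1 : (a : A) + Complex.I • (b : A) = 0 := h
    have ha : star (a : A) = a := a.2
    have hb : star (b : A) = b := b.2
    have h2 : (a : A) - Complex.I • (b : A) = 0 := by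
      have := congrArg star h1
      rw [star_add, star_smul, ha, hb, star_zero] at this
      simpa [← sub_eq_add_neg] using this
    have h3 : (2 : ℝ) • (a : A) = 0 := by
      rw [two_smul]
      calc (a : A) + a = (a + Complex.I • (b : A)) + (a - Complex.I • (b : A)) := by abel
        _ = 0 := by rw [h1, h2, add_zero]
    have h4 : (a : A) = 0 := (smul_eq_zero.1 h3).resolve_left two_ne_zero
    have h5 : (b : A) = 0 := by
      rw [h4, zero_add] at h1
      exact (smul_eq_zero.1 h1).resolve_left Complex.I_ne_zero
    exact Prod.ext (Subtype.ext h4) (Subtype.ext h5)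
  have h1 := LinearMap.finrank_le_finrank_of_injective hL
  rw [Module.finrank_prod, finrank_real_of_complex] at h1
  change Module.finrank ℝ S ≤ _
  omega

end cstar

end GenBound

namespace GenBound

section index
variable {E : Type*} [NormedAddCommGroup E] [InnerProductSpace ℂ E] [FiniteDimensional ℂ E]

/-- Every unitary operator has, after rescaling, a logarithm of norm at most `π (1 - 1 / n)`. -/
theorem exists_log [Nontrivial E] (g : unitary (E →L[ℂ] E)) :
    ∃ (X : selfAdjoint (E →L[ℂ] E)) (c : ℂ), ‖c‖ = 1 ∧
      ‖(X : E →L[ℂ] E)‖ ≤ Real.pi * (1 - 1 / Module.finrank ℂ E) ∧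
      (selfAdjoint.expUnitary X : E →L[ℂ] E) = c • (g : E →L[ℂ] E) := by
  classical
  have hpi := Real.pi_pos
  set n := Module.finrank ℂ E
  have hn : 0 < n := Module.finrank_pos
  have hn' : (1 : ℝ) ≤ n := by exact_mod_cast hn
  let L : Module.End ℂ E := ((g : E →L[ℂ] E) : E →ₗ[ℂ] E)
  let S := L.charpoly.roots.toFinset
  have hmem : ∀ z, z ∈ S ↔ L.HasEigenvalue z := by
    intro z
    rw [Multiset.mem_toFinset, Polynomial.mem_roots L.charpoly_monic.ne_zero,
      Module.End.hasEigenvalue_iff_isRoot_charpoly]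
  have hS1 : ∀ z ∈ S, ‖z‖ = 1 := by
    intro z hz
    obtain ⟨v, hv⟩ := ((hmem z).1 hz).exists_hasEigenvector
    have h1 : (g : E →L[ℂ] E) v = z • v := hv.apply_eq_smul
    have h2 : ‖(g : E →L[ℂ] E) v‖ = ‖v‖ := (Unitary.linearIsometryEquiv g).norm_map v
    rw [h1, norm_smul] at h2
    exact mul_right_cancel₀ (norm_ne_zero_iff.2 hv.2) (by rw [h2, one_mul])
  have hSne : S.Nonempty := by
    obtain ⟨z, hz⟩ := Module.End.exists_eigenvalue L
    exact ⟨z, (hmem z).2 hz⟩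
  have hSc : S.card ≤ n := by
    refine (Multiset.toFinset_card_le _).trans ((Polynomial.card_roots' _).trans ?_)
    rw [LinearMap.charpoly_natDegree]
  obtain ⟨w, hw1, hw⟩ := exists_gap S hS1 hSne hSc
  let c : ℂ := -(starRingEnd ℂ) w
  have hc1 : ‖c‖ = 1 := by simp [c, hw1]
  have hcu : c ∈ unitary ℂ := by
    rw [Unitary.mem_iff_self_mul_star, Complex.star_def, Complex.mul_conj,
      Complex.normSq_eq_norm_sq, hc1]
    simp
  let g' : unitary (E →L[ℂ] E) := ⟨c • (g : E →L[ℂ] E), Unitary.smul_mem_of_mem hcu g.2⟩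
  have hnorm : ‖((g' : E →L[ℂ] E) - 1)‖ ^ 2 ≤ 2 + 2 * Real.cos (Real.pi / n) := by
    have h0 := unitary_sub_isStarNormal g' 1
    rw [one_smul] at h0
    obtain ⟨v, μ, hv0, hv, hμ⟩ := exists_eigenvalue_norm _ h0
    rw [← hμ]
    have hc0 : c ≠ 0 := by rintro h; simp [h] at hc1
    have h1 : c • (g : E →L[ℂ] E) v - v = μ • v := by simpa [g'] using hv
    have h2 : (g : E →L[ℂ] E) v = (c⁻¹ * (1 + μ)) • v := by
      have : c • (g : E →L[ℂ] E) v = (1 + μ) • v := by rw [add_smul, one_smul, ← h1]; abel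
      rw [mul_smul, ← this, smul_smul, inv_mul_cancel₀ hc0, one_smul]
    set z := c⁻¹ * (1 + μ) with hz
    have hzS : z ∈ S := by
      rw [hmem]
      exact Module.End.hasEigenvalue_of_hasEigenvector ⟨Module.End.mem_eigenspace_iff.2 h2, hv0⟩
    have hμz : μ = -(z * (starRingEnd ℂ) w) - 1 := by
      have h3 : z * c = 1 + μ := by rw [hz]; field_simp
      have h4 : z * c = -(z * (starRingEnd ℂ) w) := by simp [c]
      rw [← h4, h3]; ring
    have h5 : ‖z * (starRingEnd ℂ) w‖ = 1 := by simp [hS1 z hzS, hw1]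
    have h6 := hw z hzS
    set y := z * (starRingEnd ℂ) w
    have h7 : y.re ^ 2 + y.im ^ 2 = 1 := by
      have := Complex.sq_norm y; rw [h5, Complex.normSq_apply] at this; linarith
    rw [hμz, Complex.sq_norm, Complex.normSq_apply]
    simp only [Complex.sub_re, Complex.neg_re, Complex.one_re, Complex.sub_im, Complex.neg_im,
      Complex.one_im]
    nlinarith
  have hq0 : 0 < Real.pi / n := by positivity
  have hq1 : Real.pi / n ≤ Real.pi := div_le_self hpi.le hn'
  have hcoslt : Real.cos (Real.pi / n) < 1 := by
    rw [← Real.cos_zero]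
    exact Real.cos_lt_cos_of_nonneg_of_le_pi le_rfl hq1 hq0
  have hlt : ‖((g' : E →L[ℂ] E) - 1)‖ < 2 := by
    have := norm_nonneg ((g' : E →L[ℂ] E) - 1)
    nlinarith
  refine ⟨Unitary.argSelfAdjoint g', c, hc1, ?_, ?_⟩
  · have h1 := Unitary.norm_argSelfAdjoint hlt
    have h2 : ‖(Unitary.argSelfAdjoint g' : E →L[ℂ] E)‖ = ‖Unitary.argSelfAdjoint g'‖ := rfl
    rw [h2, h1]
    have h3 : Real.pi * (1 - 1 / n) = Real.arccos (-Real.cos (Real.pi / n)) := by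
      rw [Real.arccos_neg, Real.arccos_cos hq0.le hq1]; ring
    rw [h3]
    apply Real.arccos_le_arccos
    linarith
  · rw [expUnitary_argSelfAdjoint hlt]

variable {T : Type*} [Group T] [Finite T] (u : T →* unitary (E →L[ℂ] E))

/-- A finite unitary group without blocks has few cosets modulo scalars: logarithms of coset
representatives form a separated family in the self-adjoint operators modulo real scalars. -/
theorem index_bound [Nontrivial E]
    (hnb : ∀ (k : ℕ), 2 ≤ k → ∀ (W : Fin k → Submodule ℂ E) (σ : T →* Equiv.Perm (Fin k)),
      ¬ IsBlocks (uRep u) W σ) :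
    ((scalOn (uRep u) ⊤).index : ℝ) ≤
      (1 + 2 * (Real.pi * (1 - 1 / Module.finrank ℂ E)) / √(2 - √3)) ^
        (Module.finrank ℂ E ^ 2 - 1) := by
  classical
  have hpi := Real.pi_pos
  set n := Module.finrank ℂ E with hn_def
  have hn : 0 < n := Module.finrank_pos
  have hn' : (1 : ℝ) ≤ n := by exact_mod_cast hn
  set R : ℝ := Real.pi * (1 - 1 / n) with hR
  have hR0 : 0 ≤ R := mul_nonneg hpi.le (sub_nonneg.2 ((div_le_one (by linarith)).2 hn'))
  have hr : 0 < √(2 - √3) := by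
    apply Real.sqrt_pos.2
    have : √3 < 2 := by rw [Real.sqrt_lt' (by norm_num)]; norm_num
    linarith
  set A := E →L[ℂ] E with hA
  have : FiniteDimensional ℂ A := inferInstance
  have : FiniteDimensional ℝ A := FiniteDimensional.complexToReal A
  let S := selfAdjoint.submodule ℝ A
  let one : S := ⟨1, IsSelfAdjoint.one A⟩
  let N : Submodule ℝ S := Submodule.span ℝ {one}
  have hNclosed : IsClosed (N : Set S) := Submodule.closed_of_finiteDimensional N
  have hdim : Module.finrank ℝ (S ⧸ N) ≤ n ^ 2 - 1 := by
    have h1 : Module.finrank ℝ N = 1 := by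
      apply finrank_span_singleton
      intro h
      exact one_ne_zero (α := A) (congrArg Subtype.val h)
    have h2 := Submodule.finrank_quotient_add_finrank N
    have h3 : Module.finrank ℝ S ≤ Module.finrank ℂ A := finrank_selfAdjoint_le
    have h4 : Module.finrank ℂ A = n ^ 2 := by
      rw [(LinearMap.toContinuousLinearMap (𝕜 := ℂ) (E := E) (F' := E)).symm.finrank_eq,
        Module.finrank_linearMap, sq]
    omega
  choose X c hc hX hexp using fun g : T => exists_log (u g)
  let Y : T → S := fun g => ⟨X g, (X g).2⟩
  let : Fintype (T ⧸ scalOn (uRep u) ⊤) := Fintype.ofFinite _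
  have hmain := packing (F := S ⧸ N) (Finset.univ : Finset (T ⧸ scalOn (uRep u) ⊤))
    (fun q => N.mkQ (Y q.out)) hr hR0 (fun q _ => by
      refine (Submodule.Quotient.norm_mk_le N _).trans ?_
      exact hX q.out) (fun q _ q' _ hqq => by
      rw [← map_sub]
      have hns : (q'.out)⁻¹ * q.out ∉ scalOn (uRep u) ⊤ := by
        intro h
        apply hqq
        rw [← QuotientGroup.out_eq' q, ← QuotientGroup.out_eq' q']
        exact (QuotientGroup.eq.2 h).symm
      refine le_of_forall_pos_le_add fun ε hε => ?_
      obtain ⟨Z, hZ, hZn⟩ := Submodule.Quotient.norm_mk_lt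
        (N.mkQ (Y q.out - Y q'.out)) hε
      refine le_trans ?_ hZn.le
      have hZ' : Z - (Y q.out - Y q'.out) ∈ N := (Submodule.Quotient.eq N).1 hZ
      obtain ⟨t, ht⟩ := Submodule.mem_span_singleton.1 hZ'
      have hZe : (Z : A) = (X q.out : A) -
          ((X q'.out - t • (1 : selfAdjoint A) : selfAdjoint A) : A) := by
        have h1 : Z = Y q.out - Y q'.out + t • one := by rw [ht]; abel
        have h2 := congrArg (Subtype.val) h1
        rw [h2]
        simp [Y, one]
        abel
      have h3 := norm_expUnitary_sub_le (X q.out) (X q'.out - t • (1 : selfAdjoint A))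
      rw [← hZe] at h3
      refine le_trans ?_ h3
      have h4 : (selfAdjoint.expUnitary (X q'.out - t • (1 : selfAdjoint A)) : A) =
          (Complex.exp (-t * Complex.I) * c q'.out) • (u q'.out : A) := by
        have hcomm : Commute ((X q'.out : selfAdjoint A) : A)
            ((-(t • (1 : selfAdjoint A)) : selfAdjoint A) : A) := by
          have : ((-(t • (1 : selfAdjoint A)) : selfAdjoint A) : A) = (-t) • (1 : A) := by simp
          rw [this]
          exact (Commute.one_right _).smul_right _
        rw [sub_eq_add_neg, hcomm.expUnitary_add, Submonoid.coe_mul, hexp]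
        have h5 : (selfAdjoint.expUnitary (-(t • (1 : selfAdjoint A))) : A) =
            Complex.exp (-t * Complex.I) • (1 : A) := by
          rw [selfAdjoint.expUnitary_coe]
          have h6 : Complex.I • ((-(t • (1 : selfAdjoint A)) : selfAdjoint A) : A) =
              algebraMap ℂ A (-t * Complex.I) := by
            rw [Algebra.algebraMap_eq_smul_one]
            simp [mul_comm, mul_smul]
          rw [h6, ← NormedSpace.algebraMap_exp_comm, Algebra.algebraMap_eq_smul_one,
            Complex.exp_eq_exp_ℂ]
        rw [h5, mul_smul_comm, mul_one, smul_smul]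
      rw [h4, hexp]
      have hc0 : c q.out ≠ 0 := by
        intro h
        have := hc q.out
        rw [h, norm_zero] at this
        exact zero_ne_one this
      have h7 : c q.out • (u q.out : A) - (Complex.exp (-t * Complex.I) * c q'.out) •
          (u q'.out : A) = c q.out • ((u q.out : A) -
            ((c q.out)⁻¹ * (Complex.exp (-t * Complex.I) * c q'.out)) • (u q'.out : A)) := by
        rw [smul_sub, smul_smul, ← mul_assoc, mul_inv_cancel₀ hc0, one_mul]
      rw [h7, norm_smul, hc, one_mul]
      apply coset_sep u hnb hns
      have : ‖Complex.exp (-t * Complex.I)‖ = 1 := by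
        have := Complex.norm_exp_ofReal_mul_I (-t)
        simpa using this
      rw [norm_mul, norm_mul, norm_inv, hc, hc, this]
      simp)
  rw [Subgroup.index, Nat.card_eq_fintype_card, ← Finset.card_univ]
  refine hmain.trans ?_
  apply pow_le_pow_right₀ _ hdim
  have : 0 ≤ 2 * R / √(2 - √3) := by positivity
  linarith

end index

end GenBound

namespace GenBound

section unitarize
variable {V : Type*} [AddCommGroup V] [Module ℂ V]
variable {T : Type*} [Group T]

theorem IsBlocks.comap_equiv {E : Type*} [AddCommGroup E] [Module ℂ E] {ρ : Representation ℂ T V}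
    {ρ' : Representation ℂ T E} (e : V ≃ₗ[ℂ] E) (he : ∀ t v, ρ' t (e v) = e (ρ t v)) {k : ℕ}
    {W : Fin k → Submodule ℂ E} {σ : T →* Equiv.Perm (Fin k)} (h : IsBlocks ρ' W σ) :
    IsBlocks ρ (fun i => (Submodule.orderIsoMapComap e).symm (W i)) σ where
  ne_bot i := by
    intro h1
    exact h.ne_bot i ((map_eq_bot_iff _).1 h1)
  indep := h.indep.map_orderIso _
  iSup_eq := by rw [← OrderIso.map_iSup, h.iSup_eq, OrderIso.map_top]
  map_mem := by
    intro q i w hw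
    have hw' : e w ∈ W i := hw
    change e (ρ q w) ∈ W (σ q i)
    rw [← he]
    exact h.map_mem q i _ hw'

variable [FiniteDimensional ℂ V] [Finite T]

/-- Weyl's unitary trick: embed `V` isometrically in the sum of its translates. -/
theorem exists_unitary (ρ : Representation ℂ T V) :
    ∃ (m : ℕ) (e : V ≃ₗ[ℂ] EuclideanSpace ℂ (Fin m))
      (u : T →* unitary (EuclideanSpace ℂ (Fin m) →L[ℂ] EuclideanSpace ℂ (Fin m))),
      ∀ t v, uRep u t (e v) = e (ρ t v) := by
  classical
  let b := Module.finBasis ℂ V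
  let n := Module.finrank ℂ V
  let ι := T × Fin n
  let : Fintype T := Fintype.ofFinite T
  let κ : ι ≃ Fin (Fintype.card ι) := Fintype.equivFin ι
  let Φ : V →ₗ[ℂ] EuclideanSpace ℂ (Fin (Fintype.card ι)) :=
    { toFun := fun v => WithLp.toLp 2 fun j => b.repr (ρ (κ.symm j).1 v) (κ.symm j).2
      map_add' := by intro v w; ext j; simp
      map_smul' := by intro c v; ext j; simp }
  have hΦ : ∀ v t i, Φ v (κ (t, i)) = b.repr (ρ t v) i := by
    intro v t i
    change b.repr (ρ (κ.symm (κ (t, i))).1 v) (κ.symm (κ (t, i))).2 = _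
    rw [Equiv.symm_apply_apply]
  have hinj : Function.Injective Φ := by
    rw [← LinearMap.ker_eq_bot, LinearMap.ker_eq_bot']
    intro v hv
    apply b.repr.injective
    ext i
    have := hΦ v 1 i
    rw [hv] at this
    simpa using this.symm
  have hnorm : ∀ v, ‖Φ v‖ ^ 2 = ∑ t, ∑ i, ‖b.repr (ρ t v) i‖ ^ 2 := by
    intro v
    rw [EuclideanSpace.norm_sq_eq, ← Equiv.sum_comp κ, Fintype.sum_prod_type]
    simp only [hΦ]
    rfl
  have hiso : ∀ t v, ‖Φ (ρ t v)‖ = ‖Φ v‖ := by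
    intro t v
    rw [← sq_eq_sq₀ (norm_nonneg _) (norm_nonneg _), hnorm, hnorm]
    rw [← Equiv.sum_comp (Equiv.mulRight t) (fun g => ∑ i, ‖b.repr (ρ g v) i‖ ^ 2)]
    simp
  let E₀ := LinearMap.range Φ
  let e₀ : V ≃ₗ[ℂ] E₀ := LinearEquiv.ofInjective Φ hinj
  let E := EuclideanSpace ℂ (Fin (Module.finrank ℂ E₀))
  let r : E₀ ≃ₗᵢ[ℂ] E := (stdOrthonormalBasis ℂ E₀).repr
  let e : V ≃ₗ[ℂ] E := e₀.trans r.toLinearEquiv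
  have hen : ∀ v, ‖e v‖ = ‖Φ v‖ := fun v => r.norm_map (e₀ v)
  have hle : ∀ g h : T, ρ g ∘ₗ ρ h = ρ (g * h) := fun g h => (map_mul ρ g h).symm
  let le : T → (V ≃ₗ[ℂ] V) := fun t => LinearEquiv.ofLinearMap (ρ t) (ρ t⁻¹)
    (by rw [hle, mul_inv_cancel, map_one]; rfl) (by rw [hle, inv_mul_cancel, map_one]; rfl)
  let iso : T →* (E ≃ₗᵢ[ℂ] E) :=
    { toFun := fun t =>
        { toLinearEquiv := (e.symm.trans (le t)).trans e
          norm_map' := by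
            intro x
            obtain ⟨v, rfl⟩ := e.surjective x
            change ‖e (ρ t (e.symm (e v)))‖ = ‖e v‖
            rw [LinearEquiv.symm_apply_apply]
            rw [hen, hen, hiso] }
      map_one' := by
        ext1 x
        change e (ρ 1 (e.symm x)) = x
        rw [map_one]; simp
      map_mul' := by
        intro g h
        ext1 x
        change e (ρ (g * h) (e.symm x)) = e (ρ g (e.symm (e (ρ h (e.symm x)))))
        rw [map_mul, LinearEquiv.symm_apply_apply]; rfl }
  refine ⟨_, e, (Unitary.linearIsometryEquiv (𝕜 := ℂ) (H := E)).symm.toMonoidHom.comp iso, ?_⟩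
  intro t v
  change e (ρ t (e.symm (e v))) = _
  rw [LinearEquiv.symm_apply_apply]

theorem index_bound_rep [Nontrivial V] (ρ : Representation ℂ T V)
    (hnb : ∀ (k : ℕ), 2 ≤ k → ∀ (W : Fin k → Submodule ℂ V) (σ : T →* Equiv.Perm (Fin k)),
      ¬ IsBlocks ρ W σ) :
    ((scalOn ρ ⊤).index : ℝ) ≤
      (1 + 2 * (Real.pi * (1 - 1 / Module.finrank ℂ V)) / √(2 - √3)) ^
        (Module.finrank ℂ V ^ 2 - 1) := by
  obtain ⟨m, e, u, he⟩ := exists_unitary ρ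
  have hnt : Nontrivial (EuclideanSpace ℂ (Fin m)) := e.symm.toEquiv.nontrivial
  have h1 : scalOn ρ ⊤ = scalOn (uRep u) ⊤ := by
    ext t
    constructor
    · rintro ⟨c, hc, h⟩
      refine ⟨c, hc, fun w _ => ?_⟩
      obtain ⟨v, rfl⟩ := e.surjective w
      rw [he, h v trivial, map_smul]
    · rintro ⟨c, hc, h⟩
      refine ⟨c, hc, fun v _ => ?_⟩
      apply e.injective
      rw [← he, h _ trivial, map_smul]
  rw [h1, e.finrank_eq]
  exact index_bound u fun k hk W σ h => hnb k hk _ σ (h.comap_equiv e he)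

/-- Numerical form of the bound, with `12.17 > 2π / √(2 - √3)`. -/
theorem index_bound_num [Nontrivial V] (ρ : Representation ℂ T V)
    (hnb : ∀ (k : ℕ), 2 ≤ k → ∀ (W : Fin k → Submodule ℂ V) (σ : T →* Equiv.Perm (Fin k)),
      ¬ IsBlocks ρ W σ) :
    ((scalOn ρ ⊤).index : ℝ) ≤
      (1 + 12.17 * (1 - 1 / Module.finrank ℂ V)) ^ (Module.finrank ℂ V ^ 2 - 1) := by
  refine (index_bound_rep ρ hnb).trans ?_
  have hn : (1 : ℝ) ≤ Module.finrank ℂ V := by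
    exact_mod_cast (Module.finrank_pos : 0 < Module.finrank ℂ V)
  set x : ℝ := 1 - 1 / Module.finrank ℂ V
  have hx : 0 ≤ x := sub_nonneg.2 ((div_le_one (by linarith)).2 hn)
  have hr : (0.517 : ℝ) ≤ √(2 - √3) := by
    apply Real.le_sqrt_of_sq_le
    have : √3 ≤ 1.7321 := by rw [Real.sqrt_le_left (by norm_num)]; norm_num
    norm_num; linarith
  have hpi := Real.pi_lt_d4
  have hpi0 := Real.pi_pos
  apply pow_le_pow_left₀ (by positivity)
  have : 2 * (Real.pi * x) / √(2 - √3) ≤ 12.17 * x := by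
    rw [div_le_iff₀ (by linarith)]
    nlinarith
  linarith

end unitarize

end GenBound

/-! ### Generators of finite complex linear groups -/

namespace GenBound

universe u v

/-- The bound on the number of generators of a finite complex linear group of degree `n`. -/
def cgen (n : ℕ) : ℕ :=
  if n = 0 then 0 else if n = 1 then 1 else if n = 2 then 8 else if n = 3 then 18
  else if n = 4 then 32 else (3 * n ^ 2 + 5 * n) / 2

theorem cgen_of_five_le {n : ℕ} (hn : 5 ≤ n) : 2 * cgen n = 3 * n ^ 2 + 5 * n := by
  unfold cgen
  rw [if_neg (by omega), if_neg (by omega), if_neg (by omega), if_neg (by omega),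
    if_neg (by omega)]
  apply Nat.mul_div_cancel'
  obtain ⟨c, rfl | rfl⟩ := Nat.even_or_odd' n
  · exact ⟨6 * c ^ 2 + 5 * c, by ring⟩
  · exact ⟨6 * c ^ 2 + 11 * c + 4, by ring⟩

theorem two_cgen_le (n : ℕ) : 2 * cgen n ≤ 3 * n ^ 2 + 5 * n := by
  rcases lt_or_ge n 5 with h | h
  · interval_cases n <;> simp [cgen]
  · exact (cgen_of_five_le h).le

theorem cgen_le (n : ℕ) : cgen n ≤ 2 * n ^ 2 := by
  rcases lt_or_ge n 5 with h | h
  · interval_cases n <;> simp [cgen]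
  · have := cgen_of_five_le h
    nlinarith

theorem cgen_add {a b : ℕ} (ha : 1 ≤ a) (hb : 1 ≤ b) :
    cgen a + cgen b + a * b ≤ cgen (a + b) := by
  rcases lt_or_ge (a + b) 5 with h | h
  · have : a ≤ 3 := by omega
    have : b ≤ 3 := by omega
    interval_cases a <;> interval_cases b <;> simp [cgen] at h ⊢
  · have h1 := cgen_of_five_le h
    have := two_cgen_le a
    have := two_cgen_le b
    nlinarith

theorem cgen_sum {ι : Type*} (s : Finset ι) (n : ι → ℕ) (hn : ∀ i ∈ s, 1 ≤ n i) :
    ∑ i ∈ s, cgen (n i) + s.card * (s.card - 1) / 2 ≤ cgen (∑ i ∈ s, n i) := by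
  classical
  induction s using Finset.induction_on with
  | empty => simp
  | insert a s ha ih =>
    have ih' := ih fun i hi => hn i (by simp [hi])
    rw [Finset.sum_insert ha, Finset.sum_insert ha, Finset.card_insert_of_notMem ha]
    have hc : s.card ≤ ∑ i ∈ s, n i := by
      have := Finset.sum_le_sum fun i (hi : i ∈ s) => hn i (by simp [hi])
      simpa using this
    have ha1 := hn a (by simp)
    rcases s.eq_empty_or_nonempty with rfl | hne
    · simp
    have hcpos := hne.card_pos
    have := cgen_add ha1 (hcpos.trans_le hc)
    have h2 : (s.card + 1) * (s.card + 1 - 1) / 2 = s.card * (s.card - 1) / 2 + s.card := by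
      rw [← Nat.add_mul_div_right _ _ (by norm_num : 0 < 2)]
      congr 1
      obtain ⟨c, hc⟩ : ∃ c, s.card = c + 1 := ⟨s.card - 1, by omega⟩
      rw [hc]
      simp only [Nat.add_sub_cancel]
      ring
    have h3 : ∑ i ∈ s, n i ≤ n a * ∑ i ∈ s, n i := Nat.le_mul_of_pos_left _ ha1
    omega

/-- A group is generated modulo `S` by Sylow subgroups for primes below `t` and `B` further
elements, where `t ^ (B + 1)` exceeds the index of `S`. -/
theorem RSG_sylow {T : Type u} [Group T] [Finite T] (S : Subgroup T) [S.Normal] (f : ℕ → ℕ)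
    (t B : ℕ) (hsyl : ∀ l : ℕ, l.Prime → l < t → ∀ P : Subgroup T, IsPGroup l P → RSG P S (f l))
    (hB : ∀ m, t ^ m ≤ S.index → m ≤ B) :
    RSG (⊤ : Subgroup T) S (∑ l ∈ (Finset.range t).filter Nat.Prime, f l + B) := by
  generalize hps : (Finset.range t).filter Nat.Prime = ps
  have hmem : ∀ l, l ∈ ps ↔ l < t ∧ l.Prime := by
    intro l
    rw [← hps, Finset.mem_filter, Finset.mem_range]
  have hloc : ∀ l : ℕ, ∃ M : Subgroup T, l ∈ ps → SG M (f l) ∧ ¬ l ∣ (S ⊔ M).index := by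
    intro l
    by_cases hl : l ∈ ps
    · obtain ⟨hlt, hlp⟩ := (hmem l).1 hl
      have := Fact.mk hlp
      obtain ⟨P⟩ : Nonempty (Sylow l T) := inferInstance
      obtain ⟨M, hM1, hM2, hM3⟩ := hsyl l hlp hlt P P.isPGroup'
      refine ⟨M, fun _ => ⟨hM2, fun hdvd => ?_⟩⟩
      have hP : (P : Subgroup T) ≤ S ⊔ M := by
        intro q hq
        obtain ⟨x, hx, hxq⟩ := hM3 q hq
        have : q = x * (x⁻¹ * q) := by group
        rw [this, sup_comm]
        exact Subgroup.mul_mem_sup hx hxq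
      exact P.not_dvd_index (hdvd.trans (Subgroup.index_dvd_of_le hP))
    · exact ⟨⊥, fun h => absurd h hl⟩
  choose M hM using hloc
  obtain ⟨K₀, hK₀⟩ : ∃ K₀, K₀ = ⨆ l ∈ ps, M l := ⟨_, rfl⟩
  have hK₀SG : SG K₀ (∑ l ∈ ps, f l) := hK₀ ▸ SG.iSup ps M f fun l hl => (hM l hl).1
  have hgen := sup_closure_bigElt (K := S ⊔ K₀) (t := t) (by
    intro l hl hlt hdvd
    have hlps : l ∈ ps := (hmem l).2 ⟨hlt, hl⟩
    refine (hM l hlps).2 (hdvd.trans (Subgroup.index_dvd_of_le ?_))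
    exact sup_le_sup_left (hK₀ ▸ le_iSup₂_of_le l hlps le_rfl) S)
  obtain ⟨m, N, hN, hKN, hcard⟩ := exists_gen_growth (fun y hy => hy) hgen
  have hm : m ≤ B := by
    apply hB
    have h1 : Nat.card S ≤ Nat.card (S ⊔ K₀ : Subgroup T) :=
      Nat.le_of_dvd Nat.card_pos (Subgroup.card_dvd_of_le le_sup_left)
    have h2 : t ^ m * Nat.card S ≤ S.index * Nat.card S := by
      rw [Subgroup.index_mul_card]
      rw [Subgroup.card_top] at hcard
      exact (Nat.mul_le_mul_left _ h1).trans hcard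
    exact Nat.le_of_mul_le_mul_right h2 Nat.card_pos
  refine RSG.mono ⟨K₀ ⊔ N, le_top, hK₀SG.sup hN, fun q _ => ?_⟩ le_rfl (Nat.add_le_add_left hm _)
  have hq : q ∈ (K₀ ⊔ N) ⊔ S := by
    rw [sup_comm, ← sup_assoc, hKN]; trivial
  obtain ⟨x, hx, y, hy, rfl⟩ := Subgroup.mem_sup_of_normal_right.1 hq
  exact ⟨x, hx, by simpa using hy⟩

theorem RSG_pgroup_le {T : Type u} [Group T] [Finite T] {V : Type v} [AddCommGroup V]
    [Module ℂ V] [FiniteDimensional ℂ V] (ρ : Representation ℂ T V) {l : ℕ} (hl : l.Prime)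
    (P : Subgroup T) (hP : IsPGroup l P) :
    RSG P (scalOn ρ ⊤) (Module.finrank ℂ V - 1 + (Module.finrank ℂ V - 1) / (l - 1)) := by
  apply RSG.of_subtype
  refine (RSG_pgroup hl _ P V (ρ.comp P.subtype) rfl hP).mono ?_ le_rfl
  intro q hq
  exact hq

theorem RSG_primitive {T : Type u} [Group T] [Finite T] {V : Type v} [AddCommGroup V]
    [Module ℂ V] [FiniteDimensional ℂ V] (ρ : Representation ℂ T V) (t B : ℕ)
    (hB : ∀ m, t ^ m ≤ (scalOn ρ ⊤).index → m ≤ B) :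
    RSG (⊤ : Subgroup T) (trivOn ρ ⊤) (1 + ∑ l ∈ (Finset.range t).filter Nat.Prime,
      (Module.finrank ℂ V - 1 + (Module.finrank ℂ V - 1) / (l - 1)) + B) := by
  have := scalOn_top_normal ρ
  have h1 := RSG_sylow (scalOn ρ ⊤) _ t B (fun l hl _ P hP => RSG_pgroup_le ρ hl P hP) hB
  have h2 := h1.trans (RSG_scal_triv ρ (⊤ ⊓ scalOn ρ ⊤) inf_le_right)
  exact h2.mono le_rfl (by omega)

theorem log_bound {x y : ℝ} {t B e : ℕ} {i : ℕ} (ht : 1 ≤ t) (hi : (i : ℝ) ≤ x ^ e)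
    (hx : 0 ≤ x) (hxy : x ≤ y) (hy : y ^ e < (t : ℝ) ^ (B + 1)) (m : ℕ) (hm : t ^ m ≤ i) :
    m ≤ B := by
  by_contra h
  have h1 : (t : ℝ) ^ (B + 1) ≤ t ^ m := pow_le_pow_right₀ (by exact_mod_cast ht) (by omega)
  have h2 : (t : ℝ) ^ m ≤ i := by exact_mod_cast hm
  have h3 := pow_le_pow_left₀ hx hxy e
  linarith

/-- A finite complex linear group of degree `n` needs at most `cgen n` generators. -/
theorem RSG_complex : ∀ (n : ℕ) (T : Type u) [Group T] [Finite T]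
    (V : Type v) [AddCommGroup V] [Module ℂ V] [FiniteDimensional ℂ V] (ρ : Representation ℂ T V),
    Module.finrank ℂ V = n → RSG (⊤ : Subgroup T) (trivOn ρ ⊤) (cgen n) := by
  intro n
  induction n using Nat.strong_induction_on with
  | _ n ih =>
  intro T _ _ V _ _ _ ρ hn
  by_cases hbl : ∃ k, 2 ≤ k ∧ ∃ (W : Fin k → Submodule ℂ V) (σ : T →* Equiv.Perm (Fin k)),
      IsBlocks ρ W σ
  · obtain ⟨k, hk2, W, σ, hB⟩ := hbl
    have hsum := hB.sum_finrank
    rw [hn] at hsum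
    have hpos := hB.finrank_pos
    have hlt : ∀ i, Module.finrank ℂ (W i) < n := by
      intro i
      obtain ⟨j, hj⟩ : ∃ j, j ≠ i := by
        have : Nontrivial (Fin k) := Fin.nontrivial_iff_two_le.2 hk2
        exact exists_ne i
      have := Finset.add_le_sum (f := fun i => Module.finrank ℂ (W i)) (s := Finset.univ)
        (fun _ _ => Nat.zero_le _) (Finset.mem_univ j) (Finset.mem_univ i) hj
      have := hpos j
      omega
    have h1 : RSG ⊤ σ.ker (k * (k - 1) / 2) := RSG.of_map σ (SG_perm _)
    have h2 := RSG.family Finset.univ σ.ker (fun i => trivOn ρ (W i))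
      (fun i => cgen (Module.finrank ℂ (W i))) (by
        intro i _ K hK
        have hst : ∀ q ∈ K, ∀ w ∈ W i, ρ q w ∈ W i := fun q hq w hw => hB.stab (hK hq) i hw
        apply RSG.of_subtype
        exact (ih _ (hlt i) K (W i) (subRep ρ K (W i) hst) rfl).mono
          (trivOn_subRep_le ρ K (W i) hst) le_rfl) le_rfl
    have h4 := h1.trans (N' := trivOn ρ ⊤) (by
      rw [top_inf_eq]
      refine h2.mono ?_ le_rfl
      intro q hq
      apply mem_trivOn_top_of_iSup hB
      simpa [Subgroup.mem_iInf] using hq)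
    refine h4.mono le_rfl ?_
    have := cgen_sum Finset.univ (fun i => Module.finrank ℂ (W i)) (fun i _ => hpos i)
    rw [hsum, Finset.card_univ, Fintype.card_fin] at this
    omega
  · have hnb : ∀ (k : ℕ), 2 ≤ k → ∀ (W : Fin k → Submodule ℂ V) (σ : T →* Equiv.Perm (Fin k)),
        ¬ IsBlocks ρ W σ := fun k hk W σ h => hbl ⟨k, hk, W, σ, h⟩
    rcases Nat.eq_zero_or_pos n with rfl | hn0
    · apply RSG.of_le
      intro q _ w _
      have : Subsingleton V := Module.finrank_zero_iff.1 hn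
      exact Subsingleton.elim _ _
    have hnt : Nontrivial V := Module.finrank_pos_iff.1 (hn ▸ hn0)
    have hidx := index_bound_num ρ hnb
    rw [hn] at hidx
    have key : ∀ (t B : ℕ) (y : ℝ), 1 ≤ t → 1 + 12.17 * (1 - 1 / (n : ℝ)) ≤ y →
        y ^ (n ^ 2 - 1) < (t : ℝ) ^ (B + 1) →
        1 + ∑ l ∈ (Finset.range t).filter Nat.Prime, (n - 1 + (n - 1) / (l - 1)) + B ≤ cgen n →
        RSG (⊤ : Subgroup T) (trivOn ρ ⊤) (cgen n) := by
      intro t B y ht hy hlt hle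
      have hx0 : (0 : ℝ) ≤ 1 + 12.17 * (1 - 1 / (n : ℝ)) := by
        have : (1 : ℝ) / n ≤ 1 := (div_le_one (by exact_mod_cast hn0)).2 (by exact_mod_cast hn0)
        linarith
      have := RSG_primitive ρ t B (log_bound ht hidx hx0 hy hlt)
      rw [hn] at this
      exact this.mono le_rfl hle
    have hp3 : (Finset.range 3).filter Nat.Prime = {2} := by decide
    have hp5 : (Finset.range 5).filter Nat.Prime = {2, 3} := by decide
    have hp7 : (Finset.range 7).filter Nat.Prime = {2, 3, 5} := by decide
    rcases lt_or_ge n 11 with hlt | hge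
    · interval_cases n
      · exact key 3 0 1 (by norm_num) (by norm_num) (by norm_num) (by simp [hp3, cgen])
      · exact key 3 5 7.085 (by norm_num) (by norm_num) (by norm_num) (by simp [hp3, cgen])
      · exact key 5 10 9.1134 (by norm_num) (by norm_num) (by norm_num) (by simp [hp5, cgen])
      · exact key 7 17 10.1275 (by norm_num) (by norm_num) (by norm_num) (by simp [hp7, cgen])
      · exact key 7 29 10.736 (by norm_num) (by norm_num) (by norm_num) (by simp [hp7, cgen])
      · exact key 7 43 11.142 (by norm_num) (by norm_num) (by norm_num) (by simp [hp7, cgen])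
      · exact key 7 60 11.432 (by norm_num) (by norm_num) (by norm_num) (by simp [hp7, cgen])
      · exact key 7 79 11.649 (by norm_num) (by norm_num) (by norm_num) (by simp [hp7, cgen])
      · exact key 7 101 11.818 (by norm_num) (by norm_num) (by norm_num) (by simp [hp7, cgen])
      · exact key 7 126 11.953 (by norm_num) (by norm_num) (by norm_num) (by simp [hp7, cgen])
    · -- `13.17 ^ 3 < 7 ^ 4`
      refine key 7 (4 * (n ^ 2 - 1) / 3) 13.17 (by norm_num) ?_ ?_ ?_
      · have : (0 : ℝ) ≤ 1 / n := by positivity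
        linarith
      · have h1 : ((13.17 : ℝ) ^ (n ^ 2 - 1)) ^ 3 < ((7 : ℝ) ^ (4 * (n ^ 2 - 1) / 3 + 1)) ^ 3 := by
          calc ((13.17 : ℝ) ^ (n ^ 2 - 1)) ^ 3 = (13.17 ^ 3) ^ (n ^ 2 - 1) := by
                rw [← pow_mul, ← pow_mul, mul_comm]
            _ ≤ ((7 : ℝ) ^ 4) ^ (n ^ 2 - 1) := pow_le_pow_left₀ (by norm_num) (by norm_num) _
            _ = 7 ^ (4 * (n ^ 2 - 1)) := by rw [← pow_mul]
            _ < 7 ^ ((4 * (n ^ 2 - 1) / 3 + 1) * 3) :=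
                pow_lt_pow_right₀ (by norm_num) (by omega)
            _ = _ := by rw [← pow_mul]
        exact_mod_cast lt_of_pow_lt_pow_left₀ 3 (by positivity) h1
      · rw [hp7]
        have h2 := cgen_of_five_le (n := n) (by omega)
        simp only [Finset.mem_insert, Finset.mem_singleton, Finset.sum_insert,
          Finset.sum_singleton, Nat.reduceEqDiff, or_self,
          not_false_eq_true, Nat.reduceSub, Nat.div_one]
        obtain ⟨c, rfl⟩ : ∃ c, n = c + 11 := ⟨n - 11, by omega⟩
        have h3 : (c + 11) ^ 2 - 1 = c * c + 22 * c + 120 := by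
          have : (c + 11) ^ 2 = c * c + 22 * c + 121 := by ring
          omega
        have h4 : 2 * cgen (c + 11) = 3 * (c * c) + 71 * c + 418 := by rw [h2]; ring
        rw [h3]
        have h5 : c ≤ c * c := Nat.le_mul_self c
        omega

/-- The same for faithful representations. -/
theorem SG_complex {T : Type u} [Group T] [Finite T] {V : Type v} [AddCommGroup V] [Module ℂ V]
    [FiniteDimensional ℂ V] (ρ : Representation ℂ T V) (hρ : Function.Injective ρ) :
    SG (⊤ : Subgroup T) (cgen (Module.finrank ℂ V)) := by
  refine ((RSG_complex _ T V ρ rfl).mono ?_ le_rfl).sg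
  intro q hq
  rw [Subgroup.mem_bot]
  apply hρ
  rw [map_one]
  ext v
  exact hq v trivial

end GenBound

/-! ### Lifting groups of order prime to `p` to characteristic zero -/

namespace GenBound

section lift
variable {p : ℕ} {n : ℕ}

theorem exists_one_add_pow {M : Type*} [Ring M] (w : M) (p : ℕ) :
    ∃ r : M, (1 + w) ^ p = 1 + p * w + w * w * r := by
  obtain ⟨q, hq⟩ := Polynomial.binomExpansion (Polynomial.X ^ p : Polynomial (Polynomial ℤ)) 1
    Polynomial.X
  have := congrArg (Polynomial.aeval w) hq
  simp only [Polynomial.eval_pow, Polynomial.eval_X, Polynomial.derivative_X_pow,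
    Polynomial.eval_mul, one_pow, mul_one, map_pow, map_add, map_one, map_mul,
    Polynomial.aeval_X, map_natCast, Polynomial.eval_natCast] at this
  refine ⟨Polynomial.aeval w q, ?_⟩
  rw [this]
  congr 1
  have h : Polynomial.aeval w q * w ^ 2 = w ^ 2 * Polynomial.aeval w q := by
    have h2 : (Polynomial.aeval w (Polynomial.X ^ 2 : Polynomial ℤ)) = w ^ 2 := by simp
    rw [← h2, ← map_mul, ← map_mul, mul_comm]
  rw [h, sq]

theorem pow_pow_congr_one {M : Type*} [Ring M] {p : ℕ} {x : M} (hx : ∃ z, x = 1 + p * z) (j : ℕ) :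
    ∃ z, x ^ p ^ j = 1 + (p : M) ^ (j + 1) * z := by
  induction j with
  | zero => simpa using hx
  | succ j ih =>
    obtain ⟨z, hz⟩ := ih
    obtain ⟨r, hr⟩ := exists_one_add_pow ((p : M) ^ (j + 1) * z) p
    rw [pow_succ, pow_mul, hz, hr]
    have hc : ∀ i : ℕ, ∀ y : M, y * (p : M) ^ i = (p : M) ^ i * y := fun i y =>
      ((Nat.cast_commute p y).pow_left i).eq.symm
    refine ⟨z + (p : M) ^ j * (z * z * r), ?_⟩
    rw [add_assoc, mul_add]
    congr 2
    · rw [← mul_assoc, ← pow_succ']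
    · rw [← mul_assoc ((p : M) ^ (j + 1 + 1)), ← pow_add, mul_assoc ((p : M) ^ (j + 1)) z,
        ← mul_assoc z, hc, ← mul_assoc, ← mul_assoc, ← pow_add, mul_assoc, mul_assoc, mul_assoc]
      congr 2
      ring

theorem isPGroup_ker (hp : p.Prime) (k : ℕ) (hk : k ≠ 0) :
    IsPGroup p (Matrix.GeneralLinearGroup.map (n := Fin n)
      (ZMod.castHom (dvd_pow_self p hk) (ZMod p))).ker := by
  have : NeZero (p ^ k) := ⟨(pow_pos hp.pos k).ne'⟩
  rintro ⟨x, hx⟩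
  refine ⟨k, ?_⟩
  have h1 : ∃ z : Matrix (Fin n) (Fin n) (ZMod (p ^ k)), x.val = 1 + (p : Matrix (Fin n) (Fin n) (ZMod (p ^ k))) * z := by
    have h2 : ∀ i j, ∃ c : ZMod (p ^ k), (x : Matrix (Fin n) (Fin n) (ZMod (p ^ k))) i j =
        (1 : Matrix (Fin n) (Fin n) (ZMod (p ^ k))) i j + p * c := by
      intro i j
      obtain ⟨a, ha⟩ : ∃ a, a = (x : Matrix (Fin n) (Fin n) (ZMod (p ^ k))) i j -
        (1 : Matrix (Fin n) (Fin n) (ZMod (p ^ k))) i j := ⟨_, rfl⟩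
      have h3 : ZMod.castHom (dvd_pow_self p hk) (ZMod p) a = 0 := by
        rw [ha, map_sub]
        have h4 := congrArg (fun y : GL (Fin n) (ZMod p) => y.val i j)
          (MonoidHom.mem_ker.1 hx)
        simp only [Matrix.GeneralLinearGroup.map_apply] at h4
        rw [h4]
        simp only [Units.val_one, Matrix.one_apply]
        split_ifs
        · rw [map_one, sub_self]
        · rw [map_zero, sub_self]
      rw [← ZMod.natCast_zmod_val a, map_natCast, ZMod.natCast_eq_zero_iff] at h3
      obtain ⟨c, hc⟩ := h3
      refine ⟨c, ?_⟩
      rw [← sub_eq_iff_eq_add', ← ha, ← ZMod.natCast_zmod_val a, hc]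
      push_cast
      rfl
    choose z hz using h2
    refine ⟨Matrix.of z, ?_⟩
    ext i j
    rw [hz, Matrix.add_apply, ← nsmul_eq_mul (p) (Matrix.of z), Matrix.smul_apply, nsmul_eq_mul]
    rfl
  obtain ⟨z, hz⟩ := pow_pow_congr_one h1 k
  have h0 : (p : Matrix (Fin n) (Fin n) (ZMod (p ^ k))) ^ (k + 1) = 0 := by
    rw [pow_succ, ← Nat.cast_pow]
    have : ((p ^ k : ℕ) : Matrix (Fin n) (Fin n) (ZMod (p ^ k))) = 0 := by
      rw [← Matrix.diagonal_natCast]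
      simp
    rw [this, zero_mul]
  apply Subtype.ext
  apply Units.ext
  simpa [h0] using hz

/-- Schur–Zassenhaus in the fibre product of `T` and `GL_n(ℤ/p^k)` over `GL_n(𝔽_p)`. -/
theorem exists_lift_mod {T : Type*} [Group T] [Finite T] (hp : p.Prime) (hT : ¬ p ∣ Nat.card T)
    (f : T →* GL (Fin n) (ZMod p)) (k : ℕ) (hk : k ≠ 0) :
    ∃ g : T →* GL (Fin n) (ZMod (p ^ k)), ∀ t, Matrix.GeneralLinearGroup.map
      (ZMod.castHom (dvd_pow_self p hk) (ZMod p)) (g t) = f t := by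
  have := Fact.mk hp
  have : NeZero (p ^ k) := ⟨(pow_pos hp.pos k).ne'⟩
  let φ := ZMod.castHom (dvd_pow_self p hk) (ZMod p)
  let r := Matrix.GeneralLinearGroup.map (n := Fin n) φ
  have hsurj : ∀ y, ∃ x, r x = y := by
    intro y
    have hφ : Function.Surjective φ := ZMod.ringHom_surjective φ
    choose c hc using hφ
    let X : Matrix (Fin n) (Fin n) (ZMod (p ^ k)) := Matrix.of fun i j => c (y i j)
    have hX : φ.mapMatrix X = y.val := by
      ext i j
      exact hc _
    have hdet : IsUnit X.det := by
      have h1 : φ X.det = y.val.det := by rw [RingHom.map_det, hX]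
      have h2 : φ X.det ≠ 0 := by
        rw [h1]
        exact ((Matrix.isUnit_iff_isUnit_det y.val).1 y.isUnit).ne_zero
      rw [← ZMod.natCast_zmod_val X.det] at h2 ⊢
      rw [map_natCast, Ne, ZMod.natCast_eq_zero_iff] at h2
      rw [ZMod.isUnit_iff_coprime]
      exact Nat.Coprime.pow_right k ((hp.coprime_iff_not_dvd.2 h2).symm)
    refine ⟨((Matrix.isUnit_iff_isUnit_det X).2 hdet).unit, ?_⟩
    apply Units.ext
    exact hX
  let G : Subgroup (T × GL (Fin n) (ZMod (p ^ k))) :=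
    (f.comp (MonoidHom.fst _ _)).eqLocus (r.comp (MonoidHom.snd _ _))
  let π : G →* T := (MonoidHom.fst _ _).comp G.subtype
  have hπ : Function.Surjective π := by
    intro t
    obtain ⟨x, hx⟩ := hsurj (f t)
    exact ⟨⟨(t, x), hx.symm⟩, rfl⟩
  have hN : IsPGroup p π.ker := by
    rintro ⟨⟨⟨t, x⟩, hx⟩, ht⟩
    have ht1 : t = 1 := ht
    subst ht1
    have hx1 : x ∈ r.ker := by
      rw [MonoidHom.mem_ker]
      have : f 1 = r x := hx
      rw [← this, map_one]
    obtain ⟨j, hj⟩ := isPGroup_ker hp k hk ⟨x, hx1⟩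
    refine ⟨j, ?_⟩
    apply Subtype.ext
    apply Subtype.ext
    have hj' : x ^ p ^ j = 1 := congrArg Subtype.val hj
    ext1
    · simp
    · simpa using hj'
  have hcop : Nat.Coprime (Nat.card π.ker) π.ker.index := by
    obtain ⟨j, hj⟩ := IsPGroup.iff_card.1 hN
    rw [Subgroup.index_ker, hj, MonoidHom.range_eq_top.2 hπ, Subgroup.card_top]
    exact Nat.Coprime.pow_left j (hp.coprime_iff_not_dvd.2 hT)
  obtain ⟨C, hC⟩ := Subgroup.exists_right_complement'_of_coprime hcop
  let e : C →* T := π.comp C.subtype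
  have hinj : Function.Injective e := by
    rw [injective_iff_map_eq_one]
    intro c hc
    have h1 : (c : G) ∈ π.ker ⊓ C := ⟨hc, c.2⟩
    rw [hC.disjoint.eq_bot, Subgroup.mem_bot] at h1
    exact Subtype.ext h1
  have hesurj : Function.Surjective e := by
    intro t
    obtain ⟨x, rfl⟩ := hπ t
    obtain ⟨⟨a, c⟩, hac⟩ := hC.2 x
    refine ⟨c, ?_⟩
    have h1 : π (a * c) = π x := congrArg π hac
    rw [map_mul, MonoidHom.mem_ker.1 a.2, one_mul] at h1
    exact h1
  let E := MulEquiv.ofBijective e ⟨hinj, hesurj⟩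
  refine ⟨((MonoidHom.snd _ _).comp (G.subtype.comp C.subtype)).comp E.symm.toMonoidHom,
    fun t => ?_⟩
  have h1 : f (E.symm t : G).1.1 = r (E.symm t : G).1.2 := (E.symm t : G).2
  have h2 : (E.symm t : G).1.1 = t := E.apply_symm_apply t
  rw [h2] at h1
  exact h1.symm

theorem toZMod_eq [hp : Fact p.Prime] (h : ℤ_[p] →+* ZMod p) (x : ℤ_[p]) :
    PadicInt.toZMod x = h x := by
  have h1 := PadicInt.toZMod_spec x
  rw [PadicInt.maximalIdeal_eq_span_p, Ideal.mem_span_singleton] at h1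
  obtain ⟨c, hc⟩ := h1
  have h2 : x = ((PadicInt.toZMod x).val : ℤ_[p]) + p * c := by
    rw [← hc, ZMod.natCast_val, add_sub_cancel]
  conv_rhs => rw [h2]
  rw [map_add, map_mul, map_natCast, map_natCast, ZMod.natCast_zmod_val, CharP.cast_eq_zero,
    zero_mul, add_zero]

/-- A limit of the lifts modulo `p ^ k`, by compactness of `ℤ_p`. -/
theorem exists_lift_padic {T : Type*} [Group T] [Finite T] [hp : Fact p.Prime]
    (hT : ¬ p ∣ Nat.card T) (f : T →* GL (Fin n) (ZMod p)) :
    ∃ g : T →* Matrix (Fin n) (Fin n) ℤ_[p], ∀ t i j,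
      PadicInt.toZMod (g t i j) = (f t : Matrix _ _ _) i j := by
  let X : ℕ → Set (T → Matrix (Fin n) (Fin n) ℤ_[p]) := fun k =>
    {g | (∀ t i j, ‖g t i j - ((f t : Matrix (Fin n) (Fin n) (ZMod p)) i j).val‖ ≤
        (p : ℝ) ^ (-(1 : ℕ) : ℤ)) ∧
      (∀ i j, ‖g 1 i j - (1 : Matrix (Fin n) (Fin n) ℤ_[p]) i j‖ ≤ (p : ℝ) ^ (-(k + 1 : ℕ) : ℤ)) ∧
      ∀ s t i j, ‖g (s * t) i j - (g s * g t) i j‖ ≤ (p : ℝ) ^ (-(k + 1 : ℕ) : ℤ)}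
  have hX : ∀ k, IsClosed (X k) := by
    intro k
    have he : ∀ (t : T) i j, Continuous fun g : T → Matrix (Fin n) (Fin n) ℤ_[p] => g t i j :=
      fun t i j => (continuous_apply_apply i j).comp (continuous_apply t)
    simp only [X, Set.ofPred_and, Set.ofPred_forall]
    refine IsClosed.inter ?_ (IsClosed.inter ?_ ?_)
    · exact isClosed_iInter fun t => isClosed_iInter fun i => isClosed_iInter fun j =>
        isClosed_le ((he t i j).sub continuous_const).norm continuous_const
    · exact isClosed_iInter fun i => isClosed_iInter fun j =>
        isClosed_le ((he 1 i j).sub continuous_const).norm continuous_const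
    · refine isClosed_iInter fun s => isClosed_iInter fun t => isClosed_iInter fun i =>
        isClosed_iInter fun j => isClosed_le (((he (s * t) i j).sub ?_)).norm continuous_const
      simp only [Matrix.mul_apply]
      exact continuous_finsetSum _ fun l _ => (he s i l).mul (he t l j)
  have hne : ∀ k, (X k).Nonempty := by
    intro k
    obtain ⟨g, hg⟩ := exists_lift_mod hp.1 hT f (k + 1) (by omega)
    have hsurj : Function.Surjective (PadicInt.toZModPow (p := p) (k + 1)) :=
      ZMod.ringHom_surjective _
    choose c hc using hsurj
    have hz : ∀ (m : ℕ) (x : ℤ_[p]), PadicInt.toZModPow (p := p) m x = 0 →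
        ‖x‖ ≤ (p : ℝ) ^ (-(m : ℕ) : ℤ) := by
      intro m x hx
      rw [PadicInt.norm_le_pow_iff_mem_span_pow, ← PadicInt.ker_toZModPow]
      exact hx
    refine ⟨fun t => Matrix.of fun i j => c (g t i j), ?_, ?_, ?_⟩
    · intro t i j
      rw [PadicInt.norm_le_pow_iff_mem_span_pow, pow_one, ← PadicInt.maximalIdeal_eq_span_p,
        ← PadicInt.ker_toZMod, RingHom.mem_ker, map_sub, map_natCast, ZMod.natCast_zmod_val]
      have h1 : PadicInt.toZMod (c (g t i j)) =
          ZMod.castHom (dvd_pow_self p (by omega : k + 1 ≠ 0)) (ZMod p)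
            (PadicInt.toZModPow (k + 1) (c (g t i j))) := by
        exact toZMod_eq ((ZMod.castHom (dvd_pow_self p (by omega : k + 1 ≠ 0)) (ZMod p)).comp
          (PadicInt.toZModPow (k + 1))) _
      rw [hc] at h1
      refine (congrArg (· - _) h1).trans ?_
      have h2 := congrArg (fun y : GL (Fin n) (ZMod p) => y.val i j) (hg t)
      simp only [Matrix.GeneralLinearGroup.map_apply] at h2
      exact sub_eq_zero.2 h2
    · intro i j
      apply hz
      rw [map_sub]
      refine (congrArg (· - _) (hc _)).trans ?_
      rw [map_one, Units.val_one, Matrix.one_apply, Matrix.one_apply]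
      split_ifs <;> simp
    · intro s t i j
      apply hz
      rw [map_sub]
      refine (congrArg (· - _) (hc _)).trans ?_
      rw [Matrix.mul_apply, map_sum, map_mul, Units.val_mul, Matrix.mul_apply, sub_eq_zero]
      simp [hc]
  have hanti : ∀ k, X (k + 1) ⊆ X k := by
    intro k g hg
    have hle : (p : ℝ) ^ (-(k + 1 + 1 : ℕ) : ℤ) ≤ (p : ℝ) ^ (-(k + 1 : ℕ) : ℤ) :=
      zpow_le_zpow_right₀ (by exact_mod_cast hp.1.one_le) (by omega)
    exact ⟨hg.1, fun i j => (hg.2.1 i j).trans hle, fun s t i j => (hg.2.2 s t i j).trans hle⟩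
  have : CompactSpace (Matrix (Fin n) (Fin n) ℤ_[p]) :=
    inferInstanceAs (CompactSpace (Fin n → Fin n → ℤ_[p]))
  have hcpt : IsCompact (X 0) := (hX 0).isCompact
  obtain ⟨g, hg⟩ := IsCompact.nonempty_iInter_of_sequence_nonempty_isCompact_isClosed X hanti hne
    hcpt hX
  rw [Set.mem_iInter] at hg
  have hzero : ∀ x : ℤ_[p], (∀ k : ℕ, ‖x‖ ≤ (p : ℝ) ^ (-(k + 1 : ℕ) : ℤ)) → x = 0 := by
    intro x hx
    rw [← norm_le_zero_iff]
    apply le_of_tendsto_of_tendsto tendsto_const_nhds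
      (tendsto_pow_atTop_nhds_zero_of_lt_one (r := ((p : ℝ)⁻¹)) (by positivity)
      (inv_lt_one_of_one_lt₀ (by exact_mod_cast hp.1.one_lt)))
    filter_upwards [Filter.eventually_ge_atTop 1] with k hk
    obtain ⟨j, rfl⟩ : ∃ j, k = j + 1 := ⟨k - 1, by omega⟩
    have := hx j
    rwa [zpow_neg, zpow_natCast, ← inv_pow] at this
  refine ⟨⟨⟨g, ?_⟩, ?_⟩, ?_⟩
  · ext i j
    have := hzero _ fun k => (hg k).2.1 i j
    rw [sub_eq_zero] at this
    exact this
  · intro s t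
    ext i j
    have := hzero _ fun k => (hg k).2.2 s t i j
    rw [sub_eq_zero] at this
    exact this
  · intro t i j
    have := (hg 0).1 t i j
    rw [PadicInt.norm_le_pow_iff_mem_span_pow, pow_one, ← PadicInt.maximalIdeal_eq_span_p,
      ← PadicInt.ker_toZMod, RingHom.mem_ker, map_sub, map_natCast, ZMod.natCast_zmod_val,
      sub_eq_zero] at this
    exact this

theorem exists_padic_embedding (p : ℕ) [hp : Fact p.Prime] : Nonempty (ℚ_[p] →+* ℂ) := by
  have h1 : Cardinal.mk ℚ_[p] ≤ Cardinal.continuum := by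
    have h2 : Cardinal.mk ℚ_[p] ≤ Cardinal.mk (CauSeq ℚ (padicNorm p)) :=
      Cardinal.mk_quotient_le
    refine h2.trans ((Cardinal.mk_subtype_le _).trans ?_)
    rw [← Cardinal.power_def]
    simp
  have h2 := continuum_le_cardinal_of_nontriviallyNormedField ℚ_[p]
  have h3 : Cardinal.mk (AlgebraicClosure ℚ_[p]) = Cardinal.continuum := by
    apply le_antisymm
    · refine (Algebra.IsAlgebraic.cardinalMk_le_max ℚ_[p] _).trans ?_
      exact max_le h1 Cardinal.aleph0_le_continuum
    · exact h2.trans (Cardinal.mk_le_of_injective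
        (FaithfulSMul.algebraMap_injective ℚ_[p] (AlgebraicClosure ℚ_[p])))
  obtain ⟨e⟩ := IsAlgClosed.ringEquiv_of_equiv_of_charZero (K := AlgebraicClosure ℚ_[p]) (L := ℂ)
    (by rw [h3]; exact Cardinal.aleph0_lt_continuum)
    (Cardinal.eq.1 (by rw [h3, Cardinal.mk_complex]))
  exact ⟨e.toRingHom.comp (algebraMap _ _)⟩

/-- A linear group over `𝔽_p` of order prime to `p` is a complex linear group of the same
degree. -/
theorem exists_complex_rep {T : Type*} [Group T] [Finite T] (hp : p.Prime)
    (hT : ¬ p ∣ Nat.card T) (f : T →* GL (Fin n) (ZMod p)) (hf : Function.Injective f) :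
    ∃ ρ : Representation ℂ T (Fin n → ℂ), Function.Injective ρ := by
  have := Fact.mk hp
  obtain ⟨g, hg⟩ := exists_lift_padic hT f
  obtain ⟨ε⟩ := exists_padic_embedding p
  let i : ℤ_[p] →+* ℂ := ε.comp (PadicInt.Coe.ringHom)
  have hi : Function.Injective i := ε.injective.comp Subtype.val_injective
  let ρ : T →* Module.End ℂ (Fin n → ℂ) :=
    ((Matrix.toLinAlgEquiv' (R := ℂ) (n := Fin n)).toAlgHom : _ →* _).comp
      ((i.mapMatrix (m := Fin n)).toMonoidHom.comp g)
  refine ⟨ρ, ?_⟩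
  intro s t hst
  apply hf
  apply Units.ext
  ext a b
  rw [← hg, ← hg]
  have h1 : i.mapMatrix (g s) = i.mapMatrix (g t) :=
    (Matrix.toLinAlgEquiv' (R := ℂ) (n := Fin n)).injective hst
  have h2 : i (g s a b) = i (g t a b) := congrFun (congrFun h1 a) b
  rw [hi h2]

end lift

end GenBound

/-! ### Finite linear groups over `𝔽_p` -/

namespace GenBound

section finlin
variable {p : ℕ}

/-- The part of `|GL_N(𝔽_p)|` prime to `p` is less than `p ^ (N (N + 1) / 2)`. -/
theorem card_GL_fact (hp : p.Prime) {N : ℕ} (hN : 1 ≤ N) :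
    ∃ A, Nat.card (GL (Fin N) (ZMod p)) = p ^ (N * (N - 1) / 2) * A ∧ ¬ p ∣ A ∧
      A < p ^ (N * (N + 1) / 2) := by
  have := Fact.mk hp
  have hsum : ∑ i ∈ Finset.range N, i = N * (N - 1) / 2 := Finset.sum_range_id N
  have hsum' : ∑ i ∈ Finset.range N, (N - i) = N * (N + 1) / 2 := by
    have h1 : ∑ i ∈ Finset.range N, (N - i) + ∑ i ∈ Finset.range N, i = N * N := by
      rw [← Finset.sum_add_distrib, Finset.sum_congr rfl (g := fun _ => N)]
      · simp
      · intro i hi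
        have := Finset.mem_range.1 hi
        omega
    have h2 := Finset.sum_range_id_mul_two N
    have h3 : N * (N + 1) = 2 * ∑ i ∈ Finset.range N, (N - i) := by
      have : N * (N - 1) + N = N * N := by
        obtain ⟨c, rfl⟩ : ∃ c, N = c + 1 := ⟨N - 1, by omega⟩
        simp only [Nat.add_sub_cancel]; ring
      rw [mul_add, mul_one]
      omega
    rw [h3, Nat.mul_div_cancel_left _ (by norm_num)]
  have hlt : ∀ i ∈ Finset.range N, p ^ (N - i) - 1 < p ^ (N - i) := fun i _ =>
    Nat.sub_lt (pow_pos hp.pos _) one_pos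
  have hpos : ∀ i ∈ Finset.range N, 0 < p ^ (N - i) - 1 := by
    intro i hi
    have := Finset.mem_range.1 hi
    have : 1 < p ^ (N - i) := Nat.one_lt_pow (by omega) hp.one_lt
    omega
  refine ⟨∏ i ∈ Finset.range N, (p ^ (N - i) - 1), ?_, ?_, ?_⟩
  · rw [Matrix.card_GL_field, ZMod.card, ← hsum, ← Finset.prod_pow_eq_pow_sum,
      ← Finset.prod_mul_distrib, Finset.prod_range]
    refine Finset.prod_congr rfl fun i _ => ?_
    rw [Nat.mul_sub, mul_one, ← pow_add, Nat.add_sub_cancel' i.2.le]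
  · rw [hp.prime.dvd_finsetProd_iff]
    rintro ⟨i, hi, hdvd⟩
    have h1 := hpos i hi
    have h2 : p ∣ p ^ (N - i) := dvd_pow_self p (by have := Finset.mem_range.1 hi; omega)
    have h3 := (Nat.dvd_sub h2 hdvd)
    rw [Nat.sub_sub_self (by omega)] at h3
    exact hp.one_lt.ne' (Nat.dvd_one.1 h3)
  · rw [← hsum', ← Finset.prod_pow_eq_pow_sum]
    exact Finset.prod_lt_prod_of_nonempty hpos hlt ⟨0, Finset.mem_range.2 hN⟩

theorem exists_GL_of_rep [Fact p.Prime] {G : Type*} [Group G] {V : Type*} [AddCommGroup V] [Module (ZMod p) V]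
    [FiniteDimensional (ZMod p) V] (ρ : Representation (ZMod p) G V) :
    ∃ φ : G →* GL (Fin (Module.finrank (ZMod p) V)) (ZMod p), ∀ g, φ g = 1 ↔ ρ g = 1 := by
  let b := Module.finBasis (ZMod p) V
  let e := LinearMap.toMatrixAlgEquiv b
  refine ⟨(Units.map (e.toAlgHom : _ →* _)).comp ρ.toHomUnits, fun g => ?_⟩
  rw [Units.ext_iff]
  change e (ρ g) = 1 ↔ _
  rw [← map_one e, e.injective.eq_iff]

variable {G : Type*} [Group G] [Finite G]

/-- Sylow `p`-subgroups of linear groups over `𝔽_p`. -/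
theorem card_sylow_linear (hp : p.Prime) {N : ℕ} (hN : 1 ≤ N)
    (φ : G →* GL (Fin N) (ZMod p)) (hφ : Function.Injective φ) (P : Sylow p G) :
    (∃ j ≤ N * (N - 1) / 2, Nat.card P = p ^ j) ∧
      (P : Subgroup G).index < p ^ (N * (N + 1) / 2) := by
  have := Fact.mk hp
  obtain ⟨A, hA, hpA, hlt⟩ := card_GL_fact hp hN
  have hdvd : Nat.card G ∣ p ^ (N * (N - 1) / 2) * A := hA ▸ Subgroup.card_dvd_of_injective φ hφ
  have hApos : 0 < A := Nat.pos_of_ne_zero fun h => hpA (h ▸ dvd_zero p)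
  obtain ⟨j, hj⟩ := IsPGroup.iff_card.1 P.isPGroup'
  have hcop : Nat.Coprime p A := hp.coprime_iff_not_dvd.2 hpA
  have hmul := (P : Subgroup G).index_mul_card
  constructor
  · refine ⟨j, ?_, hj⟩
    have h1 : p ^ j ∣ p ^ (N * (N - 1) / 2) * A := by
      rw [← hj]; exact (Subgroup.card_subgroup_dvd_card _).trans hdvd
    have h2 := (Nat.Coprime.pow_left j hcop).dvd_of_dvd_mul_right h1
    exact (Nat.pow_dvd_pow_iff_le_right hp.one_lt).1 h2
  · have h1 : (P : Subgroup G).index ∣ p ^ (N * (N - 1) / 2) * A :=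
      (Dvd.intro _ hmul).trans hdvd
    have h2 : Nat.Coprime (P : Subgroup G).index (p ^ (N * (N - 1) / 2)) :=
      Nat.Coprime.pow_right _ ((hp.coprime_iff_not_dvd.2 P.not_dvd_index).symm)
    exact (Nat.le_of_dvd hApos (h2.dvd_of_dvd_mul_left h1)).trans_lt hlt

theorem SG_sylow_linear (hp : p.Prime) {N : ℕ} (hN : 1 ≤ N)
    (φ : G →* GL (Fin N) (ZMod p)) (hφ : Function.Injective φ) (P : Sylow p G) :
    SG (P : Subgroup G) (N * (N - 1) / 2) := by
  obtain ⟨⟨j, hj, hc⟩, -⟩ := card_sylow_linear hp hN φ hφ P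
  rw [← SG.top_iff]
  apply SG_of_card_log (t := p)
  · intro l hl
    refine ((Nat.pow_le_pow_iff_right hp.one_lt).1 (hl.trans hc.le)).trans hj
  · intro l hl hlt hdvd
    rw [hc] at hdvd
    have := (Nat.prime_dvd_prime_iff_eq hl hp).1 (hl.dvd_of_dvd_pow hdvd)
    omega

/-- Linear groups over `𝔽_p` of order prime to `p`. -/
theorem SG_coprime (hp : p.Prime) (hG : ¬ p ∣ Nat.card G) {N : ℕ}
    (φ : G →* GL (Fin N) (ZMod p)) (hφ : Function.Injective φ) :
    SG (⊤ : Subgroup G) (cgen N) := by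
  obtain ⟨ρ, hρ⟩ := exists_complex_rep hp hG φ hφ
  simpa using SG_complex ρ hρ

end finlin

end GenBound

namespace GenBound

section finlin

theorem SG_coprime_rep {p : ℕ} [hp : Fact p.Prime] {G : Type*} [Group G] [Finite G]
    {V : Type*} [AddCommGroup V] [Module (ZMod p) V]
    [FiniteDimensional (ZMod p) V] (ρ : Representation (ZMod p) G V) (hG : ¬ p ∣ Nat.card G) :
    RSG (⊤ : Subgroup G) ρ.ker (cgen (Module.finrank (ZMod p) V)) := by
  obtain ⟨φ, hφ⟩ := exists_GL_of_rep ρ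
  have hker : φ.ker = ρ.ker := by
    ext g
    rw [MonoidHom.mem_ker, MonoidHom.mem_ker, hφ]
  rw [← hker]
  apply RSG.of_map
  rw [← MonoidHom.range_eq_map, ← SG.top_iff]
  refine SG_coprime hp.1 ?_ φ.range.subtype φ.range.subtype_injective
  intro h
  exact hG (h.trans (Subgroup.card_range_dvd φ))

/-- A linear `p'`-group over `𝔽_p` with an invariant subspace `W`: it acts faithfully on
`W ⊕ V / W`, because the elements trivial on both have order dividing `p`. -/
theorem SG_coprime_stable {p : ℕ} [hp : Fact p.Prime] {G : Type*} [Group G] [Finite G]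
    {V : Type*} [AddCommGroup V] [Module (ZMod p) V]
    [FiniteDimensional (ZMod p) V] (ρ : Representation (ZMod p) G V)
    (hρ : Function.Injective ρ) (hG : ¬ p ∣ Nat.card G) (W : Submodule (ZMod p) V)
    (hW : ∀ g, W ≤ W.comap (ρ g)) :
    SG (⊤ : Subgroup G)
      (cgen (Module.finrank (ZMod p) W) + cgen (Module.finrank (ZMod p) (V ⧸ W))) := by
  have h1 := SG_coprime_rep (ρ.subrepresentation W hW) hG
  obtain ⟨K, hK⟩ : ∃ K, K = (ρ.subrepresentation W hW).ker := ⟨_, rfl⟩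
  rw [← hK] at h1
  have h2 := SG_coprime_rep (G := K) ((ρ.quotient W hW).comp K.subtype)
    fun h => hG (h.trans (Subgroup.card_subgroup_dvd_card K))
  apply RSG.sg
  refine h1.trans ?_
  rw [top_inf_eq]
  apply RSG.of_subtype
  refine h2.mono ?_ le_rfl
  rintro ⟨g, hgK⟩ hg
  have hg' : ρ.quotient W hW g = 1 := hg
  rw [hK] at hgK
  have hgK' : ρ.subrepresentation W hW g = 1 := hgK
  rw [Subgroup.mem_subgroupOf, Subgroup.mem_bot]
  change g = 1
  have hw : ∀ w ∈ W, ρ g w = w := fun w hw => by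
    have := congrArg Subtype.val (LinearMap.congr_fun hgK' ⟨w, hw⟩)
    exact this
  have hv : ∀ v, ρ g v - v ∈ W := fun v => by
    have := LinearMap.congr_fun hg' (Submodule.Quotient.mk v)
    exact (Submodule.Quotient.eq W).1 this
  have hpow : ∀ n : ℕ, ∀ v, ρ (g ^ n) v = v + (n : ZMod p) • (ρ g v - v) := by
    intro n
    induction n with
    | zero => simp
    | succ n ih =>
      intro v
      rw [pow_succ', map_mul, Module.End.mul_apply, ih, map_add, map_smul, hw _ (hv v)]
      push_cast
      rw [add_smul, one_smul]
      abel
  have hgp : g ^ p = 1 := by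
    apply hρ
    ext v
    rw [hpow p v]
    simp
  by_contra hne
  have := orderOf_eq_prime hgp hne
  exact hG (this ▸ orderOf_dvd_natCard g)

variable {p : ℕ} {G : Type*} [Group G] [Finite G]

/-- By Schur–Zassenhaus and the Frattini argument, a finite group is generated by a Sylow
`p`-subgroup `P`, a complement of `P` in its normalizer, and elements of `p`-power order. -/
theorem exists_complement (hp : p.Prime) (P : Sylow p G) :
    ∃ T : Subgroup G, ¬ p ∣ Nat.card T ∧ T ≤ Subgroup.normalizer (P : Set G) ∧
      ((P : Subgroup G) ⊔ T) ⊔ Subgroup.closure {y : G | IsBigElt p y} = ⊤ := by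
  have := Fact.mk hp
  obtain ⟨M, hM⟩ : ∃ M : Subgroup G, M = Subgroup.normalizer (P : Set G) := ⟨_, rfl⟩
  have hPM : (P : Subgroup G) ≤ M := hM ▸ Subgroup.le_normalizer
  have hnormal : ((P : Subgroup G).subgroupOf M).Normal := by
    subst hM
    exact Subgroup.normal_in_normalizer
  have hcop : ¬ p ∣ ((P : Subgroup G).subgroupOf M).index := (P.subtype hPM).not_dvd_index
  obtain ⟨j, hj⟩ := IsPGroup.iff_card.1 (P.subtype hPM).isPGroup'
  have hj' : Nat.card ((P : Subgroup G).subgroupOf M) = p ^ j := hj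
  obtain ⟨C, hC⟩ := Subgroup.exists_right_complement'_of_coprime
    (N := (P : Subgroup G).subgroupOf M)
    (by rw [hj']; exact Nat.Coprime.pow_left _ (hp.coprime_iff_not_dvd.2 hcop))
  refine ⟨C.map M.subtype, ?_, hM ▸ Subgroup.map_subtype_le C, ?_⟩
  · rw [Subgroup.card_map_of_injective M.subtype_injective]
    have h1 := hC.symm.index_eq_card
    rwa [h1] at hcop
  · have hsup : (P : Subgroup G) ⊔ C.map M.subtype = M := by
      have h1 := congrArg (Subgroup.map M.subtype) hC.sup_eq_top
      rw [Subgroup.map_sup, Subgroup.subgroupOf_map_subtype, inf_of_le_left hPM,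
        ← MonoidHom.range_eq_map, Subgroup.range_subtype] at h1
      exact h1
    rw [hsup]
    have hN : (Subgroup.closure {y : G | IsBigElt p y}).Normal := by
      have hset : {y : G | IsBigElt p y} = Group.conjugatesOfSet {y : G | IsBigElt p y} := by
        apply Set.Subset.antisymm Group.subset_conjugatesOfSet
        intro x hx
        obtain ⟨y, ⟨l, j, hl, hlt, ho⟩, hc⟩ := Group.mem_conjugatesOfSet_iff.1 hx
        refine ⟨l, j, hl, hlt, ?_⟩
        obtain ⟨c, rfl⟩ := isConj_iff.1 hc
        rw [← ho]
        exact orderOf_injective (MulAut.conj c).toMonoidHom (MulAut.conj c).injective y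
      rw [hset]
      exact Subgroup.normalClosure_normal
    have hP : (P : Subgroup G) ≤ Subgroup.closure {y : G | IsBigElt p y} := by
      intro y hy
      apply Subgroup.subset_closure
      obtain ⟨j, hj⟩ := IsPGroup.iff_orderOf.1 P.isPGroup' ⟨y, hy⟩
      refine ⟨p, j, hp, le_rfl, ?_⟩
      rwa [Subgroup.orderOf_mk] at hj
    rw [hM]
    exact P.normalizer_sup_eq_top' hP

/-- The numerical bound for a `p'`-group with an invariant subspace. -/
theorem cgen_split {a b N : ℕ} (ha : 1 ≤ a) (hb : 1 ≤ b) (h : a + b = N) :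
    2 * (cgen a + cgen b) + N ≤ 3 * N ^ 2 + 2 := by
  subst h
  have h1 := two_cgen_le a
  have h2 := two_cgen_le b
  have hc1 : cgen 1 = 1 := rfl
  rcases ha.eq_or_lt with rfl | ha
  · rw [hc1]; nlinarith
  rcases hb.eq_or_lt with rfl | hb
  · rw [hc1]; nlinarith
  · nlinarith [Nat.mul_le_mul ha hb]

/-- A linear group of degree `N` over `𝔽_p` is generated by a `p`-subgroup together with
`2 N²` further elements. -/
theorem exists_pgroup_sup (hp : p.Prime) {N : ℕ} (hN : 1 ≤ N)
    (φ : G →* GL (Fin N) (ZMod p)) (hφ : Function.Injective φ) (P : Sylow p G) :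
    ∃ L : Subgroup G, (P : Subgroup G) ⊔ L = ⊤ ∧ SG L (2 * N ^ 2) := by
  have := Fact.mk hp
  by_cases hP : (P : Subgroup G) = ⊥
  · refine ⟨⊤, by simp, (SG_coprime hp ?_ φ hφ).mono (cgen_le N)⟩
    have := P.not_dvd_index
    rwa [hP, Subgroup.index_bot] at this
  obtain ⟨T, hT, hTP, htop⟩ := exists_complement hp P
  obtain ⟨m, M, hM, hsup, hcard⟩ := exists_gen_growth (fun y hy => hy) htop
  have hm : m + 1 ≤ N * (N + 1) / 2 := by
    have h1 := (card_sylow_linear hp hN φ hφ P).2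
    have h2 : p ^ m * Nat.card P ≤ (P : Subgroup G).index * Nat.card P := by
      rw [Subgroup.index_mul_card, ← Subgroup.card_top (G := G)]
      refine le_trans ?_ hcard
      exact Nat.mul_le_mul_left _ (Nat.card_mono (Set.toFinite _) (le_sup_left (a := P.toSubgroup)))
    have h3 := (Nat.le_of_mul_le_mul_right h2 Nat.card_pos).trans_lt h1
    exact (Nat.pow_lt_pow_iff_right hp.one_lt).1 h3
  -- the natural representation and the fixed space of `P`
  let ρ : Representation (ZMod p) G (Fin N → ZMod p) :=
    ((Matrix.toLinAlgEquiv' (R := ZMod p) (n := Fin N)) : _ →* _).comp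
      ((Units.coeHom _).comp φ)
  have hρ : Function.Injective ρ := by
    intro x y hxy
    exact hφ (Units.ext (Matrix.toLinAlgEquiv'.injective hxy))
  let W : Submodule (ZMod p) (Fin N → ZMod p) :=
    Representation.invariants (ρ.comp (P : Subgroup G).subtype)
  have hW : ∀ v, v ∈ W ↔ ∀ x ∈ (P : Subgroup G), ρ x v = v := by
    intro v
    refine ⟨fun h x hx => h ⟨x, hx⟩, fun h x => h x x.2⟩
  have hstab : ∀ t : T, W ≤ W.comap ((ρ.comp T.subtype) t) := by
    intro t v hv
    rw [Submodule.mem_comap, hW]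
    intro x hx
    rw [hW] at hv
    have hx' : (t : G)⁻¹ * x * t ∈ (P : Subgroup G) := by
      have := (Subgroup.mem_normalizer_iff'' (H := (P : Subgroup G))).1 (hTP t.2) x
      exact this.1 hx
    have h1 := hv _ hx'
    have h2 : ρ (t * ((t : G)⁻¹ * x * t)) v = ρ (t : G) v := by
      rw [map_mul, Module.End.mul_apply, h1]
    rw [← mul_assoc, mul_inv_cancel_left, map_mul] at h2
    exact h2
  have hfr := Submodule.finrank_quotient_add_finrank W
  rw [Module.finrank_fin_fun] at hfr
  have ha : 1 ≤ Module.finrank (ZMod p) W := by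
    rw [Nat.one_le_iff_ne_zero]
    intro h0
    rw [Submodule.finrank_eq_zero] at h0
    let act : MulAction P (Fin N → ZMod p) :=
      { smul := fun x v => ρ x v
        one_smul := fun v => by change ρ ((1 : P) : G) v = v; simp
        mul_smul := fun x y v => by
          change ρ ((x * y : P) : G) v = ρ x (ρ y v)
          simp }
    have hmod := P.isPGroup'.card_modEq_card_fixedPoints (Fin N → ZMod p)
    have hfix : MulAction.fixedPoints P (Fin N → ZMod p) = {0} := by
      ext v
      have : v ∈ W ↔ v = 0 := by rw [h0, Submodule.mem_bot]
      rw [Set.mem_singleton_iff, ← this]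
      rfl
    rw [hfix] at hmod
    simp only [Nat.card_eq_fintype_card, Fintype.card_fun, ZMod.card, Fintype.card_fin,
      Fintype.card_unique] at hmod
    have h1 : p ∣ p ^ N := dvd_pow_self p (by omega)
    have h2 : p ∣ 1 := (Nat.ModEq.dvd_iff hmod dvd_rfl).1 h1
    exact hp.one_lt.ne' (Nat.dvd_one.1 h2)
  have hb : 1 ≤ Module.finrank (ZMod p) ((Fin N → ZMod p) ⧸ W) := by
    rw [Nat.one_le_iff_ne_zero]
    intro h0
    apply hP
    have hWtop : W = ⊤ := by
      apply Submodule.eq_top_of_finrank_eq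
      rw [Module.finrank_fin_fun]
      omega
    rw [eq_bot_iff]
    intro x hx
    rw [Subgroup.mem_bot]
    apply hρ
    rw [map_one]
    exact LinearMap.ext fun w => (hW w).1 (hWtop ▸ Submodule.mem_top) x hx
  have hTgen := SG_coprime_stable (ρ.comp T.subtype)
    (hρ.comp T.subtype_injective) hT W hstab
  rw [SG.top_iff] at hTgen
  refine ⟨T ⊔ M, by rw [← sup_assoc, hsup], (hTgen.sup hM).mono ?_⟩
  have hnum := cgen_split ha hb (by omega : _ = N)
  have h2 : 2 * (N * (N + 1) / 2) ≤ N * (N + 1) := Nat.mul_div_le _ _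
  nlinarith

end finlin

end GenBound

namespace GenBound

section finlin
variable {p : ℕ} {G : Type*} [Group G] [Finite G]

theorem SG_lgroup {l : ℕ} (hp : p.Prime) (hl : l.Prime) (hlp : l ≠ p) {N : ℕ} (hN : 1 ≤ N)
    (φ : G →* GL (Fin N) (ZMod p)) (hφ : Function.Injective φ) (Q : Subgroup G)
    (hQ : IsPGroup l Q) : SG Q (2 * N - 1) := by
  have hcop : ¬ p ∣ Nat.card Q := by
    have := Fact.mk hl
    obtain ⟨j, hj⟩ := IsPGroup.iff_card.1 hQ
    rw [hj]
    intro h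
    exact hlp ((Nat.prime_dvd_prime_iff_eq hp hl).1 (hp.dvd_of_dvd_pow h)).symm
  obtain ⟨ρ, hρ⟩ := exists_complex_rep hp hcop (φ.comp Q.subtype) (hφ.comp Q.subtype_injective)
  rw [← SG.top_iff]
  have hQ' : IsPGroup l (⊤ : Subgroup Q) := hQ.to_subgroup ⊤
  have h1 := RSG_pgroup_le ρ hl ⊤ hQ'
  have h2 := h1.trans (RSG_scal_triv ρ (W := ⊤) _ inf_le_right)
  apply RSG.sg
  refine h2.mono ?_ ?_
  · intro q hq
    rw [Subgroup.mem_bot]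
    apply hρ
    rw [map_one]
    exact LinearMap.ext fun w => hq w Submodule.mem_top
  · simp only [Module.finrank_fin_fun]
    have := Nat.div_le_self (N - 1) (l - 1)
    omega

/-- Generation of a linear group over `𝔽_p` by its Sylow subgroups for `p` and for the primes
below `t`, and by elements whose order is a power of a prime `≥ t`. -/
theorem SG_by_sylows (hp : p.Prime) {N : ℕ} (hN : 1 ≤ N)
    (φ : G →* GL (Fin N) (ZMod p)) (hφ : Function.Injective φ) (t B : ℕ)
    (hB : ∀ m, t ^ m < p ^ (N * (N + 1) / 2) → m ≤ B) :
    SG (⊤ : Subgroup G)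
      (N * (N - 1) / 2 + ((Finset.range t).filter Nat.Prime).card * (2 * N - 1) + B) := by
  classical
  have := Fact.mk hp
  have P : Sylow p G := default
  generalize hps : (Finset.range t).filter Nat.Prime = ps
  have hmem : ∀ l, l ∈ ps ↔ l < t ∧ l.Prime := by
    intro l
    rw [← hps, Finset.mem_filter, Finset.mem_range]
  have hex : ∀ l, ∃ S : Subgroup G, l ∈ ps → SG S (2 * N - 1) ∧ (l ≠ p → ¬ l ∣ S.index) := by
    intro l
    by_cases hlp : l = p
    · exact ⟨⊥, fun _ => ⟨SG.bot _, fun h => (h hlp).elim⟩⟩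
    by_cases hl : l.Prime
    · have := Fact.mk hl
      have S : Sylow l G := default
      exact ⟨S, fun _ => ⟨SG_lgroup hp hl hlp hN φ hφ S S.isPGroup', fun _ => S.not_dvd_index⟩⟩
    · exact ⟨⊥, fun h => (hl ((hmem l).1 h).2).elim⟩
  choose S hS using hex
  have hK := (SG_sylow_linear hp hN φ hφ P).sup
    (SG.iSup ps S (fun _ => 2 * N - 1) fun l hl => (hS l hl).1)
  rw [Finset.sum_const, smul_eq_mul] at hK
  generalize hKdef : (P : Subgroup G) ⊔ ⨆ l ∈ ps, S l = K at hK
  have hPK : (P : Subgroup G) ≤ K := hKdef ▸ le_sup_left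
  have htop := sup_closure_bigElt (K := K) (t := t) (by
    intro l hl hlt hdvd
    by_cases hlp : l = p
    · subst hlp
      exact P.not_dvd_index (hdvd.trans (Subgroup.index_dvd_of_le hPK))
    · have hlps := (hmem l).2 ⟨hlt, hl⟩
      have hSK : S l ≤ K := 
        hKdef ▸ (le_iSup₂ (f := fun l (_ : l ∈ ps) => S l) l hlps).trans le_sup_right
      exact (hS l hlps).2 hlp (hdvd.trans (Subgroup.index_dvd_of_le hSK)))
  obtain ⟨m, M, hM, hsup, hcard⟩ := exists_gen_growth (fun y hy => hy) htop
  rw [← hsup]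
  refine (hK.sup hM).mono (Nat.add_le_add_left (hB m ?_) _)
  have h1 := (card_sylow_linear hp hN φ hφ P).2
  have h2 : t ^ m * Nat.card P ≤ (P : Subgroup G).index * Nat.card P := by
    rw [Subgroup.index_mul_card, ← Subgroup.card_top (G := G)]
    refine le_trans ?_ hcard
    exact Nat.mul_le_mul_left _ (Nat.card_mono (Set.toFinite _) hPK)
  exact (Nat.le_of_mul_le_mul_right h2 Nat.card_pos).trans_lt h1

/-- If `p ^ a ≤ t ^ b` then an exponent of `t` is at most `b / a` times one of `p`. -/
theorem exp_bound {t a b m Q : ℕ} (ht : 2 ≤ t) (ha : a ≠ 0) (hab : p ^ a ≤ t ^ b)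
    (h : t ^ m < p ^ Q) : a * m < b * Q := by
  have h1 : (t ^ m) ^ a < (p ^ Q) ^ a := Nat.pow_lt_pow_left h ha
  have h2 : (p ^ Q) ^ a ≤ t ^ (b * Q) := by
    rw [← pow_mul, mul_comm, pow_mul, pow_mul]
    exact Nat.pow_le_pow_left hab Q
  rw [← pow_mul, mul_comm] at h1
  exact (Nat.pow_lt_pow_iff_right (by omega)).1 (h1.trans_le h2)

/-- Linear groups of degree `N` over `𝔽_p` for primes `p` that are small compared with `N`. -/
theorem SG_small_prime (hp : p.Prime) (hp5 : 5 ≤ p) {N : ℕ} (hpN : p ≤ N + 1)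
    (φ : G →* GL (Fin N) (ZMod p)) (hφ : Function.Injective φ) :
    SG (⊤ : Subgroup G) (2 * N ^ 2) := by
  have hN : 1 ≤ N := by omega
  have h2 : 2 * (N * (N + 1) / 2) ≤ N * (N + 1) := Nat.mul_div_le _ _
  have h3 : 2 * (N * (N - 1) / 2) + N ≤ N * N := by
    have h4 : 2 * (N * (N - 1) / 2) ≤ N * (N - 1) := Nat.mul_div_le _ _
    obtain ⟨c, rfl⟩ : ∃ c, N = c + 1 := ⟨N - 1, by omega⟩
    simp only [Nat.add_sub_cancel] at h4 ⊢
    nlinarith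
  generalize hQ : N * (N + 1) / 2 = Q at h2
  generalize hA : N * (N - 1) / 2 = A at h3
  have hc5 : ((Finset.range 5).filter Nat.Prime).card = 2 := by decide
  have hcase : p = 5 ∨ (7 ≤ p ∧ p ≤ 11) ∨ (13 ≤ p ∧ p ≤ 37) ∨ 41 ≤ p := by
    by_contra hcon
    have : p < 41 := by omega
    have : p = 6 ∨ p = 12 ∨ p = 38 ∨ p = 39 ∨ p = 40 := by omega
    rcases this with rfl | rfl | rfl | rfl | rfl <;> revert hp <;> decide
  obtain ⟨c, hc⟩ : ∃ c, 2 * N - 1 = c := ⟨_, rfl⟩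
  have hc' : c + 1 = 2 * N := by omega
  rcases hcase with h | ⟨hl, hu⟩ | ⟨hl, hu⟩ | hl
  · have := SG_by_sylows hp hN φ hφ 5 Q (fun m hm => by
      have := exp_bound (p := p) (a := 1) (b := 1) (by norm_num) one_ne_zero (by simp [h]) hm
      omega)
    rw [hc5, hA, hc] at this
    refine this.mono ?_
    nlinarith
  · have := SG_by_sylows hp hN φ hφ 5 (3 * Q / 2) (fun m hm => by
      have := exp_bound (p := p) (a := 2) (b := 3) (by norm_num) two_ne_zero (by nlinarith) hm
      omega)
    rw [hc5, hA, hc] at this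
    refine this.mono ?_
    have : 2 * (3 * Q / 2) ≤ 3 * Q := Nat.mul_div_le _ _
    nlinarith
  · have := SG_by_sylows hp hN φ hφ 5 (9 * Q / 4) (fun m hm => by
      have h4 : p ^ 4 ≤ 5 ^ 9 := (Nat.pow_le_pow_left hu 4).trans (by norm_num)
      have := exp_bound (p := p) (a := 4) (b := 9) (by norm_num) four_ne_zero h4 hm
      omega)
    rw [hc5, hA, hc] at this
    refine this.mono ?_
    have : 4 * (9 * Q / 4) ≤ 9 * Q := Nat.mul_div_le _ _
    nlinarith
  · -- `t = u + 1` is the least integer with `p ^ 2 ≤ t ^ 5`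
    have hex : ∃ t, p ^ 2 ≤ t ^ 5 := ⟨p, Nat.pow_le_pow_right (by omega) (by norm_num)⟩
    obtain ⟨t, ht, hmin⟩ : ∃ t, p ^ 2 ≤ t ^ 5 ∧ ∀ u < t, u ^ 5 < p ^ 2 :=
      ⟨Nat.find hex, Nat.find_spec hex, fun u hu => not_le.1 (Nat.find_min hex hu)⟩
    have ht2 : 2 ≤ t := by
      by_contra hlt
      have : t ^ 5 ≤ 1 ^ 5 := Nat.pow_le_pow_left (by omega) 5
      nlinarith
    obtain ⟨u, rfl⟩ : ∃ u, t = u + 1 := ⟨t - 1, by omega⟩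
    have hu := hmin u (by omega)
    have huN : 8 * u ≤ N + 5 := by
      by_contra hcon
      have h5 : p ≤ 8 * u := by omega
      have h6 : u ^ 5 < (8 * u) ^ 2 := hu.trans_le (Nat.pow_le_pow_left h5 2)
      have h7 : 6 ≤ u := by omega
      have h8 : (8 * u) ^ 2 ≤ u ^ 5 := by
        calc (8 * u) ^ 2 = 64 * u ^ 2 := by ring
          _ ≤ u ^ 3 * u ^ 2 := Nat.mul_le_mul_right _
              (le_trans (by norm_num) (Nat.pow_le_pow_left h7 3))
          _ = u ^ 5 := by ring
      omega
    have hcard : ((Finset.range (u + 1)).filter Nat.Prime).card + 1 ≤ u := by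
      have : (Finset.range (u + 1)).filter Nat.Prime ⊆ Finset.Ico 2 (u + 1) := by
        intro l hl
        rw [Finset.mem_filter, Finset.mem_range] at hl
        exact Finset.mem_Ico.2 ⟨hl.2.two_le, hl.1⟩
      have := Finset.card_le_card this
      rw [Nat.card_Ico] at this
      omega
    have := SG_by_sylows hp hN φ hφ (u + 1) (5 * Q / 2) (fun m hm => by
      have := exp_bound (p := p) (a := 2) (b := 5) ht2 two_ne_zero ht hm
      omega)
    rw [hA, hc] at this
    refine this.mono ?_
    have h9 : 2 * (5 * Q / 2) ≤ 5 * Q := Nat.mul_div_le _ _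
    generalize ((Finset.range (u + 1)).filter Nat.Prime).card = k at hcard ⊢
    have hk : 8 * k + 3 ≤ N := by omega
    have h10 := Nat.mul_le_mul_right (2 * N) hk
    nlinarith

end finlin

end GenBound

/-! ### Congruence and Iwahori filtrations on matrices -/

namespace GenBound

/-- The properties of `∏_{v ∣ p} 𝒪ᵥ` that matter: `p` is a nonzerodivisor contained in the
Jacobson radical, and the residue ring modulo `p` has `p ^ δ` elements, with `δ ≥ 1`. -/
structure PRing (R : Type*) [CommRing R] (p δ : ℕ) : Prop where
  prime : p.Prime
  reg : ∀ x : R, (p : R) * x = 0 → x = 0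
  unit : ∀ x y : R, (p : R) ∣ x * y - 1 → IsUnit x
  card : Nat.card (R ⧸ Ideal.span {(p : R)}) = p ^ δ
  pos : 1 ≤ δ

section filt
variable {R : Type*} [CommRing R] {p δ s : ℕ}

theorem PRing.reg_pow (hR : PRing R p δ) (k : ℕ) {x : R} (h : (p : R) ^ k * x = 0) : x = 0 := by
  induction k with
  | zero => simpa using h
  | succ k ih =>
    rw [pow_succ', mul_assoc] at h
    exact ih (hR.reg _ h)

theorem PRing.dvd_iff (hR : PRing R p δ) (k : ℕ) (x : R) :
    (p : R) ^ (k + 1) ∣ (p : R) * x ↔ (p : R) ^ k ∣ x := by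
  constructor
  · rintro ⟨y, hy⟩
    refine ⟨y, ?_⟩
    have : (p : R) * (x - (p : R) ^ k * y) = 0 := by
      rw [mul_sub, hy, pow_succ']; ring
    exact sub_eq_zero.1 (hR.reg _ this)
  · rintro ⟨y, rfl⟩
    exact ⟨y, by ring⟩

/-- The index of `pR` in `R`, taken entrywise. -/
theorem PRing.index_matrix (hR : PRing R p δ) (s : ℕ) :
    (((Ideal.Quotient.mk (Ideal.span {(p : R)})).mapMatrix (m := Fin s)).toAddMonoidHom).ker.index
      = p ^ (δ * s ^ 2) := by
  rw [AddSubgroup.index_ker, AddMonoidHom.range_eq_top_of_surjective, Nat.card_congr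
    (AddSubgroup.topEquiv).toEquiv]
  · have hfin : Finite (R ⧸ Ideal.span {(p : R)}) := Nat.finite_of_card_ne_zero (by
      rw [hR.card]; exact pow_ne_zero _ hR.prime.ne_zero)
    have h1 : Nat.card (Fin s → Fin s → R ⧸ Ideal.span {(p : R)}) = p ^ (δ * s ^ 2) := by
      rw [Nat.card_fun, Nat.card_fun, hR.card, Nat.card_fin, ← pow_mul, ← pow_mul]
      ring_nf
    exact h1
  · intro y
    choose x hx using fun i j => Ideal.Quotient.mk_surjective (y i j)
    exact ⟨Matrix.of x, by ext i j; exact hx i j⟩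

/-- The additive group of matrices `x` such that `p ^ (w a b)` divides `x a b`. -/
def wtSub (R : Type*) [CommRing R] (p : ℕ) {s : ℕ} (w : Fin s → Fin s → ℕ) :
    AddSubgroup (Matrix (Fin s) (Fin s) R) where
  carrier := {x | ∀ a b, (p : R) ^ w a b ∣ x a b}
  zero_mem' := fun _ _ => dvd_zero _
  add_mem' := fun hx hy a b => dvd_add (hx a b) (hy a b)
  neg_mem' := fun hx a b => dvd_neg.2 (hx a b)

theorem mem_wtSub {w : Fin s → Fin s → ℕ} {x : Matrix (Fin s) (Fin s) R} :
    x ∈ wtSub R p w ↔ ∀ a b, (p : R) ^ w a b ∣ x a b := Iff.rfl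

theorem PRing.relIndex_wtSub (hR : PRing R p δ) (w w' : Fin s → Fin s → ℕ)
    (he : ∀ a b, w' a b = w a b + 1) :
    (wtSub R p w').relIndex (wtSub R p w) = p ^ (δ * s ^ 2) := by
  -- multiplication by `p ^ w` identifies `M / p M` with the quotient in question
  let f : Matrix (Fin s) (Fin s) R →+ Matrix (Fin s) (Fin s) R :=
    { toFun := fun x => Matrix.of fun a b => (p : R) ^ w a b * x a b
      map_zero' := by ext; simp
      map_add' := fun x y => by ext; simp [mul_add] }
  have hf : ∀ x a b, f x a b = (p : R) ^ w a b * x a b := fun _ _ _ => rfl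
  have hinj : Function.Injective f := by
    rw [injective_iff_map_eq_zero]
    intro x hx
    ext a b
    exact hR.reg_pow (w a b) (by rw [← hf, hx]; rfl)
  have h1 : wtSub R p w = AddSubgroup.map f ⊤ := by
    ext x
    constructor
    · intro hx
      choose y hy using hx
      exact ⟨Matrix.of y, AddSubgroup.mem_top _, by ext a b; rw [hf, hy]; rfl⟩
    · rintro ⟨y, -, rfl⟩ a b
      exact ⟨y a b, rfl⟩
  have h2 : wtSub R p w' = AddSubgroup.map f
      (((Ideal.Quotient.mk (Ideal.span {(p : R)})).mapMatrix (m := Fin s)).toAddMonoidHom).ker := by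
    have hker : ∀ y : Matrix (Fin s) (Fin s) R, y ∈ (((Ideal.Quotient.mk
        (Ideal.span {(p : R)})).mapMatrix (m := Fin s)).toAddMonoidHom).ker ↔
        ∀ a b, (p : R) ∣ y a b := by
      intro y
      rw [AddMonoidHom.mem_ker, ← Matrix.ext_iff]
      refine forall_congr' fun a => forall_congr' fun b => ?_
      rw [← Ideal.mem_span_singleton, ← Ideal.Quotient.eq_zero_iff_mem]
      rfl
    ext x
    constructor
    · intro hx
      choose y hy using hx
      refine ⟨Matrix.of fun a b => p * y a b, (hker _).2 fun a b => ⟨y a b, rfl⟩, ?_⟩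
      ext a b
      rw [hf, hy, he, Matrix.of_apply]
      ring
    · rintro ⟨y, hy, rfl⟩ a b
      obtain ⟨z, hz⟩ := (hker y).1 hy a b
      rw [hf, hz, he]
      exact ⟨z, by ring⟩
  rw [h1, h2, AddSubgroup.relIndex_map_map_of_injective _ _ hinj, AddSubgroup.relIndex_top_right,
    hR.index_matrix]

/-- The filtration of a matrix ring by divisibility conditions on the entries, given by weights:
the `i`-th term consists of the `x` such that `p ^ (w i a b)` divides `x a b`. -/
def PRing.filt (hR : PRing R p δ) (e : ℕ) (w : ℕ → Fin s → Fin s → ℕ)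
    (hmono : ∀ i j, i ≤ j → ∀ a b, w i a b ≤ w j a b)
    (hmul : ∀ i j a b c, w (i + j) a c ≤ w i a b + w j b c)
    (he : ∀ i a b, w (i + e) a b = w i a b + 1) :
    PFilt (Matrix (Fin s) (Fin s) R) p e (δ * s ^ 2) where
  a i := wtSub R p (w i)
  anti := fun i j hij x hx a b => (pow_dvd_pow _ (hmono i j hij a b)).trans (hx a b)
  mul := by
    intro i j x y hx hy a c
    rw [Matrix.mul_apply]
    refine Finset.dvd_sum fun b _ => ?_
    refine (pow_dvd_pow _ (hmul i j a b c)).trans ?_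
    rw [pow_add]
    exact mul_dvd_mul (hx a b) (hy b c)
  pmul := by
    intro i x
    refine forall_congr' fun a => forall_congr' fun b => ?_
    rw [he, ← nsmul_eq_mul, Matrix.smul_apply, nsmul_eq_mul, hR.dvd_iff]
  card_le := fun i => (hR.relIndex_wtSub _ _ (he i)).le
  card_ne := fun i => by
    rw [hR.relIndex_wtSub _ _ (he i)]
    exact pow_ne_zero _ hR.prime.ne_zero

end filt

end GenBound

namespace GenBound

section red
variable {R : Type*} [CommRing R] {p δ s : ℕ}

/-- Reduction of invertible matrices modulo `p ^ n`. -/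
def red (R : Type*) [CommRing R] (p s n : ℕ) :
    GL (Fin s) R →* GL (Fin s) (R ⧸ Ideal.span {(p : R) ^ n}) :=
  Matrix.GeneralLinearGroup.map (Ideal.Quotient.mk (Ideal.span {(p : R) ^ n}))

theorem red_eq_one_iff {n : ℕ} {g : GL (Fin s) R} :
    red R p s n g = 1 ↔ ∀ a b, (p : R) ^ n ∣ (g.val - 1) a b := by
  rw [Units.ext_iff, ← Matrix.ext_iff]
  refine forall_congr' fun a => forall_congr' fun b => ?_
  have h1 : (red R p s n g).val a b = Ideal.Quotient.mk (Ideal.span {(p : R) ^ n}) (g.val a b) :=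
    rfl
  have h2 : (1 : Matrix (Fin s) (Fin s) (R ⧸ Ideal.span {(p : R) ^ n})) a b =
      Ideal.Quotient.mk (Ideal.span {(p : R) ^ n}) ((1 : Matrix (Fin s) (Fin s) R) a b) := by
    rw [Matrix.one_apply, Matrix.one_apply]
    split_ifs <;> simp
  rw [h1, Units.val_one, h2, Ideal.Quotient.eq, Ideal.mem_span_singleton, Matrix.sub_apply]

theorem PRing.card_pow (hR : PRing R p δ) (n : ℕ) :
    Nat.card (R ⧸ Ideal.span {(p : R) ^ n}) = p ^ (δ * n) := by
  let A : ℕ → AddSubgroup R := fun n => (Ideal.span {(p : R) ^ n}).toAddSubgroup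
  have hA : ∀ n x, x ∈ A n ↔ (p : R) ^ n ∣ x := fun n x => Ideal.mem_span_singleton
  have hc : ∀ n, Nat.card (R ⧸ Ideal.span {(p : R) ^ n}) = (A n).index := fun n => rfl
  rw [hc]
  induction n with
  | zero =>
    have : A 0 = ⊤ := by
      rw [eq_top_iff]; intro x _; simp [hA]
    simp [this]
  | succ n ih =>
    let f : R →+ R := AddMonoidHom.mulLeft (p : R)
    have hinj : Function.Injective f := by
      rw [injective_iff_map_eq_zero]; exact hR.reg
    have h1 : ∀ n, A (n + 1) = (A n).map f := by
      intro n
      ext x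
      rw [hA]
      constructor
      · rintro ⟨y, rfl⟩
        exact ⟨(p : R) ^ n * y, (hA _ _).2 ⟨y, rfl⟩, by simp only [f, AddMonoidHom.coe_mulLeft]; ring⟩
      · rintro ⟨y, hy, rfl⟩
        exact (hR.dvd_iff n y).2 ((hA _ _).1 hy)
    have h0 : A 0 = ⊤ := by
      rw [eq_top_iff]; intro x _; simp [hA]
    have h2 := AddSubgroup.relIndex_mul_relIndex (A (n + 1)) (A 1) ⊤
      (fun x hx => (hA _ _).2 ((pow_dvd_pow _ (by omega)).trans ((hA _ _).1 hx))) le_top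
    rw [h1 n, h1 0, h0, AddSubgroup.relIndex_map_map_of_injective _ _ hinj,
      AddSubgroup.relIndex_top_right, AddSubgroup.relIndex_top_right,
      AddSubgroup.relIndex_top_right, ih] at h2
    rw [h1 n, ← h2, ← h0, ← h1 0]
    have h3 : (A 1).index = p ^ δ := by
      rw [← hR.card, ← hc, pow_one]
    rw [zero_add, h3, ← pow_add]
    ring_nf

theorem PRing.finite_quot (hR : PRing R p δ) (n : ℕ) : Finite (R ⧸ Ideal.span {(p : R) ^ n}) :=
  Nat.finite_of_card_ne_zero (by rw [hR.card_pow]; exact pow_ne_zero _ hR.prime.ne_zero)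

theorem PRing.finite_GL (hR : PRing R p δ) (n : ℕ) :
    Finite (GL (Fin s) (R ⧸ Ideal.span {(p : R) ^ n})) := by
  have := hR.finite_quot n
  have : Finite (Matrix (Fin s) (Fin s) (R ⧸ Ideal.span {(p : R) ^ n})) :=
    inferInstanceAs (Finite (Fin s → Fin s → R ⧸ Ideal.span {(p : R) ^ n}))
  exact Finite.of_injective (fun g : GL (Fin s) (R ⧸ Ideal.span {(p : R) ^ n}) => g.val)
    fun _ _ h => Units.ext h

theorem PRing.card_GL_le (hR : PRing R p δ) (n : ℕ)
    (K : Subgroup (GL (Fin s) (R ⧸ Ideal.span {(p : R) ^ n}))) :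
    Nat.card K ≤ p ^ (δ * n * s ^ 2) := by
  have := hR.finite_quot n
  have h1 : Nat.card (Fin s → Fin s → R ⧸ Ideal.span {(p : R) ^ n}) = p ^ (δ * n * s ^ 2) := by
    rw [Nat.card_fun, Nat.card_fun, hR.card_pow, Nat.card_fin, ← pow_mul, ← pow_mul]
    ring_nf
  rw [← h1]
  exact Nat.card_le_card_of_injective
    (fun (g : K) => (fun i j => g.1.val i j : Fin s → Fin s → R ⧸ Ideal.span {(p : R) ^ n}))
    fun x y h => Subtype.ext (Units.ext (Matrix.ext fun i j => congrFun (congrFun h i) j))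

/-- Generators for subgroups of a principal congruence subgroup. -/
theorem PRing.SG_gamma (hR : PRing R p δ) {i : ℕ} (hi : 1 ≤ i) (hpi : 2 ≤ (p - 1) * i)
    (X : Subgroup (GL (Fin s) R)) (hX : X ≤ (red R p s i).ker) (n : ℕ) :
    SG (X.map (red R p s n)) (δ * s ^ 2) := by
  let F := hR.filt (s := s) 1 (fun i _ _ => i) (fun _ _ h _ _ => h) (fun _ _ _ _ _ => le_rfl)
    (fun _ _ _ => rfl)
  refine F.SG_map hR.prime le_rfl hi hpi (fun g hg => ?_) (red R p s n) n fun g _ h => ?_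
  · exact red_eq_one_iff.1 (hX hg)
  · exact red_eq_one_iff.2 h

/-- Generators for subgroups of the pro-`p` Iwahori subgroup, that is, of the group of matrices
which are upper unitriangular modulo `p`. -/
theorem PRing.SG_iwahori (hR : PRing R p δ) (hs : 1 ≤ s) (hps : s + 2 ≤ p)
    (X : Subgroup (GL (Fin s) R)) (hX : ∀ g ∈ X, ∀ a b, b ≤ a → (p : R) ∣ (g.val - 1) a b) (n : ℕ) :
    SG (X.map (red R p s n)) (δ * s ^ 2) := by
  let F := hR.filt (s := s) s (fun i a b => (i + a.val + (s - 1 - b.val)) / s)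
    (fun i j h a b => Nat.div_le_div_right (by omega))
    (fun i j a b c => by
      rw [← Nat.lt_add_one_iff, Nat.div_lt_iff_lt_mul (by omega)]
      have h1 := Nat.lt_div_mul_add (a := i + a.val + (s - 1 - b.val)) (show 0 < s by omega)
      have h2 := Nat.lt_div_mul_add (a := j + b.val + (s - 1 - c.val)) (show 0 < s by omega)
      rw [add_mul, add_mul, one_mul]
      omega)
    (fun i a b => by
      rw [← Nat.add_div_right _ (show 0 < s by omega)]
      congr 1
      omega)
  refine F.SG_map hR.prime hs le_rfl (by omega) (fun g hg a b => ?_) (red R p s n)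
    (n * s + s) fun g _ h => ?_
  · change (p : R) ^ ((1 + a.val + (s - 1 - b.val)) / s) ∣ _
    by_cases hab : b ≤ a
    · have : (1 + a.val + (s - 1 - b.val)) / s ≤ 1 := by
        rw [← Nat.lt_add_one_iff, Nat.div_lt_iff_lt_mul (by omega)]
        omega
      exact (pow_dvd_pow _ this).trans (by rw [pow_one]; exact hX g hg a b hab)
    · have : (1 + a.val + (s - 1 - b.val)) / s = 0 := by
        rw [Nat.div_eq_zero_iff]
        right
        rw [not_le, Fin.lt_def] at hab
        omega
      rw [this, pow_zero]
      exact one_dvd _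
  · rw [red_eq_one_iff]
    intro a b
    refine (pow_dvd_pow _ ?_).trans (h a b)
    rw [Nat.le_div_iff_mul_le (by omega)]
    omega

end red

end GenBound

/-! ### The unitriangular Sylow subgroup of `GL_s(𝔽_p)` -/

namespace GenBound

section unitri
variable {p s : ℕ}

/-- Upper unitriangular matrices over `𝔽_p`. -/
def unitri (p s : ℕ) [Fact p.Prime] : Subgroup (GL (Fin s) (ZMod p)) :=
  let S : Submonoid (GL (Fin s) (ZMod p)) :=
    { carrier := {g | ∀ a b, b ≤ a → (g.val - 1) a b = 0}
      one_mem' := fun a b _ => by simp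
      mul_mem' := by
        intro g h hg hh a b hab
        have h1 : (g * h).val - 1 = (g.val - 1) + (h.val - 1) + (g.val - 1) * (h.val - 1) := by
          rw [Units.val_mul]; noncomm_ring
        rw [h1, Matrix.add_apply, Matrix.add_apply, hg a b hab, hh a b hab, Matrix.mul_apply,
          Finset.sum_eq_zero, add_zero, add_zero]
        intro c _
        rcases le_or_gt c a with hc | hc
        · rw [hg a c hc, zero_mul]
        · rw [hh c b (hab.trans hc.le), mul_zero] }
  { S with
    inv_mem' := by
      intro g hg
      have h1 : g⁻¹ ∈ Submonoid.powers g :=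
        mem_powers_iff_mem_zpowers.2 (inv_mem (Subgroup.mem_zpowers g))
      exact (Submonoid.powers_le (P := S)).2 hg h1 }

theorem mem_unitri [Fact p.Prime] {g : GL (Fin s) (ZMod p)} :
    g ∈ unitri p s ↔ ∀ a b, b ≤ a → (g.val - 1) a b = 0 := Iff.rfl

theorem card_unitri [Fact p.Prime] : Nat.card (unitri p s) = p ^ (s * (s - 1) / 2) := by
  have hcard : Nat.card ((Σ j : Fin s, Fin j.val) → ZMod p) = p ^ (s * (s - 1) / 2) := by
    rw [Nat.card_fun, Nat.card_zmod, Nat.card_eq_fintype_card, Fintype.card_sigma]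
    simp only [Fintype.card_fin]
    rw [Fin.sum_univ_eq_sum_range (fun i => i), Finset.sum_range_id]
  rw [← hcard]
  refine Nat.card_congr (Equiv.ofBijective
    (fun g => fun x => g.1.val ⟨x.2.val, x.2.2.trans x.1.2⟩ x.1) ⟨?_, ?_⟩)
  · intro g h hgh
    apply Subtype.ext
    apply Units.ext
    ext a b
    rcases le_or_gt b a with hab | hab
    · have h1 := mem_unitri.1 g.2 a b hab
      have h2 := mem_unitri.1 h.2 a b hab
      rw [Matrix.sub_apply, sub_eq_zero] at h1 h2
      rw [h1, h2]
    · exact congrFun hgh ⟨b, ⟨a.val, hab⟩⟩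
  · intro y
    let m : Matrix (Fin s) (Fin s) (ZMod p) := Matrix.of fun a b =>
      if h : a < b then y ⟨b, ⟨a.val, h⟩⟩ else (1 : Matrix (Fin s) (Fin s) (ZMod p)) a b
    have hm : ∀ a b, b ≤ a → m a b = (1 : Matrix (Fin s) (Fin s) (ZMod p)) a b := by
      intro a b hab
      simp [m, not_lt.2 hab]
    have hdet : m.det = 1 := by
      rw [Matrix.det_of_isUpperTriangular]
      · exact Finset.prod_eq_one fun i _ => by rw [hm i i le_rfl, Matrix.one_apply_eq]
      · intro a b hab
        have hab' : b < a := hab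
        rw [hm a b hab'.le, Matrix.one_apply_ne hab'.ne']
    refine ⟨⟨Matrix.GeneralLinearGroup.mkOfDetNeZero m (by rw [hdet]; exact one_ne_zero), ?_⟩, ?_⟩
    · intro a b hab
      change (m - 1) a b = 0
      rw [Matrix.sub_apply, hm a b hab, sub_self]
    · funext x
      obtain ⟨b, a⟩ := x
      have : (⟨a.val, a.2.trans b.2⟩ : Fin s) < b := a.2
      change m _ _ = _
      simp [m, this]

/-- Every `p`-subgroup of `GL_s(𝔽_p)` can be conjugated into the unitriangular group. -/
theorem exists_conj_unitri (hp : p.Prime) (hs : 1 ≤ s) (P : Subgroup (GL (Fin s) (ZMod p)))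
    (hP : IsPGroup p P) :
    ∃ c : GL (Fin s) (ZMod p), ∀ g ∈ P, ∀ a b, b ≤ a → ((c * g * c⁻¹).val - 1) a b = 0 := by
  have := Fact.mk hp
  obtain ⟨A, hA, hpA, -⟩ := card_GL_fact hp hs
  have hfac : (Nat.card (GL (Fin s) (ZMod p))).factorization p = s * (s - 1) / 2 := by
    rw [hA, Nat.factorization_mul (pow_ne_zero _ hp.ne_zero) (by rintro rfl; exact hpA (dvd_zero p)),
      Finsupp.add_apply, Nat.Prime.factorization_pow hp, Finsupp.single_eq_same,
      Nat.factorization_eq_zero_of_not_dvd hpA, add_zero]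
  let U : Sylow p (GL (Fin s) (ZMod p)) :=
    Sylow.ofCard (unitri p s) (by rw [hfac]; exact card_unitri)
  obtain ⟨Q, hQ⟩ := hP.exists_le_sylow
  obtain ⟨c, hc⟩ := MulAction.exists_smul_eq (GL (Fin s) (ZMod p)) Q U
  refine ⟨c, fun g hg => ?_⟩
  have h1 : c * g * c⁻¹ ∈ ((c • Q : Sylow p (GL (Fin s) (ZMod p))) : Subgroup _) := by
    rw [Sylow.coe_subgroup_smul]
    exact Subgroup.smul_mem_pointwise_smul g (MulAut.conj c) _ (hQ hg)
  rw [hc] at h1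
  exact mem_unitri.1 h1

end unitri

end GenBound

/-! ### Generators of linear groups over `R / p ^ n` -/

namespace GenBound

section main
variable {R : Type*} [CommRing R] {p δ s : ℕ}

theorem PRing.SG_of_gamma (hR : PRing R p δ) {i a : ℕ} (hi : 1 ≤ i) (hpi : 2 ≤ (p - 1) * i)
    (H : Subgroup (GL (Fin s) R)) (h : SG (H.map (red R p s i)) a) (n : ℕ) :
    SG (H.map (red R p s n)) (a + δ * s ^ 2) :=
  ((RSG.of_map _ h).trans
    (RSG.of_map _ (hR.SG_gamma hi hpi (H ⊓ (red R p s i).ker) inf_le_right n))).map_sg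

/-- Restriction of scalars to `𝔽_p`. -/
theorem exists_restrict_aux {A : Type*} [CommRing A] [Finite A] (hp : p.Prime)
    (hpA : (p : A) = 0) (hcard : Nat.card A = p ^ δ) (hδ : 1 ≤ δ) (s : ℕ) :
    ∃ φ : GL (Fin s) A →* GL (Fin (δ * s)) (ZMod p), Function.Injective φ := by
  have := Fact.mk hp
  have hnt : Nontrivial A := by
    rw [← Finite.one_lt_card_iff_nontrivial, hcard]
    exact Nat.one_lt_pow (by omega) hp.one_lt
  have hchar : CharP A p := (CharP.charP_iff_prime_eq_zero hp).2 hpA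
  let alg : Algebra (ZMod p) A := ZMod.algebra A p
  have hfr : Module.finrank (ZMod p) (Fin s → A) = δ * s := by
    have h1 := Module.natCard_eq_pow_finrank (K := ZMod p) (V := Fin s → A)
    rw [Nat.card_fun, hcard, Nat.card_zmod, Nat.card_fin, ← pow_mul] at h1
    exact (Nat.pow_right_injective hp.two_le h1).symm
  let ρ : Representation (ZMod p) (GL (Fin s) A) (Fin s → A) :=
    { toFun := fun g => (Matrix.toLin' g.val).restrictScalars (ZMod p)
      map_one' := by ext; simp
      map_mul' := fun g h => by
        refine LinearMap.ext fun v => ?_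
        simp [Matrix.mulVec_mulVec] }
  obtain ⟨φ, hφ⟩ : ∃ φ : GL (Fin s) A →* GL (Fin (δ * s)) (ZMod p), ∀ g, φ g = 1 ↔ ρ g = 1 :=
    hfr ▸ exists_GL_of_rep ρ
  refine ⟨φ, (injective_iff_map_eq_one φ).2 fun g hg => ?_⟩
  have h1 := (hφ g).1 hg
  apply Units.ext
  apply Matrix.toLin'.injective
  refine LinearMap.ext fun v => ?_
  have := LinearMap.congr_fun h1 v
  rw [Units.val_one, Matrix.toLin'_one]
  exact this

theorem PRing.exists_restrict (hR : PRing R p δ) (s : ℕ) :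
    ∃ φ : GL (Fin s) (R ⧸ Ideal.span {(p : R) ^ 1}) →* GL (Fin (δ * s)) (ZMod p),
      Function.Injective φ := by
  have hfin := hR.finite_quot 1
  refine exists_restrict_aux hR.prime ?_ ((hR.card_pow 1).trans (by rw [mul_one])) hR.pos s
  have h : Ideal.Quotient.mk (Ideal.span {(p : R) ^ 1}) (p : R) = 0 := by
    rw [Ideal.Quotient.eq_zero_iff_mem, Ideal.mem_span_singleton, pow_one]
  rwa [map_natCast] at h

theorem PRing.SG_two_three (hR : PRing R p δ) (hp : p < 5) (H : Subgroup (GL (Fin s) R)) (n : ℕ) :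
    SG (H.map (red R p s n)) (3 * δ * s ^ 2) := by
  have hcase : p = 2 ∨ p = 3 := by
    have h1 := hR.prime.two_le
    have h2 : p ≠ 4 := by rintro rfl; exact absurd hR.prime (by decide)
    omega
  have hle : ∀ i, Nat.card (H.map (red R p s i)) ≤ p ^ (δ * i * s ^ 2) := fun i => hR.card_GL_le i _
  have key : ∀ i, Nat.card (H.map (red R p s i)) < 2 ^ (2 * δ * s ^ 2 + 1) →
      SG (H.map (red R p s i)) (2 * δ * s ^ 2) := by
    intro i hi
    have := hR.finite_GL (s := s) i
    rw [← SG.top_iff]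
    exact SG_log2 hi
  rcases hcase with rfl | rfl
  · have := hR.SG_of_gamma (i := 2) (by norm_num) (by norm_num) H (key 2 ((hle 2).trans_lt
      (Nat.pow_lt_pow_right (by norm_num) (by rw [mul_comm δ 2]; omega)))) n
    exact this.mono (by nlinarith)
  · have := hR.SG_of_gamma (i := 1) (by norm_num) (by norm_num) H (key 1 ((hle 1).trans_lt (by
      rw [pow_succ 2, mul_one, mul_assoc 2, pow_mul 2 2]
      calc 3 ^ (δ * s ^ 2) ≤ (2 ^ 2) ^ (δ * s ^ 2) := Nat.pow_le_pow_left (by norm_num) _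
        _ < (2 ^ 2) ^ (δ * s ^ 2) * 2 := lt_mul_of_one_lt_right (by positivity) (by norm_num)))) n
    exact this.mono (by nlinarith)

/-- The case of residue rings larger than `𝔽_p`. -/
theorem PRing.SG_ge_two (hR : PRing R p δ) (hδ : 2 ≤ δ) (hp : 5 ≤ p) (hs : 1 ≤ s)
    (H : Subgroup (GL (Fin s) R)) (n : ℕ) :
    SG (H.map (red R p s n)) (3 * δ ^ 3 * s ^ 2) := by
  have hfin := hR.finite_GL (s := s) 1
  have := Fact.mk hR.prime
  obtain ⟨φ, hφ⟩ := hR.exists_restrict s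
  obtain ⟨K, hK⟩ : ∃ K, K = H.map (red R p s 1) := ⟨_, rfl⟩
  have hN : 1 ≤ δ * s := Nat.mul_pos (by omega) hs
  have P : Sylow p K := default
  obtain ⟨L, hL, hL'⟩ := exists_pgroup_sup hR.prime hN (φ.comp K.subtype)
    (hφ.comp K.subtype_injective) P
  have h1 := (SG_sylow_linear hR.prime hN (φ.comp K.subtype) (hφ.comp K.subtype_injective) P).sup hL'
  rw [hL, SG.top_iff, hK] at h1
  refine (hR.SG_of_gamma le_rfl (by omega) H h1 n).mono ?_
  have h2 : δ * s * (δ * s - 1) / 2 ≤ (δ * s) ^ 2 := by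
    refine (Nat.div_le_self _ _).trans ?_
    rw [pow_two]
    exact Nat.mul_le_mul_left _ (Nat.sub_le _ _)
  have h3 : δ * s ^ 2 ≤ δ ^ 2 * s ^ 2 := Nat.mul_le_mul_right _ (by nlinarith)
  have h4 : 4 * δ ^ 2 ≤ 3 * δ ^ 3 := by nlinarith [sq_nonneg δ]
  have h5 := Nat.mul_le_mul_right (s ^ 2) h4
  nlinarith

/-- The case of residue ring `𝔽_p` with `p` small compared with `s`. -/
theorem PRing.SG_one_small (hR : PRing R p 1) (hp : 5 ≤ p) (hps : p ≤ s + 1)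
    (H : Subgroup (GL (Fin s) R)) (n : ℕ) :
    SG (H.map (red R p s n)) (3 * s ^ 2) := by
  have hfin := hR.finite_GL (s := s) 1
  obtain ⟨φ, hφ⟩ := hR.exists_restrict s
  obtain ⟨K, hK⟩ : ∃ K, K = H.map (red R p s 1) := ⟨_, rfl⟩
  have h1 := SG_small_prime hR.prime hp (by omega) (φ.comp K.subtype) (hφ.comp K.subtype_injective)
  rw [SG.top_iff, hK] at h1
  exact (hR.SG_of_gamma le_rfl (by omega) H h1 n).mono (by nlinarith)

theorem map_inf_comap {G G' : Type*} [Group G] [Group G'] {f : G →* G'} {H : Subgroup G}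
    {L : Subgroup G'} (h : L ≤ H.map f) : (H ⊓ L.comap f).map f = L := by
  apply le_antisymm
  · rintro _ ⟨x, hx, rfl⟩
    exact hx.2
  · intro y hy
    obtain ⟨x, hx, rfl⟩ := h hy
    exact ⟨x, ⟨hx, hy⟩, rfl⟩

/-- The case of residue ring `𝔽_p` with `p` large compared with `s`: the preimage of a Sylow
`p`-subgroup of the reduction is conjugate into the pro-`p` Iwahori subgroup. -/
theorem PRing.SG_one_large (hR : PRing R p 1) (hs : 1 ≤ s) (hps : s + 2 ≤ p)
    (H : Subgroup (GL (Fin s) R)) (n : ℕ) :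
    SG (H.map (red R p s n)) (3 * s ^ 2) := by
  have := Fact.mk hR.prime
  -- the residue map
  obtain ⟨q, hqs, hqk⟩ : ∃ q : R →+* ZMod p, Function.Surjective q ∧ ∀ x, q x = 0 ↔ (p : R) ∣ x := by
    have hcard : Nat.card (R ⧸ Ideal.span {(p : R)}) = p := by rw [hR.card, pow_one]
    have hfin : Finite (R ⧸ Ideal.span {(p : R)}) := Nat.finite_of_card_ne_zero (by
      rw [hcard]; exact hR.prime.ne_zero)
    have hfin' := Fintype.ofFinite (R ⧸ Ideal.span {(p : R)})
    let e := ZMod.ringEquivOfPrime (R ⧸ Ideal.span {(p : R)}) hR.prime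
      (by rw [← Nat.card_eq_fintype_card, hcard])
    refine ⟨e.symm.toRingHom.comp (Ideal.Quotient.mk (Ideal.span {(p : R)})),
      e.symm.surjective.comp Ideal.Quotient.mk_surjective, fun x => ?_⟩
    rw [← Ideal.mem_span_singleton, ← Ideal.Quotient.eq_zero_iff_mem]
    exact map_eq_zero_iff e.symm e.symm.injective
  obtain ⟨π, hπ⟩ : ∃ π : GL (Fin s) R →* GL (Fin s) (ZMod p),
    ∀ g a b, (π g).val a b = q (g.val a b) := ⟨Matrix.GeneralLinearGroup.map q, fun _ _ _ => rfl⟩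
  obtain ⟨K, hK⟩ : ∃ K, K = H.map π := ⟨_, rfl⟩
  have P : Sylow p K := default
  obtain ⟨L, hL, hL'⟩ := exists_pgroup_sup hR.prime hs K.subtype K.subtype_injective P
  -- transport `P` and `L` to subgroups of `GL_s(𝔽_p)`
  obtain ⟨P', hP'⟩ : ∃ P' : Subgroup (GL (Fin s) (ZMod p)),
    P' = (P : Subgroup K).map K.subtype := ⟨_, rfl⟩
  have hPp : IsPGroup p P' := hP' ▸ P.isPGroup'.map _
  have hsup : P' ⊔ L.map K.subtype = H.map π := by
    rw [hP', ← Subgroup.map_sup, hL, ← MonoidHom.range_eq_map, Subgroup.range_subtype, hK]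
  have hL2 := hL'.map K.subtype
  have hLH : L.map K.subtype ≤ H.map π := hsup ▸ le_sup_right
  have hPH : P' ≤ H.map π := hsup ▸ le_sup_left
  obtain ⟨X, hX⟩ : ∃ X, X = H ⊓ P'.comap π := ⟨_, rfl⟩
  -- lift the remaining generators to `H`
  have hlift : L.map K.subtype = (H ⊓ (L.map K.subtype).comap π).map π := by
    exact (map_inf_comap hLH).symm
  rw [hlift] at hL2
  obtain ⟨L₀, hL₀, hL₀g, hL₀m⟩ := hL2.lift
  have hHsup : X ⊔ L₀ = H := by
    apply le_antisymm (sup_le (hX ▸ inf_le_left) (hL₀.trans inf_le_left))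
    intro h hh
    have h1 : π h ∈ (X ⊔ L₀).map π := by
      have hXm : X.map π = P' := by
        rw [hX, map_inf_comap hPH]
      rw [Subgroup.map_sup, hXm, hL₀m, ← hlift, hsup]
      exact Subgroup.mem_map_of_mem π hh
    obtain ⟨y, hy, hyh⟩ := h1
    have hyH : y ∈ H := (sup_le (hX ▸ inf_le_left) (hL₀.trans inf_le_left) : X ⊔ L₀ ≤ H) hy
    have h2 : y⁻¹ * h ∈ X := by
      rw [hX]
      refine ⟨H.mul_mem (H.inv_mem hyH) hh, ?_⟩
      change π (y⁻¹ * h) ∈ P'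
      rw [map_mul, map_inv, hyh, inv_mul_cancel]
      exact one_mem _
    have h3 := (X ⊔ L₀).mul_mem hy ((le_sup_left : X ≤ X ⊔ L₀) h2)
    rwa [mul_inv_cancel_left] at h3
  -- conjugate `X` into the Iwahori subgroup
  obtain ⟨c, hc⟩ := exists_conj_unitri hR.prime hs P' hPp
  obtain ⟨c₀, hc₀⟩ : ∃ c₀, π c₀ = c := by
    choose y hy using fun a b => hqs (c.val a b)
    choose z hz using fun a b => hqs (c⁻¹.val a b)
    have hdet : IsUnit (Matrix.of y).det := by
      apply hR.unit _ (Matrix.of z).det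
      rw [← hqk, map_sub, map_mul, map_one, RingHom.map_det, RingHom.map_det]
      have h1 : q.mapMatrix (Matrix.of y) = c.val := Matrix.ext hy
      have h2 : q.mapMatrix (Matrix.of z) = c⁻¹.val := Matrix.ext hz
      rw [h1, h2, ← Matrix.det_mul, ← Units.val_mul, mul_inv_cancel, Units.val_one,
        Matrix.det_one, sub_self]
    let u := Matrix.GeneralLinearGroup.mk'' (Matrix.of y) hdet
    refine ⟨u, Units.ext (Matrix.ext fun a b => ?_)⟩
    rw [hπ]
    exact hy a b
  have hXc := hR.SG_iwahori hs hps (X.map (MulAut.conj c₀).toMonoidHom) (by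
    rintro _ ⟨x, hx, rfl⟩ a b hab
    have hx' : π x ∈ P' := by
      rw [hX] at hx
      exact hx.2
    have h1 := hc _ hx' a b hab
    rw [← hc₀, ← map_inv, ← map_mul, ← map_mul] at h1
    rw [← hqk, Matrix.sub_apply, map_sub]
    rw [Matrix.sub_apply, hπ] at h1
    rw [← h1]
    congr 1
    rw [Matrix.one_apply, Matrix.one_apply]
    split_ifs <;> simp) n
  have hXn : SG (X.map (red R p s n)) (1 * s ^ 2) := by
    have h1 := hXc.map (MulAut.conj (red R p s n c₀)⁻¹).toMonoidHom
    rw [Subgroup.map_map, Subgroup.map_map] at h1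
    convert h1 using 2
    ext1 x
    simp [mul_assoc]
  rw [← hHsup, Subgroup.map_sup]
  exact (hXn.sup (hL₀g.map _)).mono (by omega)

/-- The bound at every finite level. -/
theorem PRing.SG_main (hR : PRing R p δ) (hs : 1 ≤ s) (H : Subgroup (GL (Fin s) R)) (n : ℕ) :
    SG (H.map (red R p s n)) (3 * δ ^ 3 * s ^ 2) := by
  rcases lt_or_ge p 5 with hp | hp
  · refine (hR.SG_two_three hp H n).mono (Nat.mul_le_mul_right _ (Nat.mul_le_mul_left _ ?_))
    exact Nat.le_self_pow (by norm_num) δ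
  rcases hR.pos.eq_or_lt with h | h
  · subst h
    rcases le_or_gt p (s + 1) with hps | hps
    · simpa using hR.SG_one_small hp hps H n
    · simpa using hR.SG_one_large hs hps H n
  · exact hR.SG_ge_two h hp hs H n

end main

end GenBound

namespace GenBound

/-! ### The completions of a number field at its finite places -/

section completion
open IsDedekindDomain NumberField HeightOneSpectrum WithZero Topology
variable {k : Type*} [Field k] [NumberField k] {v : HeightOneSpectrum (𝓞 k)}

theorem dvd_of_valued_le {a b : v.adicCompletionIntegers k}
    (h : Valued.v a.val ≤ Valued.v b.val) : b ∣ a :=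
  (adicCompletionIntegers.integers k v).dvd_of_le h

theorem valued_le_of_dvd {a b : v.adicCompletionIntegers k} (h : b ∣ a) :
    Valued.v a.val ≤ Valued.v b.val :=
  (adicCompletionIntegers.integers k v).le_of_dvd h

theorem valued_lt_mem_nhds {y : v.adicCompletion k} (hy : y ≠ 0) (x : v.adicCompletion k) :
    {z : v.adicCompletion k | Valued.v (z - x) < Valued.v y} ∈ 𝓝 x := by
  rw [Valued.mem_nhds]
  have h0 : (Valued.v : Valuation (v.adicCompletion k) ℤᵐ⁰).restrict y ≠ 0 := by
    intro h
    apply hy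
    rw [← (Valued.v : Valuation (v.adicCompletion k) ℤᵐ⁰).zero_iff,
      ← Valuation.embedding_restrict, h, map_zero]
  exact ⟨Units.mk0 _ h0, fun z hz => Valuation.restrict_lt_iff _ |>.1 hz⟩

/-- The algebraic integers are dense in the ring of integers of the completion. -/
theorem approx_integer (x : v.adicCompletionIntegers k) {b : v.adicCompletionIntegers k}
    (hb : b ≠ 0) :
    ∃ r : 𝓞 k, b ∣ x - algebraMap (𝓞 k) (v.adicCompletionIntegers k) r := by
  have hb' : b.val ≠ 0 := fun h => hb (Subtype.ext h)
  have hb1 : Valued.v b.val ≤ 1 := b.2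
  -- first approximate by an element of `k`
  obtain ⟨_, hz, z, rfl⟩ := (mem_closure_iff_nhds.1 ((denseRange_algebraMap (K := k) v) x.val)) _
    (valued_lt_mem_nhds hb' x.val)
  have hzx : Valued.v ((z : v.adicCompletion k) - x.val) < Valued.v b.val := hz
  have hz1 : v.valuation k z ≤ 1 := by
    rw [← valuedAdicCompletion_eq_valuation']
    have := (Valued.v : Valuation (v.adicCompletion k) ℤᵐ⁰).map_add
      ((z : v.adicCompletion k) - x.val) x.val
    rw [sub_add_cancel] at this
    exact this.trans (max_le (hzx.le.trans hb1) x.2)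
  obtain ⟨r, hr⟩ := exists_valuation_sub_lt_of_integer v hz1
    (Units.mk0 (Valued.v b.val) ((Valuation.ne_zero_iff _).2 hb'))
  refine ⟨r, dvd_of_valued_le ?_⟩
  have hr' : Valued.v (((algebraMap (𝓞 k) k r - z : k)) : v.adicCompletion k) < Valued.v b.val := by
    rw [valuedAdicCompletion_eq_valuation']
    exact hr
  have e : (x - algebraMap (𝓞 k) (v.adicCompletionIntegers k) r).val =
      -(((algebraMap (𝓞 k) k r - z : k)) : v.adicCompletion k) -
        ((z : v.adicCompletion k) - x.val) := by
    have h1 : ((algebraMap (𝓞 k) k r - z : k) : v.adicCompletion k) =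
        ((algebraMap (𝓞 k) k r : k) : v.adicCompletion k) - (z : v.adicCompletion k) :=
      map_sub (algebraMap k (v.adicCompletion k)) _ _
    rw [h1]
    have h2 : (x - algebraMap (𝓞 k) (v.adicCompletionIntegers k) r).val =
      x.val - ((algebraMap (𝓞 k) k r : k) : v.adicCompletion k) := rfl
    rw [h2]
    ring
  rw [e]
  refine (Valuation.map_sub _ _ _).trans (max_le ?_ hzx.le)
  rw [Valuation.map_neg]
  exact hr'.le

theorem isOpen_dvd {a : v.adicCompletionIntegers k} (ha : a ≠ 0) :
    IsOpen {x : v.adicCompletionIntegers k | a ∣ x} := by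
  rw [isOpen_iff_mem_nhds]
  intro x hx
  have h := continuous_subtype_val.continuousAt.preimage_mem_nhds
    (valued_lt_mem_nhds (v := v) (fun h => ha (Subtype.ext h)) x.val)
  filter_upwards [h] with y hy
  have h1 : a ∣ y - x := dvd_of_valued_le (le_of_lt hy)
  have := dvd_add h1 hx
  rwa [sub_add_cancel] at this

/-- The ideals `a ^ n 𝒪ᵥ` form a basis of neighbourhoods of `0`. -/
theorem exists_pow_dvd_subset {a : v.adicCompletionIntegers k} (ha1 : Valued.v a.val < 1)
    {U : Set (v.adicCompletionIntegers k)} (hU : U ∈ 𝓝 0) :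
    ∃ n : ℕ, ∀ x, a ^ n ∣ x → x ∈ U := by
  rw [nhds_subtype, Filter.mem_comap] at hU
  obtain ⟨V, hV, hVU⟩ := hU
  obtain ⟨y, hy⟩ := Valued.mem_nhds_zero.1 hV
  obtain ⟨n, hn⟩ := exists_pow_lt₀ ha1
    (Units.map (MonoidWithZeroHom.ValueGroup₀.embedding
      (f := (.ofClass (Valued.v : Valuation (v.adicCompletion k) ℤᵐ⁰)))) y)
  refine ⟨n, fun x hx => hVU (hy ?_)⟩
  rw [Set.mem_ofPred_eq, Valuation.restrict_lt_iff_lt_embedding]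
  refine lt_of_le_of_lt (valued_le_of_dvd hx) ?_
  rw [← map_pow] at hn
  exact hn

theorem natCast_ne_zero {p : ℕ} (hp : p.Prime) : ((p : ℕ) : v.adicCompletionIntegers k) ≠ 0 := by
  have h : ((p : ℕ) : 𝓞 k) ≠ 0 := Nat.cast_ne_zero.2 hp.ne_zero
  rw [← map_natCast (algebraMap (𝓞 k) (v.adicCompletionIntegers k))]
  exact fun h' => h ((FaithfulSMul.algebraMap_eq_zero_iff _ _).1 h')

theorem valued_natCast_lt_one {p : ℕ} (hv : (p : 𝓞 k) ∈ v.asIdeal) :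
    Valued.v ((p : ℕ) : v.adicCompletionIntegers k).val < 1 := by
  have h := (v.valuation_lt_one_iff_mem (K := k) (p : 𝓞 k)).2 hv
  rw [← valuedAdicCompletion_eq_valuation] at h
  convert h using 2
  simp

theorem compactSpace_integers {p : ℕ} (hp : p.Prime) (hv : (p : 𝓞 k) ∈ v.asIdeal) :
    CompactSpace (v.adicCompletionIntegers k) := by
  have hcl : IsClosed ((v.adicCompletionIntegers k : Set (v.adicCompletion k))) :=
    Valued.isClosed_valuationSubring _
  have hcomp : CompleteSpace (v.adicCompletionIntegers k) := hcl.completeSpace_coe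
  have hug : IsUniformAddGroup (v.adicCompletionIntegers k) :=
    inferInstanceAs (IsUniformAddGroup (v.adicCompletionIntegers k).toSubring.toAddSubgroup)
  refine ⟨isCompact_iff_totallyBounded_isComplete.2
    ⟨?_, completeSpace_iff_isComplete_univ.1 hcomp⟩⟩
  rw [totallyBounded_iff_subset_finite_iUnion_nhds_zero]
  intro U hU
  obtain ⟨n, hn⟩ := exists_pow_dvd_subset (valued_natCast_lt_one hv) hU
  have hpn : ((p : 𝓞 k) ^ n) ≠ 0 := pow_ne_zero _ (Nat.cast_ne_zero.2 hp.ne_zero)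
  have hfin : Finite (𝓞 k ⧸ Ideal.span {(p : 𝓞 k) ^ n}) :=
    Ideal.finiteQuotientOfFreeOfNeBot _ (by simpa using hpn)
  refine ⟨Set.range fun q : 𝓞 k ⧸ Ideal.span {(p : 𝓞 k) ^ n} =>
    algebraMap (𝓞 k) (v.adicCompletionIntegers k) q.out, Set.finite_range _, fun x _ => ?_⟩
  obtain ⟨r, hr⟩ := approx_integer x (pow_ne_zero n (natCast_ne_zero (k := k) (v := v) hp))
  rw [Set.mem_iUnion₂]
  refine ⟨_, ⟨Ideal.Quotient.mk _ r, rfl⟩, ?_⟩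
  rw [Set.mem_vadd_set_iff_neg_vadd_mem]
  apply hn
  have h1 : (p : 𝓞 k) ^ n ∣ r - (Ideal.Quotient.mk (Ideal.span {(p : 𝓞 k) ^ n}) r).out := by
    rw [← Ideal.mem_span_singleton, ← Ideal.Quotient.eq]
    exact (Quotient.out_eq _).symm
  have h2 := map_dvd (algebraMap (𝓞 k) (v.adicCompletionIntegers k)) h1
  rw [map_pow, map_natCast, map_sub] at h2
  have h3 := dvd_add hr h2
  rw [sub_add_sub_cancel] at h3
  rwa [vadd_eq_add, neg_add_eq_sub]

end completion

end GenBound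

namespace GenBound

/-! ### The semilocal ring of a rational prime -/

section semilocal
open IsDedekindDomain NumberField HeightOneSpectrum WithZero Topology
variable {k : Type*} [Field k] [NumberField k] {p : ℕ}

theorem finite_places (hp : p.Prime) :
    Finite {v : HeightOneSpectrum (𝓞 k) // (p : 𝓞 k) ∈ v.asIdeal} := by
  have h0 : Ideal.span {(p : 𝓞 k)} ≠ 0 := by simpa using hp.ne_zero
  refine ((Ideal.finite_factors h0).subset fun v hv => ?_).to_subtype
  rw [Set.mem_ofPred_eq, Ideal.dvd_span_singleton]
  exact hv

theorem card_quot_integers (k : Type*) [Field k] [NumberField k] (p : ℕ) :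
    Nat.card (𝓞 k ⧸ Ideal.span {(p : 𝓞 k)}) = p ^ Module.finrank ℚ k := by
  have h : Nat.card (𝓞 k ⧸ Ideal.span {(p : 𝓞 k)}) = Ideal.absNorm (Ideal.span {(p : 𝓞 k)}) := by
    rw [Ideal.absNorm_apply, Submodule.cardQuot_apply]
  rw [h, Ideal.absNorm_span_singleton, ← map_natCast (algebraMap ℤ (𝓞 k)), Algebra.norm_algebraMap,
    RingOfIntegers.rank, Int.natAbs_pow]
  simp

theorem nonempty_places (k : Type*) [Field k] [NumberField k] (hp : p.Prime) :
    Nonempty {v : HeightOneSpectrum (𝓞 k) // (p : 𝓞 k) ∈ v.asIdeal} := by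
  have h1 : Ideal.span {(p : 𝓞 k)} ≠ ⊤ := by
    intro h
    have h2 := card_quot_integers k p
    rw [h] at h2
    have h3 : Nat.card (𝓞 k ⧸ (⊤ : Ideal (𝓞 k))) = 1 := by
      rw [Nat.card_eq_one_iff_unique]
      exact ⟨Ideal.Quotient.subsingleton_iff.2 rfl, inferInstance⟩
    rw [h3] at h2
    have h4 : 1 < p ^ Module.finrank ℚ k :=
      Nat.one_lt_pow Module.finrank_pos.ne' hp.one_lt
    omega
  obtain ⟨M, hM, hpM⟩ := Ideal.exists_le_maximal _ h1
  rw [Ideal.span_singleton_le_iff_mem] at hpM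
  refine ⟨⟨⟨M, hM.isPrime, ?_⟩, hpM⟩⟩
  rintro rfl
  exact hp.ne_zero (by simpa using hpM)

theorem pi_dvd_iff {ι : Type*} {A : ι → Type*} [∀ i, CommRing (A i)] {a b : ∀ i, A i} :
    a ∣ b ↔ ∀ i, a i ∣ b i := by
  refine ⟨fun ⟨c, hc⟩ i => ⟨c i, by rw [hc]; rfl⟩, fun h => ?_⟩
  choose c hc using h
  exact ⟨c, funext hc⟩

/-- Simultaneous approximation modulo `p` at all places above `p`, by the Chinese remainder
theorem. -/
theorem approx_semilocal (hp : p.Prime)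
    (x : ∀ v : {v : HeightOneSpectrum (𝓞 k) // (p : 𝓞 k) ∈ v.asIdeal},
      v.1.adicCompletionIntegers k) :
    ∃ r : 𝓞 k, ∀ v, ((p : ℕ) : v.1.adicCompletionIntegers k) ∣
      x v - algebraMap (𝓞 k) (v.1.adicCompletionIntegers k) r := by
  have hfin := finite_places (k := k) hp
  have := Fintype.ofFinite {v : HeightOneSpectrum (𝓞 k) // (p : 𝓞 k) ∈ v.asIdeal}
  have hp0 : (p : 𝓞 k) ≠ 0 := Nat.cast_ne_zero.2 hp.ne_zero
  choose r hr using fun v => approx_integer (x v) (natCast_ne_zero (k := k) (v := v.1) hp)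
  obtain ⟨y, hy⟩ := IsDedekindDomain.exists_forall_sub_mem_ideal (s := Finset.univ)
    (fun v : {v : HeightOneSpectrum (𝓞 k) // (p : 𝓞 k) ∈ v.asIdeal} => v.1.asIdeal)
    (fun v => multiplicity v.1.asIdeal (Ideal.span {(p : 𝓞 k)}))
    (fun v _ => v.1.prime)
    (fun v _ w _ hvw h => hvw (Subtype.ext (HeightOneSpectrum.ext h)))
    (fun v => r v.1)
  refine ⟨y, fun v => ?_⟩
  have h1 := hy v (Finset.mem_univ _)
  rw [← intValuation_le_pow_iff_mem, ← v.1.intValuation_eq_exp_neg_multiplicity hp0,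
    ← valuation_of_algebraMap (K := k), ← valuation_of_algebraMap (K := k),
    ← valuedAdicCompletion_eq_valuation, ← valuedAdicCompletion_eq_valuation] at h1
  have h2 : ((p : ℕ) : v.1.adicCompletionIntegers k) ∣
      algebraMap (𝓞 k) (v.1.adicCompletionIntegers k) (y - r v) := by
    rw [← map_natCast (algebraMap (𝓞 k) (v.1.adicCompletionIntegers k))]
    exact dvd_of_valued_le h1
  have h3 := dvd_sub (hr v) h2
  rwa [map_sub, sub_sub, add_sub_cancel] at h3

theorem not_isUnit_natCast {v : HeightOneSpectrum (𝓞 k)} (hv : (p : 𝓞 k) ∈ v.asIdeal) :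
    ¬ IsUnit ((p : ℕ) : v.adicCompletionIntegers k) := fun h =>
  (valued_natCast_lt_one hv).ne (adicCompletionIntegers.isUnit_iff_valued_eq_one.1 h)

theorem exists_PRing (hp : p.Prime) : ∃ δ ≤ Module.finrank ℚ k,
    PRing (∀ v : {v : HeightOneSpectrum (𝓞 k) // (p : 𝓞 k) ∈ v.asIdeal},
      v.1.adicCompletionIntegers k) p δ := by
  let R := ∀ v : {v : HeightOneSpectrum (𝓞 k) // (p : 𝓞 k) ∈ v.asIdeal},
      v.1.adicCompletionIntegers k
  let f : 𝓞 k →+* R := RingHom.pi fun v => algebraMap (𝓞 k) (v.1.adicCompletionIntegers k)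
  have hf : ∀ x ∈ Ideal.span {(p : 𝓞 k)},
      ((Ideal.Quotient.mk (Ideal.span {(p : R)})).comp f) x = 0 := by
    intro x hx
    rw [RingHom.comp_apply, Ideal.Quotient.eq_zero_iff_mem, Ideal.mem_span_singleton]
    have := map_dvd f (Ideal.mem_span_singleton.1 hx)
    rwa [map_natCast] at this
  have hsurj : Function.Surjective
      (Ideal.Quotient.lift _ ((Ideal.Quotient.mk (Ideal.span {(p : R)})).comp f) hf) := by
    intro q
    obtain ⟨x, rfl⟩ := Ideal.Quotient.mk_surjective q
    obtain ⟨r, hr⟩ := approx_semilocal hp x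
    refine ⟨Ideal.Quotient.mk _ r, ?_⟩
    rw [Ideal.Quotient.lift_mk, RingHom.comp_apply, eq_comm, Ideal.Quotient.eq,
      Ideal.mem_span_singleton, pi_dvd_iff]
    intro v
    rw [Pi.natCast_apply]
    exact hr v
  have hcard : Nat.card (R ⧸ Ideal.span {(p : R)}) ∣ p ^ Module.finrank ℚ k := by
    rw [← card_quot_integers k p]
    exact AddSubgroup.card_dvd_of_surjective
      (Ideal.Quotient.lift _ ((Ideal.Quotient.mk (Ideal.span {(p : R)})).comp f)
        hf).toAddMonoidHom hsurj
  obtain ⟨δ, hδ, hc⟩ := (Nat.dvd_prime_pow hp).1 hcard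
  refine ⟨δ, hδ, hp, ?_, ?_, hc, ?_⟩
  · intro x hx
    funext v
    have h1 := congrFun hx v
    rw [Pi.mul_apply, Pi.natCast_apply, Pi.zero_apply] at h1
    exact (mul_eq_zero.1 h1).resolve_left (natCast_ne_zero hp)
  · intro x y hxy
    rw [Pi.isUnit_iff]
    intro v
    have h1 := pi_dvd_iff.1 hxy v
    by_contra hx
    -- otherwise `x v` and `p` both lie in the maximal ideal of the local ring at `v`, hence so
    -- does `1`
    have h2 := Ideal.mem_of_dvd (IsLocalRing.maximalIdeal (v.1.adicCompletionIntegers k)) h1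
      ((IsLocalRing.mem_maximalIdeal _).2 (not_isUnit_natCast v.2))
    have h3 := Ideal.mul_mem_right (y v) _ ((IsLocalRing.mem_maximalIdeal (x v)).2 hx)
    have h4 := sub_mem h3 h2
    rw [Pi.sub_apply, Pi.mul_apply, sub_sub_cancel] at h4
    exact (Ideal.ne_top_iff_one _).1 (IsLocalRing.maximalIdeal.isMaximal _).ne_top h4
  · by_contra h0
    obtain ⟨v⟩ := nonempty_places k hp
    have h1 : δ = 0 := by omega
    rw [h1, pow_zero, Nat.card_eq_one_iff_unique] at hc
    have h2 := Ideal.span_singleton_eq_top.1 (Ideal.Quotient.subsingleton_iff.1 hc.1)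
    exact not_isUnit_natCast v.2 (Pi.isUnit_iff.1 h2 v)

end semilocal

end GenBound

namespace GenBound

/-! ### From finite levels to topological generation -/

section profinite
open Topology

theorem exists_tuple_of_SG {G : Type*} [Group G] {K : Subgroup G} {m : ℕ} (h : SG K m) :
    ∃ t : Fin m → G, Subgroup.closure (Set.range t) = K := by
  obtain ⟨S, hS, rfl⟩ := h
  refine ⟨fun i => if h : i.val < S.card then (S.equivFin.symm ⟨i.val, h⟩).val else 1, ?_⟩
  apply le_antisymm
  · rw [Subgroup.closure_le]
    rintro _ ⟨i, rfl⟩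
    dsimp only
    split_ifs with h
    · exact Subgroup.subset_closure (Subtype.prop _)
    · exact one_mem _
  · rw [Subgroup.closure_le]
    intro x hx
    have hlt := (S.equivFin ⟨x, hx⟩).2
    refine Subgroup.subset_closure ⟨⟨(S.equivFin ⟨x, hx⟩).val, hlt.trans_le hS⟩, ?_⟩
    simp

/-- If every image of a closed subgroup `H` under a cofinal decreasing family of quotient maps of a
compact group needs at most `m` generators, then so does `H` topologically: the `m`-tuples in `H`
that generate modulo the `n`-th kernel form a decreasing sequence of nonempty compact sets. -/
theorem exists_topgen {G : Type*} [Group G] [TopologicalSpace G] [CompactSpace G]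
    {Q : ℕ → Type*} [∀ n, Group (Q n)] (f : ∀ n, G →* Q n)
    (hanti : ∀ n g h, f (n + 1) g = f (n + 1) h → f n g = f n h)
    (hopen : ∀ n g, IsOpen {h | f n h = f n g})
    (hbasis : ∀ g, ∀ U ∈ 𝓝 g, ∃ n, ∀ h, f n h = f n g → h ∈ U)
    {H : Subgroup G} (hH : IsClosed (H : Set G)) {m : ℕ} (hgen : ∀ n, SG (H.map (f n)) m) :
    ∃ S : Finset H, S.card ≤ m ∧ Dense ((Subgroup.closure (S : Set H) : Subgroup H) : Set H) := by
  classical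
  let T : ℕ → Set (Fin m → G) := fun n => {t | (∀ i, t i ∈ H) ∧
    ∀ h ∈ H, ∃ g ∈ Subgroup.closure (Set.range t), f n g = f n h}
  have hTanti : ∀ n, T (n + 1) ⊆ T n := fun n t ht => ⟨ht.1, fun h hh => by
    obtain ⟨g, hg, hgh⟩ := ht.2 h hh
    exact ⟨g, hg, hanti n g h hgh⟩⟩
  have hTne : ∀ n, (T n).Nonempty := by
    intro n
    obtain ⟨L, hLH, hL, hmap⟩ := (hgen n).lift
    obtain ⟨t, rfl⟩ := exists_tuple_of_SG hL
    refine ⟨t, fun i => hLH (Subgroup.subset_closure ⟨i, rfl⟩), fun h hh => ?_⟩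
    have h1 : f n h ∈ H.map (f n) := ⟨h, hh, rfl⟩
    rw [← hmap] at h1
    exact h1
  have hTcl : ∀ n, IsClosed (T n) := by
    intro n
    have h1 : IsClosed {t : Fin m → G | ∀ i, t i ∈ H} := by
      rw [Set.ofPred_forall]
      exact isClosed_iInter fun i => hH.preimage (continuous_apply i)
    suffices h0 : IsClosed {t : Fin m → G |
        ∀ h ∈ H, ∃ g ∈ Subgroup.closure (Set.range t), f n g = f n h} from h1.inter h0
    rw [← isOpen_compl_iff, isOpen_iff_mem_nhds]
    intro t ht
    have hnear : {t' : Fin m → G | ∀ i, f n (t' i) = f n (t i)} ∈ 𝓝 t := by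
      refine IsOpen.mem_nhds ?_ fun i => rfl
      rw [Set.ofPred_forall]
      exact isOpen_iInter_of_finite fun i =>
        (hopen n (t i)).preimage (continuous_apply (A := fun _ : Fin m => G) i)
    filter_upwards [hnear] with t' ht' hc
    apply ht
    intro h hh
    obtain ⟨g, hg, hgh⟩ := hc h hh
    have e : f n ∘ t' = f n ∘ t := funext ht'
    have h2 : f n g ∈ (Subgroup.closure (Set.range t)).map (f n) := by
      rw [MonoidHom.map_closure, ← Set.range_comp, ← e, Set.range_comp, ← MonoidHom.map_closure]
      exact ⟨g, hg, rfl⟩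
    obtain ⟨g', hg', hgg⟩ := h2
    exact ⟨g', hg', hgg.trans hgh⟩
  obtain ⟨t, ht⟩ := IsCompact.nonempty_iInter_of_sequence_nonempty_isCompact_isClosed T hTanti hTne
    (hTcl 0).isCompact hTcl
  rw [Set.mem_iInter] at ht
  have htH : ∀ i, t i ∈ H := (ht 0).1
  refine ⟨Finset.univ.image fun i => (⟨t i, htH i⟩ : H),
    Finset.card_image_le.trans (by simp), fun h => ?_⟩
  rw [mem_closure_iff_nhds]
  intro U hU
  rw [nhds_subtype, Filter.mem_comap] at hU
  obtain ⟨V, hV, hVU⟩ := hU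
  obtain ⟨n, hn⟩ := hbasis _ V hV
  obtain ⟨g, hg, hgh⟩ := (ht n).2 h.val h.2
  have h3 : Subgroup.closure (Set.range t) =
      (Subgroup.closure ((Finset.univ.image fun i => (⟨t i, htH i⟩ : H) : Finset H) :
        Set H)).map H.subtype := by
    rw [MonoidHom.map_closure, Finset.coe_image, ← Set.image_comp, Finset.coe_univ, Set.image_univ]
    rfl
  rw [h3] at hg
  obtain ⟨g', hg', rfl⟩ := hg
  exact ⟨g', hVU (hn _ hgh), hg'⟩

theorem exists_pi_subset {J : Type*} [Finite J] {B : J → Type*} [∀ j, TopologicalSpace (B j)]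
    {x : ∀ j, B j} {F : ∀ j, ℕ → Set (B j)} (hF : ∀ j, Antitone (F j))
    (h : ∀ j, ∀ U ∈ 𝓝 (x j), ∃ n, F j n ⊆ U) {V : Set (∀ j, B j)} (hV : V ∈ 𝓝 x) :
    ∃ n, {w | ∀ j, w j ∈ F j n} ⊆ V := by
  rw [nhds_pi, Filter.mem_pi] at hV
  obtain ⟨I, -, t, ht, htV⟩ := hV
  choose n hn using fun j => h j _ (ht j)
  obtain ⟨N, hN⟩ := (Set.finite_range n).bddAbove
  exact ⟨N, fun w hw => htV fun j _ => hn j (hF j (hN ⟨j, rfl⟩) (hw j))⟩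

end profinite

section product
open Topology
variable {ι : Type*} {A : ι → Type*} [∀ v, CommRing (A v)] {s : ℕ}

/-- A family of matrices of determinant one, as an invertible matrix over the product ring. -/
def prodSL (A : ι → Type*) [∀ v, CommRing (A v)] (s : ℕ) :
    (∀ v, Matrix.SpecialLinearGroup (Fin s) (A v)) →* GL (Fin s) (∀ v, A v) :=
  MonoidHom.toHomUnits
    { toFun := fun g => Matrix.of fun a b v => (g v).val a b
      map_one' := by
        ext a b v
        simp only [Matrix.of_apply, Pi.one_apply, Matrix.SpecialLinearGroup.coe_one,
          Matrix.one_apply]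
        split_ifs <;> rfl
      map_mul' := fun g h => by
        ext a b v
        simp only [Matrix.of_apply, Pi.mul_apply, Matrix.SpecialLinearGroup.coe_mul,
          Matrix.mul_apply, Finset.sum_apply] }

theorem prodSL_apply (g : ∀ v, Matrix.SpecialLinearGroup (Fin s) (A v)) (a b : Fin s) (v : ι) :
    (prodSL A s g).val a b v = (g v).val a b := rfl

theorem red_prodSL_eq_iff {p n : ℕ} {g h : ∀ v, Matrix.SpecialLinearGroup (Fin s) (A v)} :
    red (∀ v, A v) p s n (prodSL A s g) = red (∀ v, A v) p s n (prodSL A s h) ↔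
      ∀ v a b, (p : A v) ^ n ∣ (g v).val a b - (h v).val a b := by
  rw [Units.ext_iff, ← Matrix.ext_iff]
  have h1 : ∀ g : ∀ v, Matrix.SpecialLinearGroup (Fin s) (A v), ∀ a b,
      (red (∀ v, A v) p s n (prodSL A s g)).val a b =
        Ideal.Quotient.mk (Ideal.span {((p : ℕ) : ∀ v, A v) ^ n}) ((prodSL A s g).val a b) :=
    fun _ _ _ => rfl
  simp only [h1, Ideal.Quotient.eq, Ideal.mem_span_singleton, pi_dvd_iff]
  exact ⟨fun H v a b => H a b v, fun H a b v => H v a b⟩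

/-- The uniform bound for closed subgroups of `∏ SL_s(A v)`, for compact rings `A v` that carry the
`p`-adic topology and whose product satisfies `PRing`. -/
theorem topgen_prodSL [Finite ι] [∀ v, TopologicalSpace (A v)] [∀ v, IsTopologicalRing (A v)]
    [∀ v, CompactSpace (A v)] [∀ v, T2Space (A v)] {p δ : ℕ} (hR : PRing (∀ v, A v) p δ)
    (hs : 1 ≤ s) (hopen : ∀ v n, IsOpen {x : A v | (p : A v) ^ n ∣ x})
    (hbasis : ∀ v, ∀ U ∈ 𝓝 (0 : A v), ∃ n : ℕ, ∀ x, (p : A v) ^ n ∣ x → x ∈ U)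
    [τ : ∀ v, TopologicalSpace (Matrix.SpecialLinearGroup (Fin s) (A v))]
    (hτ : ∀ v, τ v = TopologicalSpace.induced
      (fun g : Matrix.SpecialLinearGroup (Fin s) (A v) => g.val) inferInstance)
    {H : Subgroup (∀ v, Matrix.SpecialLinearGroup (Fin s) (A v))}
    (hH : IsClosed (H : Set (∀ v, Matrix.SpecialLinearGroup (Fin s) (A v)))) :
    ∃ S : Finset H, S.card ≤ 3 * δ ^ 3 * s ^ 2 ∧
      Dense ((Subgroup.closure (S : Set H) : Subgroup H) : Set H) := by
  have hval : ∀ v, IsInducing (fun g : Matrix.SpecialLinearGroup (Fin s) (A v) => g.val) :=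
    fun v => ⟨hτ v⟩
  have hcpt : ∀ v, CompactSpace (Matrix.SpecialLinearGroup (Fin s) (A v)) := by
    intro v
    have hcl : IsClosedEmbedding (fun g : Matrix.SpecialLinearGroup (Fin s) (A v) => g.val) := by
      refine ⟨⟨hval v, Subtype.val_injective⟩, ?_⟩
      have : Set.range (fun g : Matrix.SpecialLinearGroup (Fin s) (A v) => g.val) =
          {M | M.det = 1} := Subtype.range_val
      rw [this]
      exact isClosed_eq (continuous_id.matrix_det) continuous_const
    have : CompactSpace (Matrix (Fin s) (Fin s) (A v)) :=
      inferInstanceAs (CompactSpace (Fin s → Fin s → A v))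
    exact hcl.compactSpace
  have hentry : ∀ v a b, Continuous fun g : ∀ v, Matrix.SpecialLinearGroup (Fin s) (A v) =>
      (g v).val a b := fun v a b =>
    ((hval v).continuous.comp (continuous_apply v)).matrix_elem a b
  refine exists_topgen (fun n => (red (∀ v, A v) p s n).comp (prodSL A s)) ?_ ?_ ?_ hH ?_
  · intro n g h hgh
    simp only [MonoidHom.comp_apply, red_prodSL_eq_iff] at hgh ⊢
    exact fun v a b => (pow_dvd_pow _ (Nat.le_succ n)).trans (hgh v a b)
  · intro n g
    simp only [MonoidHom.comp_apply, red_prodSL_eq_iff, Set.ofPred_forall]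
    exact isOpen_iInter_of_finite fun v => isOpen_iInter_of_finite fun a =>
      isOpen_iInter_of_finite fun b =>
        (hopen v n).preimage ((hentry v a b).sub continuous_const)
  · intro g U hU
    simp only [MonoidHom.comp_apply, red_prodSL_eq_iff]
    have hind : IsInducing fun (h : ∀ v, Matrix.SpecialLinearGroup (Fin s) (A v)) v a b =>
        (h v).val a b := IsInducing.piMap hval
    rw [hind.nhds_eq_comap, Filter.mem_comap] at hU
    obtain ⟨V, hV, hVU⟩ := hU
    -- a single exponent serves for all entries, each of which has its own neighbourhood
    have key : ∃ n : ℕ, ∀ w : ∀ v, Fin s → Fin s → A v,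
        (∀ v a b, (p : A v) ^ n ∣ w v a b - (g v).val a b) → w ∈ V := by
      have hanti : ∀ v (x : A v), Antitone fun n : ℕ => {y : A v | (p : A v) ^ n ∣ y - x} :=
        fun v x i j hij y hy => (pow_dvd_pow _ hij).trans hy
      have h1 : ∀ v (x : A v), ∀ U ∈ 𝓝 x, ∃ n : ℕ, {y : A v | (p : A v) ^ n ∣ y - x} ⊆ U := by
        intro v x U hU
        have hc : Filter.Tendsto (fun y => y + x) (𝓝 0) (𝓝 x) := by
          have : Continuous fun y : A v => y + x := continuous_id.add continuous_const
          simpa using this.tendsto 0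
        obtain ⟨n, hn⟩ := hbasis v _ (hc hU)
        refine ⟨n, fun y hy => ?_⟩
        have := hn _ hy
        rwa [Set.mem_preimage, sub_add_cancel] at this
      obtain ⟨n, hn⟩ := exists_pi_subset
        (F := fun v n => {M : Fin s → Fin s → A v | ∀ a, M a ∈ {c : Fin s → A v |
          ∀ b, c b ∈ {y : A v | (p : A v) ^ n ∣ y - (g v).val a b}}})
        (fun v i j hij M hM a b => hanti v _ hij (hM a b))
        (fun v U hU => exists_pi_subset
          (F := fun a n => {c : Fin s → A v |
            ∀ b, c b ∈ {y : A v | (p : A v) ^ n ∣ y - (g v).val a b}})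
          (fun a i j hij M hM b => hanti v _ hij (hM b))
          (fun a U hU => exists_pi_subset
            (F := fun b n => {y : A v | (p : A v) ^ n ∣ y - (g v).val a b})
            (fun b => hanti v _) (fun b U hU => h1 v _ U hU) hU) hU) hV
      exact ⟨n, fun w hw => hn hw⟩
    obtain ⟨n, hn⟩ := key
    exact ⟨n, fun h hh => hVU (hn _ hh)⟩
  · intro n
    rw [← Subgroup.map_map]
    exact hR.SG_main hs _ n

end product

end GenBound

open IsDedekindDomain

/-- Let `k` be a number field of degree `d` over `ℚ` with ring of integers
`𝒪`, and for a nonzero prime ideal `v` of `𝒪` let `𝒪ᵥ` be the ring of integers of the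
`v`-adic completion. Then for every positive integer `s` and every rational prime `p`,
every closed subgroup of `∏_{v ∣ p} SL_s(𝒪ᵥ)` (product over the primes of `𝒪` lying over
`p`, with the product topology) is topologically generated by at most `3d³s²` elements. -/
theorem stmt3 (k : Type*) [Field k] [NumberField k] (d : ℕ)
    (hd : Module.finrank ℚ k = d) (s : ℕ) (hs : 0 < s) (p : ℕ) (hp : p.Prime) :
    letI : ∀ v : HeightOneSpectrum (NumberField.RingOfIntegers k),
        TopologicalSpace (Matrix.SpecialLinearGroup (Fin s) (v.adicCompletionIntegers k)) :=
      fun v => TopologicalSpace.induced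
        (fun A => (A : Matrix (Fin s) (Fin s) (v.adicCompletionIntegers k))) inferInstance
    ∀ H : Subgroup (∀ v : {v : HeightOneSpectrum (NumberField.RingOfIntegers k) //
          (p : NumberField.RingOfIntegers k) ∈ v.asIdeal},
        Matrix.SpecialLinearGroup (Fin s) (v.1.adicCompletionIntegers k)),
      IsClosed (H : Set (∀ v : {v : HeightOneSpectrum (NumberField.RingOfIntegers k) //
          (p : NumberField.RingOfIntegers k) ∈ v.asIdeal},
        Matrix.SpecialLinearGroup (Fin s) (v.1.adicCompletionIntegers k))) →
      ∃ S : Finset H, S.card ≤ 3 * d ^ 3 * s ^ 2 ∧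
        Dense ((Subgroup.closure (S : Set H) : Subgroup H) : Set H) := by
  intro H hH
  obtain ⟨δ, hδ, hR⟩ := GenBound.exists_PRing (k := k) hp
  have hfin := GenBound.finite_places (k := k) hp
  have hcpt : ∀ v : {v : HeightOneSpectrum (NumberField.RingOfIntegers k) //
      (p : NumberField.RingOfIntegers k) ∈ v.asIdeal},
      CompactSpace (v.1.adicCompletionIntegers k) :=
    fun v => GenBound.compactSpace_integers hp v.2
  have h0 : ∀ v : {v : HeightOneSpectrum (NumberField.RingOfIntegers k) //
      (p : NumberField.RingOfIntegers k) ∈ v.asIdeal},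
      ((p : ℕ) : v.1.adicCompletionIntegers k) ≠ 0 :=
    fun v => GenBound.natCast_ne_zero hp
  obtain ⟨S, hS, hdense⟩ := GenBound.topgen_prodSL (τ := fun v => TopologicalSpace.induced
      (fun g : Matrix.SpecialLinearGroup (Fin s) (v.1.adicCompletionIntegers k) => g.val)
        inferInstance) hR hs
    (fun v n => GenBound.isOpen_dvd (pow_ne_zero n (h0 v)))
    (fun v U hU => GenBound.exists_pow_dvd_subset (GenBound.valued_natCast_lt_one v.2) hU)
    (fun v => rfl) hH
  refine ⟨S, hS.trans ?_, hdense⟩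
  subst hd
  gcongr
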